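/- arXiv:1711.02337 — 2 statements merged into one kernel-verified Lean document; each statement's English description precedes it below -/
import Mathlib

section
/- For all positive integers n and k, det(d_{n+i+j−2}(q))_{i,j=1}^k = q^{k(k−1)/2} · d_{n,k}(q) as an identity of polynomials in q, where d_m(q) = Σ_{D∈Dyck_{2m}} q^{v(D)} and d_{n,k}(q) = Σ over tuples (D_1 < D_2 < ⋯ < D_k) ∈ Dyck^k_{2n} of q^{v(D_1)+⋯+v(D_k)}. -/
open Finset

attribute [local instance 10] Classical.propDecidable

noncomputable section

namespace Paper

/-! ### Words and permutation statistics (all words are 1-based). -/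

/-- The word (one-line notation, 1-based) of a permutation of `{1, …, N}`:
`word π i = π(i)` for `1 ≤ i ≤ N`, and `0` otherwise. -/
def word {N : ℕ} (π : Equiv.Perm (Fin N)) (i : ℕ) : ℕ :=
  if h : 1 ≤ i ∧ i ≤ N then (π ⟨i - 1, by omega⟩ : ℕ) + 1 else 0

/-- The major index of a word of length `N`: the sum of the descents. -/
def majW (N : ℕ) (w : ℕ → ℕ) : ℕ :=
  ∑ i ∈ Finset.Icc 1 (N - 1), if w (i + 1) < w i then i else 0

/-- The number of inversions of a word of length `N`. -/
def invW (N : ℕ) (w : ℕ → ℕ) : ℕ :=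
  (((Finset.Icc 1 N) ×ˢ (Finset.Icc 1 N)).filter
    fun p => p.1 < p.2 ∧ w p.2 < w p.1).card

/-- The number of descents of a word of length `m`. -/
def desW (m : ℕ) (w : ℕ → ℕ) : ℕ :=
  ((Finset.Icc 1 (m - 1)).filter fun i => w (i + 1) < w i).card

/-- The number of ascents of a word of length `m`. -/
def ascW (m : ℕ) (w : ℕ → ℕ) : ℕ :=
  ((Finset.Icc 1 (m - 1)).filter fun i => w i < w (i + 1)).card

/-- The number of non-descents of a word of length `m`. -/
def ndesW (m : ℕ) (w : ℕ → ℕ) : ℕ :=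
  ((Finset.Icc 1 m).filter fun i => i = m ∨ w i < w (i + 1)).card

/-- The number of non-ascents of a word of length `m`. -/
def nascW (m : ℕ) (w : ℕ → ℕ) : ℕ :=
  ((Finset.Icc 1 m).filter fun i => i = m ∨ ¬ w i < w (i + 1)).card

/-- `π_e = π₂π₄⋯`, the subword of even-position entries, as a 1-based word. -/
def evenWord {N : ℕ} (π : Equiv.Perm (Fin N)) (j : ℕ) : ℕ := word π (2 * j)

/-- `π_o = π₁π₃⋯`, the subword of odd-position entries, as a 1-based word. -/
def oddWord {N : ℕ} (π : Equiv.Perm (Fin N)) (j : ℕ) : ℕ := word π (2 * j - 1)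

/-- A word of length `N` is alternating: `w₁ < w₂ > w₃ < w₄ > ⋯`. -/
def IsAltW (N : ℕ) (w : ℕ → ℕ) : Prop :=
  ∀ i ∈ Finset.Icc 1 (N - 1), (i % 2 = 1 → w i < w (i + 1)) ∧ (i % 2 = 0 → w (i + 1) < w i)

/-- A word of length `N` is reverse alternating: `w₁ > w₂ < w₃ > w₄ < ⋯`. -/
def IsRaltW (N : ℕ) (w : ℕ → ℕ) : Prop :=
  ∀ i ∈ Finset.Icc 1 (N - 1), (i % 2 = 1 → w (i + 1) < w i) ∧ (i % 2 = 0 → w i < w (i + 1))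

/-- `Alt_N`, the set of alternating permutations of `{1, …, N}`. -/
def altPerms (N : ℕ) : Finset (Equiv.Perm (Fin N)) :=
  Finset.univ.filter fun π => IsAltW N (word π)

/-- `Ralt_N`, the set of reverse alternating permutations of `{1, …, N}`. -/
def raltPerms (N : ℕ) : Finset (Equiv.Perm (Fin N)) :=
  Finset.univ.filter fun π => IsRaltW N (word π)

/-- `κ_N = (1)(2,3)(4,5)⋯`, acting on the 1-based values `{1, …, N}`. -/
def kappaNat (N j : ℕ) : ℕ :=
  if j % 2 = 0 ∧ 2 ≤ j ∧ j + 1 ≤ N then j + 1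
  else if j % 2 = 1 ∧ 3 ≤ j ∧ j ≤ N then j - 1
  else j

/-- `η_N = (1,2)(3,4)⋯`, acting on the 1-based values `{1, …, N}`. -/
def etaNat (N j : ℕ) : ℕ :=
  if j % 2 = 1 ∧ j + 1 ≤ N then j + 1
  else if j % 2 = 0 ∧ 2 ≤ j ∧ j ≤ N then j - 1
  else j

/-- `maj(π⁻¹)`. -/
def majInv (N : ℕ) (π : Equiv.Perm (Fin N)) : ℕ := majW N (word π.symm)

/-- `maj(κ_N π⁻¹)`. -/
def majKappaInv (N : ℕ) (π : Equiv.Perm (Fin N)) : ℕ :=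
  majW N fun i => kappaNat N (word π.symm i)

/-- `maj(η_N π⁻¹)`. -/
def majEtaInv (N : ℕ) (π : Equiv.Perm (Fin N)) : ℕ :=
  majW N fun i => etaNat N (word π.symm i)

/-- The reversal permutation `i ↦ N + 1 - i` of `Fin N`. -/
def revPerm (N : ℕ) : Equiv.Perm (Fin N) :=
  ⟨Fin.rev, Fin.rev, fun i => Fin.rev_rev i, fun i => Fin.rev_rev i⟩

/-- `φ(π)ᵢ = (N+1) - π_{N+1-i}`. -/
def phiMap {N : ℕ} (π : Equiv.Perm (Fin N)) : Equiv.Perm (Fin N) :=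
  ((revPerm N).trans π).trans (revPerm N)

/-! ### Lattice paths.

A path with `L` unit steps is encoded by `s : Fin L → Bool` (`true` = up-step `(1,1)`,
`false` = down-step `(1,-1)`). -/

/-- The vertical displacement of the `j`-th step. -/
def stepVal {L : ℕ} (s : Fin L → Bool) (j : ℕ) : ℤ :=
  if h : j < L then (if s ⟨j, h⟩ then 1 else -1) else 0

/-- The height of the path after `i` steps. -/
def pht {L : ℕ} (s : Fin L → Bool) (i : ℕ) : ℤ := ∑ j ∈ Finset.range i, stepVal s j

/-- A Dyck path: stays (weakly) above the `x`-axis and ends at height `0`. -/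
def IsDyck {L : ℕ} (s : Fin L → Bool) : Prop :=
  (∀ i ∈ Finset.range (L + 1), 0 ≤ pht s i) ∧ pht s L = 0

/-- The Dyck paths with `L` steps. -/
def dyckPaths (L : ℕ) : Finset (Fin L → Bool) := Finset.univ.filter fun s => IsDyck s

/-- The (indices of the) valleys of a path: a down-step followed by an up-step. -/
def valleys {L : ℕ} (s : Fin L → Bool) : Finset ℕ :=
  (Finset.Icc 1 (L - 1)).filter fun i => stepVal s (i - 1) = -1 ∧ stepVal s i = 1

/-- The (indices of the) peaks of a path: an up-step followed by a down-step. -/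
def peaks {L : ℕ} (s : Fin L → Bool) : Finset ℕ :=
  (Finset.Icc 1 (L - 1)).filter fun i => stepVal s (i - 1) = 1 ∧ stepVal s i = -1

/-- The (indices of the) high peaks of a path: peaks of height at least `2`. -/
def highPeaks {L : ℕ} (s : Fin L → Bool) : Finset ℕ :=
  (peaks s).filter fun i => 2 ≤ pht s i

/-- The height over abscissa `x` of a path starting at `(-m, 0)`. -/
def aht (m : ℕ) {L : ℕ} (s : Fin L → Bool) (x : ℤ) : ℤ := pht s (x + m).toNat

/-- `D₁ < D₂`, for `D₁` starting at `(-m₁,0)` and `D₂` at `(-m₂,0)`, `m₁ ≤ m₂`: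
strictly below on the common range of abscissas. -/
def PathLT (m₁ m₂ : ℕ) {L₁ L₂ : ℕ} (s₁ : Fin L₁ → Bool) (s₂ : Fin L₂ → Bool) : Prop :=
  ∀ x ∈ Finset.Icc (-(m₁ : ℤ)) (m₁ : ℤ), aht m₁ s₁ x < aht m₂ s₂ x

/-- `D₁ ≤ D₂`: weakly below, sharing no step. -/
def PathLE (m₁ m₂ : ℕ) {L₁ L₂ : ℕ} (s₁ : Fin L₁ → Bool) (s₂ : Fin L₂ → Bool) : Prop :=
  (∀ x ∈ Finset.Icc (-(m₁ : ℤ)) (m₁ : ℤ), aht m₁ s₁ x ≤ aht m₂ s₂ x) ∧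
    ∀ x ∈ Finset.Icc (-(m₁ : ℤ)) ((m₁ : ℤ) - 1),
      ¬(aht m₁ s₁ x = aht m₂ s₂ x ∧ aht m₁ s₁ (x + 1) = aht m₂ s₂ (x + 1))

/-- The abscissas of the common lattice points of two paths. -/
def interPts (m₁ m₂ : ℕ) {L₁ L₂ : ℕ} (s₁ : Fin L₁ → Bool) (s₂ : Fin L₂ → Bool) : Finset ℤ :=
  (Finset.Icc (-(m₁ : ℤ)) (m₁ : ℤ)).filter fun x => aht m₁ s₁ x = aht m₂ s₂ x

/-- `Dyck^k_{2n}`: tuples `(D₁, …, D_k)` with `D_i ∈ Dyck((-n-2i+2,0) → (n+2i-2,0))`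
(0-based: `D_i` has half-length `n + 2i`). -/
abbrev DyckTuple (n k : ℕ) := ∀ i : Fin k, Fin (2 * (n + 2 * (i : ℕ))) → Bool

/-- The tuples `(D₁ ≤ D₂ ≤ ⋯ ≤ D_k) ∈ Dyck^k_{2n}`. -/
def weakTuples (n k : ℕ) : Finset (DyckTuple n k) :=
  Finset.univ.filter fun D =>
    (∀ i : Fin k, IsDyck (D i)) ∧
      ∀ (i : ℕ) (h : i + 1 < k),
        PathLE (n + 2 * i) (n + 2 * (i + 1)) (D ⟨i, by omega⟩) (D ⟨i + 1, h⟩)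

/-- The tuples `(D₁ < D₂ < ⋯ < D_k) ∈ Dyck^k_{2n}`. -/
def strictTuples (n k : ℕ) : Finset (DyckTuple n k) :=
  Finset.univ.filter fun D =>
    (∀ i : Fin k, IsDyck (D i)) ∧
      ∀ (i : ℕ) (h : i + 1 < k),
        PathLT (n + 2 * i) (n + 2 * (i + 1)) (D ⟨i, by omega⟩) (D ⟨i + 1, h⟩)

/-- The lattice points of a path starting at `(-m, 0)`, as a finite subset of `ℤ × ℤ`. -/
def pathPoints (m : ℕ) {L : ℕ} (s : Fin L → Bool) : Finset (ℤ × ℤ) :=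
  (Finset.range (L + 1)).image fun t : ℕ => (-(m : ℤ) + (t : ℤ), pht s t)

/-- The non-valley lattice points of a path starting at `(-m, 0)`. -/
def nonValleyPoints (m : ℕ) {L : ℕ} (s : Fin L → Bool) : Finset (ℤ × ℤ) :=
  ((Finset.range (L + 1)).filter fun t => t ∉ valleys s).image
    fun t : ℕ => (-(m : ℤ) + (t : ℤ), pht s t)

section Weights

variable {F : Type*} [Field F]

/-- The `i`-th lattice point (in `ℤ × ℕ`) of a path starting at `(a, 0)`. -/
def ptOf (a : ℤ) {L : ℕ} (s : Fin L → Bool) (i : ℕ) : ℤ × ℕ := (a + i, (pht s i).toNat)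

/-- `wt_V(D) = ∏_{p ∈ D} wt(p) · ∏_{p ∈ V(D)} w̃t(p)` for a path starting at `(a, 0)`. -/
def wtVal (wt wte : ℤ × ℕ → F) (a : ℤ) {L : ℕ} (s : Fin L → Bool) : F :=
  (∏ i ∈ Finset.range (L + 1), wt (ptOf a s i)) * ∏ i ∈ valleys s, wte (ptOf a s i)

/-- `wt_HP(D) = ∏_{p ∈ D} wt(p) · ∏_{p ∈ HP(D)} w̃t(p)` for a path starting at `(a, 0)`. -/
def wtHigh (wt wte : ℤ × ℕ → F) (a : ℤ) {L : ℕ} (s : Fin L → Bool) : F :=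
  (∏ i ∈ Finset.range (L + 1), wt (ptOf a s i)) * ∏ i ∈ highPeaks s, wte (ptOf a s i)

/-- `∏_{p ∈ D₁ ∩ D₂} f(p)`, for `D₁` starting at `(-m₁,0)` and `D₂` at `(-m₂,0)`. -/
def interProd (f : ℤ × ℕ → F) (m₁ m₂ : ℕ) {L₁ L₂ : ℕ}
    (s₁ : Fin L₁ → Bool) (s₂ : Fin L₂ → Bool) : F :=
  ∏ x ∈ interPts m₁ m₂ s₁ s₂, f (x, (aht m₁ s₁ x).toNat)

/-- The sum over `(D₁ ≤ ⋯ ≤ D_k) ∈ Dyck^k_{2n}` of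
`wt_V(D₁)⋯wt_V(D_k) ∏_{i=1}^{k-1} ∏_{p ∈ D_i ∩ D_{i+1}} (1 - w̃t(p)⁻¹)`. -/
def weakSum (wt wte : ℤ × ℕ → F) (n k : ℕ) : F :=
  ∑ D ∈ weakTuples n k,
    (∏ i : Fin k, wtVal wt wte (-(n : ℤ) - 2 * (i : ℕ)) (D i)) *
      ∏ j : Fin (k - 1),
        interProd (fun p => 1 - (wte p)⁻¹) (n + 2 * (j : ℕ)) (n + 2 * ((j : ℕ) + 1))
          (D ⟨(j : ℕ), by have := j.isLt; omega⟩)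
          (D ⟨(j : ℕ) + 1, by have := j.isLt; omega⟩)

/-- The sum over `(D₁ < ⋯ < D_k) ∈ Dyck^k_{2n}` of `wt_V(D₁)⋯wt_V(D_k)`. -/
def strictSum (wt wte : ℤ × ℕ → F) (n k : ℕ) : F :=
  ∑ D ∈ strictTuples n k, ∏ i : Fin k, wtVal wt wte (-(n : ℤ) - 2 * (i : ℕ)) (D i)

end Weights

/-! ### Schröder paths.

A path with `L` steps is encoded by `st : Fin L → Fin 3`
(`0` = up-step `(1,1)`, `1` = down-step `(1,-1)`, `2` = horizontal step `(2,0)`). -/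

/-- The horizontal displacement of the `j`-th step. -/
def stepX {L : ℕ} (st : Fin L → Fin 3) (j : ℕ) : ℕ :=
  if h : j < L then (if st ⟨j, h⟩ = 2 then 2 else 1) else 0

/-- The vertical displacement of the `j`-th step. -/
def stepY {L : ℕ} (st : Fin L → Fin 3) (j : ℕ) : ℤ :=
  if h : j < L then (if st ⟨j, h⟩ = 0 then 1 else if st ⟨j, h⟩ = 1 then -1 else 0) else 0

/-- The horizontal position (relative to the start) after `j` steps. -/
def xpos {L : ℕ} (st : Fin L → Fin 3) (j : ℕ) : ℕ := ∑ t ∈ Finset.range j, stepX st t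

/-- The height after `j` steps. -/
def ypos {L : ℕ} (st : Fin L → Fin 3) (j : ℕ) : ℤ := ∑ t ∈ Finset.range j, stepY st t

/-- A (little) Schröder path of horizontal span `2m`: nonnegative heights, ends at
height `0`, and no horizontal step on the `x`-axis. -/
def IsSch (m : ℕ) {L : ℕ} (st : Fin L → Fin 3) : Prop :=
  xpos st L = 2 * m ∧ (∀ j ∈ Finset.range (L + 1), 0 ≤ ypos st j) ∧ ypos st L = 0 ∧
    ∀ j ∈ Finset.range L, stepX st j = 2 → ypos st j ≠ 0

/-- The height of a Schröder path over the relative abscissa `x` (midpoints of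
horizontal steps get the height of that horizontal step). -/
def schHeight {L : ℕ} (st : Fin L → Fin 3) (x : ℕ) : ℤ :=
  ∑ t ∈ Finset.range L, if xpos st (t + 1) ≤ x then stepY st t else 0

/-- The relative abscissa `x` is the midpoint of a horizontal step. -/
def IsHMid {L : ℕ} (st : Fin L → Fin 3) (x : ℕ) : Prop :=
  ∃ j ∈ Finset.range L, stepX st j = 2 ∧ xpos st j + 1 = x

/-- The number of horizontal steps of a Schröder path. -/
def hsCount {L : ℕ} (st : Fin L → Fin 3) : ℕ :=
  ((Finset.range L).filter fun j => stepX st j = 2).card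

/-- `wt_Sch(c, S) = c^{hs(S)} ∏_{p ∈ S} wt(p)` for a Schröder path starting at `(a,0)`. -/
def wtSch {F : Type*} [Field F] (wt : ℤ × ℕ → F) (c : F) (a : ℤ) {L : ℕ}
    (st : Fin L → Fin 3) : F :=
  c ^ hsCount st * ∏ j ∈ Finset.range (L + 1), wt (a + xpos st j, (ypos st j).toNat)

/-- `φ_V(S) = D`: the Dyck path `D` (with `L'` steps) is obtained from the Schröder
path `S` by replacing each horizontal step by a down-step followed by an up-step. -/
def PhiVEq {L L' : ℕ} (st : Fin L → Fin 3) (s : Fin L' → Bool) : Prop :=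
  ∀ x ∈ Finset.range (L' + 1),
    pht s x = schHeight st x - (if IsHMid st x then 1 else 0)

/-- `φ_HP(S) = D`: the Dyck path `D` is obtained from the Schröder path `S` by
replacing each horizontal step by an up-step followed by a down-step. -/
def PhiHPEq {L L' : ℕ} (st : Fin L → Fin 3) (s : Fin L' → Bool) : Prop :=
  ∀ x ∈ Finset.range (L' + 1),
    pht s x = schHeight st x + (if IsHMid st x then 1 else 0)

/-! ### Young diagrams, excited and pleasant diagrams, reverse plane partitions. -/

/-- The cells (1-based, matrix coordinates) of the staircase `δ_m = (m-1, m-2, …, 1)`. -/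
def deltaCells (m : ℕ) : Finset (ℕ × ℕ) :=
  ((Finset.Icc 1 m) ×ˢ (Finset.Icc 1 m)).filter fun c => c.1 + c.2 ≤ m

/-- An excited move inside the Young diagram `lam`. -/
def ExcitedStep (lam : Finset (ℕ × ℕ)) (D D' : Finset (ℕ × ℕ)) : Prop :=
  ∃ i j : ℕ, (i, j) ∈ D ∧ (i + 1, j) ∉ D ∧ (i, j + 1) ∉ D ∧ (i + 1, j + 1) ∉ D ∧
    (i + 1, j + 1) ∈ lam ∧ D' = insert (i + 1, j + 1) (D.erase (i, j))

/-- `D` is an excited diagram of `lam/mu`. -/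
def IsExcited (lam mu D : Finset (ℕ × ℕ)) : Prop :=
  Relation.ReflTransGen (ExcitedStep lam) mu D

/-- `P` is a pleasant diagram of `lam/mu`: a subset of `lam \ D` for an excited diagram `D`. -/
def IsPleasant (lam mu : Finset (ℕ × ℕ)) (P : Finset (ℕ × ℕ)) : Prop :=
  ∃ D, IsExcited lam mu D ∧ P ⊆ lam \ D

/-- `p(lam/mu)`, the number of pleasant diagrams of `lam/mu`. -/
def pleasantCount (lam mu : Finset (ℕ × ℕ)) : ℕ :=
  Set.ncard {P : Finset (ℕ × ℕ) | IsPleasant lam mu P}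

/-- A reverse plane partition on the skew shape `shape`: a filling by nonnegative
integers (vanishing off the shape) weakly increasing along rows and columns. -/
def IsRPP (shape : Finset (ℕ × ℕ)) (f : ℕ × ℕ → ℕ) : Prop :=
  (∀ c, c ∉ shape → f c = 0) ∧
    (∀ i j : ℕ, (i, j) ∈ shape → (i, j + 1) ∈ shape → f (i, j) ≤ f (i, j + 1)) ∧
    ∀ i j : ℕ, (i, j) ∈ shape → (i + 1, j) ∈ shape → f (i, j) ≤ f (i + 1, j)

/-- `∑_{π ∈ RPP(shape)} q^{|π|}` as a formal power series in `q`. -/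
def rppGF (shape : Finset (ℕ × ℕ)) : PowerSeries ℚ :=
  PowerSeries.mk fun N =>
    (Set.ncard {f : ℕ × ℕ → ℕ | IsRPP shape f ∧ ∑ c ∈ shape, f c = N} : ℚ)

/-- `(q; q)_m = ∏_{i=1}^m (1 - q^i)` as a formal power series. -/
def pochPS (m : ℕ) : PowerSeries ℚ :=
  ∏ i ∈ Finset.Icc 1 m, (1 - (PowerSeries.X : PowerSeries ℚ) ^ i)

/-- `E*_N(q) = ∑_{π ∈ Alt_N} q^{maj(κ_N π⁻¹)}` as a formal power series. -/
def EstarPS (N : ℕ) : PowerSeries ℚ :=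
  ∑ π ∈ altPerms N, (PowerSeries.X : PowerSeries ℚ) ^ majKappaInv N π

/-- `E*_m(q)/(q;q)_m` for `m ≥ 0`, and `0` for `m < 0`. -/
def EstarEntry (m : ℤ) : PowerSeries ℚ :=
  if m < 0 then 0 else EstarPS m.toNat * (pochPS m.toNat)⁻¹

/-- The Gaussian binomial coefficient `[N choose M]_q` as a formal power series. -/
def gaussPS (N M : ℕ) : PowerSeries ℚ :=
  pochPS N * (pochPS M * pochPS (N - M))⁻¹

/-!
Writing `q = (q - 1) + 1` over the valleys of a Dyck path and flattening the chosen ones turns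
`d_m(q)` into the generating function of little Schröder paths with weight `q - 1` per horizontal
step. The Lindström–Gessel–Viennot lemma then writes the determinant as a sum over strictly nested
families of Schröder paths.

Peel such a family off one path at a time. Let `L` be the transfer operator from a Dyck path to
the Schröder paths strictly above it, each recorded as the Dyck path obtained by replacing
horizontal steps by valleys, and let `W` be the transfer operator between strictly nested Dyck
paths, with weight `q` per valley. Replacing the horizontal steps by peaks instead is another
bijection, and a Dyck path has one more peak than valleys; comparing the two gives `L 1 = q W 1`
and `L W = q W L`. Hence `L ^ m 1 = q ^ (1 + 2 + ⋯ + m) W ^ m 1`, which for `m = k - 1` is the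
factor `q ^ (k (k - 1) / 2)`.
-/

/-! ### The Lindström–Gessel–Viennot lemma -/

section NonIntersecting

open Equiv Function

variable {ι α : Type*} [DecidableEq ι]

/-- A transposition exchanging two indices at which `v` takes the same value; the identity when
`v` is injective. It says which tails are exchanged in the Lindström–Gessel–Viennot involution. -/
def collisionSwap (v : ι → α) : Perm ι :=
  if h : ∃ ij : ι × ι, v ij.1 = v ij.2 ∧ ij.1 ≠ ij.2 then swap h.choose.1 h.choose.2 else 1

theorem collisionSwap_mul_self (v : ι → α) : collisionSwap v * collisionSwap v = 1 := by
  unfold collisionSwap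
  split_ifs <;> simp

theorem collisionSwap_collisionSwap (v : ι → α) (i : ι) :
    collisionSwap v (collisionSwap v i) = i := by
  rw [← Perm.mul_apply, collisionSwap_mul_self, Perm.one_apply]

theorem apply_collisionSwap (v : ι → α) (i : ι) : v (collisionSwap v i) = v i := by
  unfold collisionSwap
  split_ifs with h
  · exact apply_swap_eq_self h.choose_spec.1 i
  · rfl

theorem sign_collisionSwap [Fintype ι] {v : ι → α} (hv : ¬ Injective v) :
    Perm.sign (collisionSwap v) = -1 := by
  obtain ⟨i, j, hij⟩ := not_injective_iff.1 hv
  have h : ∃ ij : ι × ι, v ij.1 = v ij.2 ∧ ij.1 ≠ ij.2 := ⟨(i, j), hij⟩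
  rw [collisionSwap, dif_pos h, Perm.sign_swap h.choose_spec.2]

/-- The first abscissa over which two members of the family `p` meet. If no two members meet, or
there is no first such abscissa, this is the junk value `0`. -/
def firstCollision (p : ι → ℤ → α) : ℤ := sInf {x | ¬ Injective fun i => p i x}

/-- The transposition of two members of `p` which meet over the first collision. -/
def firstCollisionSwap (p : ι → ℤ → α) : Perm ι := collisionSwap fun i => p i (firstCollision p)

theorem firstCollisionSwap_mul_self (p : ι → ℤ → α) :
    firstCollisionSwap p * firstCollisionSwap p = 1 := collisionSwap_mul_self _

/-- The family obtained from `p` by exchanging, beyond the first collision, the two members that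
`firstCollisionSwap p` selects there. -/
def tailSwap (p : ι → ℤ → α) (i : ι) : ℤ → α :=
  (Set.Iic (firstCollision p)).piecewise (p i) (p (firstCollisionSwap p i))

theorem tailSwap_apply (p : ι → ℤ → α) (i : ι) (x : ℤ) :
    tailSwap p i x =
      p ((if x ≤ firstCollision p then 1 else firstCollisionSwap p : Perm ι) i) x := by
  by_cases h : x ≤ firstCollision p <;> simp [tailSwap, Set.piecewise, h]

theorem injective_tailSwap_iff (p : ι → ℤ → α) (x : ℤ) :
    (Injective fun i => tailSwap p i x) ↔ Injective fun i => p i x := by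
  simp only [tailSwap_apply]
  exact Equiv.injective_comp _ fun i => p i x

theorem firstCollision_tailSwap (p : ι → ℤ → α) :
    firstCollision (tailSwap p) = firstCollision p := by
  simp only [firstCollision, injective_tailSwap_iff]

theorem firstCollisionSwap_tailSwap (p : ι → ℤ → α) :
    firstCollisionSwap (tailSwap p) = firstCollisionSwap p := by
  simp [firstCollisionSwap, firstCollision_tailSwap, tailSwap_apply]

theorem tailSwap_tailSwap (p : ι → ℤ → α) : tailSwap (tailSwap p) = p := by
  funext i x
  simp only [tailSwap_apply, firstCollision_tailSwap, firstCollisionSwap_tailSwap]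
  split_ifs
  · rfl
  · exact congrArg (p · x) (collisionSwap_collisionSwap _ i)

variable [Fintype ι] {𝔸 : Type*} [CommRing 𝔸]

theorem prod_prod_tailSwap (I : Finset ℤ) (w : ℤ → α → 𝔸) (p : ι → ℤ → α) :
    ∏ i, ∏ x ∈ I, w x (tailSwap p i x) = ∏ i, ∏ x ∈ I, w x (p i x) := by
  rw [prod_comm, prod_comm (s := univ)]
  refine prod_congr rfl fun x _ => ?_
  simp only [tailSwap_apply]
  exact Equiv.prod_comp _ fun i => w x (p i x)

/-- Unlike the permutation `σ`, the product of the weights is preserved by `tailSwap`, so the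
families with a collision cancel. -/
theorem sum_sign_smul_prod_collision_eq_zero {P : ι → ι → Finset (ℤ → α)} {a : ℤ}
    (hstart : ∀ i i' j j', i ≠ i' → ∀ g ∈ P i j, ∀ h ∈ P i' j', ∀ x ≤ a, g x ≠ h x)
    (hsplice : ∀ i i' j j', ∀ g ∈ P i j, ∀ h ∈ P i' j', ∀ x, g x = h x →
      (Set.Iic x).piecewise g h ∈ P i j')
    (I : Finset ℤ) (w : ℤ → α → 𝔸) :
    ∑ σ : Perm ι, ∑ p ∈ Fintype.piFinset (fun i => P i (σ i))
        with ¬ ∀ x, Injective fun i => p i x,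
      Perm.sign σ • ∏ i, ∏ x ∈ I, w x (p i x) = 0 := by
  have hsign : ∀ σ : Perm ι, ∀ p : ι → ℤ → α, (∀ i, p i ∈ P i (σ i)) →
      (¬ ∀ x, Injective fun i => p i x) → Perm.sign (firstCollisionSwap p) = -1 := by
    refine fun σ p hp hx => sign_collisionSwap (Int.csInf_mem
      (s := {x | ¬ Injective fun i => p i x}) (not_forall.1 hx) ⟨a, fun x hx => ?_⟩)
    obtain ⟨i, j, e, hij⟩ := not_injective_iff.1 hx
    by_contra! hlt
    exact hstart i j _ _ hij _ (hp i) _ (hp j) x hlt.le e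
  rw [sum_sigma']
  refine sum_involution (fun c _ => ⟨c.1 * firstCollisionSwap c.2, tailSwap c.2⟩) ?_ ?_ ?_ ?_
  all_goals
    rintro ⟨σ, p⟩ hc
    simp only [mem_sigma, mem_univ, true_and, mem_filter, Fintype.mem_piFinset] at hc
  · simp only [prod_prod_tailSwap, Perm.sign_mul, hsign σ p hc.1 hc.2, mul_neg, mul_one,
      Units.neg_smul, add_neg_cancel]
  · intro _ e
    have hs := hsign σ p hc.1 hc.2
    rw [mul_eq_left.1 (congrArg Sigma.fst e : σ * firstCollisionSwap p = σ), Perm.sign_one] at hs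
    exact absurd hs (by decide)
  · simp only [mem_sigma, mem_univ, true_and, mem_filter, Fintype.mem_piFinset,
      injective_tailSwap_iff]
    exact ⟨fun i => hsplice _ _ _ _ _ (hc.1 i) _ (hc.1 _) _
      (apply_collisionSwap (fun i => p i (firstCollision p)) i).symm, hc.2⟩
  · simp [firstCollisionSwap_tailSwap, tailSwap_tailSwap, mul_assoc,
      firstCollisionSwap_mul_self]

theorem det_sum_prod_eq_sum_injective {P : ι → ι → Finset (ℤ → α)} {a : ℤ}
    (hstart : ∀ i i' j j', i ≠ i' → ∀ g ∈ P i j, ∀ h ∈ P i' j', ∀ x ≤ a, g x ≠ h x)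
    (hsplice : ∀ i i' j j', ∀ g ∈ P i j, ∀ h ∈ P i' j', ∀ x, g x = h x →
      (Set.Iic x).piecewise g h ∈ P i j')
    (hperm : ∀ (σ : Perm ι) (p : ι → ℤ → α), (∀ i, p i ∈ P i (σ i)) →
      (∀ x, Injective fun i => p i x) → σ = 1)
    (I : Finset ℤ) (w : ℤ → α → 𝔸) :
    (Matrix.of fun i j => ∑ g ∈ P i j, ∏ x ∈ I, w x (g x)).det =
      ∑ p ∈ Fintype.piFinset (fun i => P i i) with ∀ x, Injective fun i => p i x,
        ∏ i, ∏ x ∈ I, w x (p i x) := by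
  rw [← Matrix.det_transpose, Matrix.det_apply]
  simp only [Matrix.transpose_apply, Matrix.of_apply, prod_univ_sum, smul_sum]
  have hsplit : ∀ σ : Perm ι,
      ∑ p ∈ Fintype.piFinset fun i => P i (σ i), Perm.sign σ • ∏ i, ∏ x ∈ I, w x (p i x) =
      _ + _ := fun σ => (sum_filter_add_sum_filter_not _
        (fun p => ∀ x, Injective fun i => p i x) _).symm
  rw [sum_congr rfl fun σ _ => hsplit σ, sum_add_distrib,
    sum_sign_smul_prod_collision_eq_zero hstart hsplice, add_zero,
    sum_eq_single 1 (fun σ _ hσ => ?_) (by simp)]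
  · simp
  · rw [filter_eq_empty_iff.2 fun p hp hinj => hσ (hperm σ p (Fintype.mem_piFinset.1 hp) hinj),
      sum_empty]

end NonIntersecting

/-! ### Transfer sums -/

section Transfer

variable {α 𝔸 : Type*} [CommSemiring 𝔸]

theorem sum_piFinset_succ {m : ℕ} (s : Fin (m + 1) → Finset α) (F : (Fin (m + 1) → α) → 𝔸) :
    ∑ p ∈ Fintype.piFinset s, F p =
      ∑ X ∈ s 0, ∑ p ∈ Fintype.piFinset fun j => s j.succ, F (Fin.cons X p) := by
  rw [← sum_product']
  refine sum_nbij' (fun p => (p 0, Fin.tail p)) (fun z => Fin.cons z.1 z.2) ?_ ?_ ?_ ?_ ?_ <;>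
    simp +contextual [Fin.forall_fin_succ, Fin.tail]

/-- The sum over all `m`-step walks `X = X₀, X₁, …, X_m` with `X_j ∈ s (i + j)` of the products of
the transition weights `M (i + j) X_j X_{j+1}`; in other words, a product of `m` consecutive
transfer matrices applied to the all-one vector. -/
def transferSum (s : ℕ → Finset α) (M : ℕ → α → α → 𝔸) : ℕ → ℕ → α → 𝔸
  | 0, _, _ => 1
  | m + 1, i, X => ∑ Y ∈ s (i + 1), M i X Y * transferSum s M m (i + 1) Y

theorem sum_piFinset_mul_prod_eq_sum_mul_transferSum (s : ℕ → Finset α) (M : ℕ → α → α → 𝔸)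
    (m i : ℕ) (f : α → 𝔸) :
    ∑ p ∈ Fintype.piFinset (fun j : Fin (m + 1) => s (i + j)),
        f (p 0) * ∏ j : Fin m, M (i + j) (p j.castSucc) (p j.succ) =
      ∑ X ∈ s i, f X * transferSum s M m i X := by
  induction m generalizing i f with
  | zero => simp [sum_piFinset_succ, transferSum]
  | succ m ih =>
    rw [sum_piFinset_succ]
    refine sum_congr (by simp) fun X _ => ?_
    simp only [Fin.cons_zero, Fin.prod_univ_succ, Fin.castSucc_zero, Fin.cons_succ, Fin.val_zero,
      add_zero, Fin.val_succ, ← Fin.succ_castSucc, ← mul_sum, transferSum]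
    rw [← ih (i + 1)]
    simp only [add_assoc, add_comm 1]

variable {s : ℕ → Finset α} {L W : ℕ → α → α → 𝔸} {q : 𝔸}

theorem sum_mul_transferSum_eq_pow_mul_transferSum
    (hone : ∀ i, ∀ X ∈ s i, ∑ Y ∈ s (i + 1), L i X Y = q * ∑ Y ∈ s (i + 1), W i X Y)
    (hcomm : ∀ i, ∀ X ∈ s i, ∀ Z ∈ s (i + 2), ∑ Y ∈ s (i + 1), L i X Y * W (i + 1) Y Z =
      q * ∑ Y ∈ s (i + 1), W i X Y * L (i + 1) Y Z)
    (m i : ℕ) {X : α} (hX : X ∈ s i) :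
    ∑ Y ∈ s (i + 1), L i X Y * transferSum s W m (i + 1) Y =
      q ^ (m + 1) * transferSum s W (m + 1) i X := by
  induction m generalizing i X with
  | zero => simpa [transferSum] using hone i X hX
  | succ m ih =>
    calc ∑ Y ∈ s (i + 1), L i X Y * transferSum s W (m + 1) (i + 1) Y
        = ∑ Z ∈ s (i + 2), (∑ Y ∈ s (i + 1), L i X Y * W (i + 1) Y Z) *
            transferSum s W m (i + 2) Z := by
          simp only [transferSum, mul_sum, sum_mul, mul_assoc]
          exact sum_comm
      _ = q * ∑ Y ∈ s (i + 1), W i X Y *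
            ∑ Z ∈ s (i + 2), L (i + 1) Y Z * transferSum s W m (i + 2) Z := by
          rw [sum_congr rfl fun Z hZ => congrArg (· * _) (hcomm i X hX Z hZ)]
          simp only [mul_sum, sum_mul, mul_assoc]
          exact sum_comm
      _ = q ^ (m + 2) * transferSum s W (m + 2) i X := by
          rw [sum_congr rfl fun Y hY => congrArg (W i X Y * ·) (ih (i + 1) hY), transferSum,
            mul_sum, mul_sum]
          exact sum_congr rfl fun Y _ => by ring

theorem transferSum_eq_pow_choose_mul_transferSum
    (hone : ∀ i, ∀ X ∈ s i, ∑ Y ∈ s (i + 1), L i X Y = q * ∑ Y ∈ s (i + 1), W i X Y)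
    (hcomm : ∀ i, ∀ X ∈ s i, ∀ Z ∈ s (i + 2), ∑ Y ∈ s (i + 1), L i X Y * W (i + 1) Y Z =
      q * ∑ Y ∈ s (i + 1), W i X Y * L (i + 1) Y Z)
    (m i : ℕ) {X : α} (hX : X ∈ s i) :
    transferSum s L m i X = q ^ (m + 1).choose 2 * transferSum s W m i X := by
  induction m generalizing i X with
  | zero => simp [transferSum]
  | succ m ih =>
    calc transferSum s L (m + 1) i X
        = ∑ Y ∈ s (i + 1), L i X Y * (q ^ (m + 1).choose 2 * transferSum s W m (i + 1) Y) :=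
          sum_congr rfl fun Y hY => by rw [ih (i + 1) hY]
      _ = q ^ (m + 1).choose 2 * (q ^ (m + 1) * transferSum s W (m + 1) i X) := by
          rw [← sum_mul_transferSum_eq_pow_mul_transferSum hone hcomm m i hX, mul_sum]
          exact sum_congr rfl fun Y _ => mul_left_comm _ _ _
      _ = q ^ (m + 2).choose 2 * transferSum s W (m + 1) i X := by
          rw [← mul_assoc, ← pow_add, Nat.choose_succ_succ' (m + 1) 1, Nat.choose_one_right,
            add_comm (m + 1)]

end Transfer

/-! ### Height functions of Dyck and Schröder paths -/

section Heights

/-- The point of `g` over the abscissa `x` is the midpoint of a horizontal step `(2, 0)`: since the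
paths below start at even abscissas, these are exactly the points at which `g x + x` is odd. -/
def IsMid (g : ℤ → ℤ) (x : ℤ) : Prop := (g x + x) % 2 = 1

/-- `g` is the height function of a little Schröder path from `(-2l, 0)` to `(2r, 0)`, that is, of a
path with steps `(1, 1)`, `(1, -1)` and `(2, 0)` which stays weakly above the `x`-axis and has no
horizontal step on it. The path is extended by an infinite ascent on the left and an infinite
descent on the right, so that paths with different endpoints can be compared everywhere. -/
structure IsSchroderHeight (l r : ℕ) (g : ℤ → ℤ) : Prop where
  left : ∀ x ≤ -2 * (l : ℤ), g x = x + 2 * l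
  right : ∀ x ≥ 2 * (r : ℤ), g x = 2 * r - x
  nonneg : ∀ x ≥ -2 * (l : ℤ), x ≤ 2 * r → 0 ≤ g x
  step : ∀ x, g (x + 1) ≤ g x + 1 ∧ g x ≤ g (x + 1) + 1
  mid : ∀ x, IsMid g x → g (x - 1) = g x ∧ g (x + 1) = g x ∧ 0 < g x

/-- `g` is the height function of a Dyck path from `(-2l, 0)` to `(2r, 0)`, extended to all
abscissas as in `IsSchroderHeight`. -/
def IsDyckHeight (l r : ℕ) (g : ℤ → ℤ) : Prop := IsSchroderHeight l r g ∧ ∀ x, ¬ IsMid g x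

/-- The abscissas of the midpoints of the horizontal steps of a path from `(-2l, 0)` to
`(2r, 0)`. -/
def mids (l r : ℕ) (g : ℤ → ℤ) : Finset ℤ := {x ∈ Icc (-2 * (l : ℤ)) (2 * r) | IsMid g x}

/-- The abscissas of the valleys (`ε = 1`) or of the peaks (`ε = -1`) of a Dyck path from
`(-2l, 0)` to `(2r, 0)`. -/
def turns (l r : ℕ) (ε : ℤˣ) (D : ℤ → ℤ) : Finset ℤ :=
  {x ∈ Icc (-2 * (l : ℤ)) (2 * r) | D (x - 1) = D x + ε ∧ D (x + 1) = D x + ε}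

/-- `g` raised (`ε = 1`) or lowered (`ε = -1`) by one over the abscissas in `A`. For `A` a set of
valleys or peaks of a Dyck path this replaces each of them by a horizontal step, and the opposite
sign undoes it. -/
def bumpOn (ε : ℤˣ) (A : Finset ℤ) (g : ℤ → ℤ) (x : ℤ) : ℤ := if x ∈ A then g x + ε else g x

theorem bumpOn_bumpOn_neg (ε : ℤˣ) (A : Finset ℤ) (g : ℤ → ℤ) :
    bumpOn ε A (bumpOn (-ε) A g) = g := by
  funext x
  by_cases hx : x ∈ A <;> simp [bumpOn, hx]

variable {l r : ℕ} {g D : ℤ → ℤ} {A : Finset ℤ}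

theorem IsSchroderHeight.mem_mids_iff (hg : IsSchroderHeight l r g) (x : ℤ) :
    x ∈ mids l r g ↔ IsMid g x := by
  have hl := hg.left x
  have hr := hg.right x
  rw [mids, mem_filter, mem_Icc, and_iff_right_iff_imp, IsMid]
  omega

theorem IsDyckHeight.even (hD : IsDyckHeight l r D) (x : ℤ) : (D x + x) % 2 = 0 := by
  have := hD.2 x
  simp only [IsMid] at this
  omega

theorem IsDyckHeight.step_eq (hD : IsDyckHeight l r D) (x : ℤ) :
    D (x + 1) = D x + 1 ∨ D (x + 1) = D x - 1 := by
  have := hD.1.step x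
  have := hD.even x
  have := hD.even (x + 1)
  omega

theorem bumpOn_apply_cases (ε : ℤˣ) (A : Finset ℤ) (g : ℤ → ℤ) (x : ℤ) :
    x ∈ A ∧ bumpOn ε A g x = g x + ε ∨ x ∉ A ∧ bumpOn ε A g x = g x := by
  by_cases hx : x ∈ A <;> simp [bumpOn, hx]

theorem IsSchroderHeight.isDyckHeight_bumpOn (hg : IsSchroderHeight l r g) (ε : ℤˣ) :
    IsDyckHeight l r (bumpOn ε (mids l r g) g) := by
  have hε := Int.isUnit_iff.1 ε.isUnit
  have hb : ∀ x, bumpOn ε (mids l r g) g x = if (g x + x) % 2 = 1 then g x + ε else g x :=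
    fun x => if_congr (hg.mem_mids_iff x) rfl rfl
  have hmid := hg.mid
  simp only [IsMid] at hmid
  have hD : ∀ x, ¬ IsMid (bumpOn ε (mids l r g) g) x := fun x => by
    have := hmid x
    rw [IsMid, hb]
    split_ifs <;> omega
  refine ⟨⟨fun x hx => ?_, fun x hx => ?_, fun x hx hx' => ?_, fun x => ?_,
    fun x hx => absurd hx (hD x)⟩, hD⟩
  · have := hg.left x hx
    rw [hb]
    split_ifs <;> omega
  · have := hg.right x hx
    rw [hb]
    split_ifs <;> omega
  · have := hg.nonneg x hx hx'
    have := hmid x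
    rw [hb]
    split_ifs <;> omega
  · have := hg.step x
    have := hmid x
    have := hmid (x + 1)
    rw [add_sub_cancel_right] at this
    rw [hb, hb]
    split_ifs <;> omega

theorem IsSchroderHeight.mids_subset_turns (hg : IsSchroderHeight l r g) (ε : ℤˣ) :
    mids l r g ⊆ {x ∈ turns l r ε (bumpOn (-ε) (mids l r g) g) |
      0 < bumpOn (-ε) (mids l r g) g x + ε} := by
  intro x hx
  have hg' := hg.mid x ((hg.mem_mids_iff x).1 hx)
  have hmid : ∀ y ∈ mids l r g, (g y + y) % 2 = 1 := fun y hy => (hg.mem_mids_iff y).1 hy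
  have hneg := Units.val_neg ε
  rw [mem_filter, turns, mem_filter]
  refine ⟨⟨(mem_filter.1 hx).1, ?_⟩, ?_⟩ <;> grind [bumpOn]

theorem IsDyckHeight.mids_bumpOn (hD : IsDyckHeight l r D) (ε : ℤˣ)
    (hA : A ⊆ Icc (-2 * (l : ℤ)) (2 * r)) : mids l r (bumpOn ε A D) = A := by
  ext x
  have hε := Int.isUnit_iff.1 ε.isUnit
  have hx := @hA x
  have := hD.even x
  rw [mids, mem_filter, IsMid]
  rcases bumpOn_apply_cases ε A D x with h | h <;> grind

theorem IsDyckHeight.isSchroderHeight_bumpOn (hD : IsDyckHeight l r D) (ε : ℤˣ)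
    (hA : A ⊆ {x ∈ turns l r ε D | 0 < D x + ε}) : IsSchroderHeight l r (bumpOn ε A D) := by
  have hε := Int.isUnit_iff.1 ε.isUnit
  have hv : ∀ x, x ∈ A → D (x - 1) = D x + ε ∧ D (x + 1) = D x + ε ∧ 0 < D x + ε := by
    intro x hx
    have := hA hx
    simp only [turns, mem_filter] at this
    tauto
  refine ⟨fun x hx => ?_, fun x hx => ?_, fun x hx hx' => ?_, fun x => ?_, fun x hx => ?_⟩
  · have := hD.1.left x hx
    have := hD.1.left (x - 1)
    rcases bumpOn_apply_cases ε A D x with h | h <;> grind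
  · have := hD.1.right x hx
    have := hD.1.right (x + 1)
    rcases bumpOn_apply_cases ε A D x with h | h <;> grind
  · have := hD.1.nonneg x hx hx'
    rcases bumpOn_apply_cases ε A D x with h | h <;> grind
  · have := hD.step_eq x
    grind [bumpOn]
  · have := hD.even x
    have := hD.step_eq x
    grind [bumpOn, IsMid]

theorem IsDyckHeight.filter_turns_one (hD : IsDyckHeight l r D) :
    {x ∈ turns l r 1 D | 0 < D x + (1 : ℤˣ)} = turns l r 1 D := by
  refine filter_true_of_mem fun x hx => ?_
  rw [turns, mem_filter, mem_Icc] at hx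
  have := hD.1.nonneg x hx.1.1 hx.1.2
  rw [Units.val_one]
  omega

theorem sum_Icc_add_sub (f : ℤ → ℤ) (a : ℤ) (m : ℕ) :
    ∑ x ∈ Icc a (a + m), (f x - f (x + 1)) = f a - f (a + m + 1) := by
  induction m with
  | zero => simp
  | succ m ih =>
    rw [Nat.cast_succ, ← add_assoc, ← insert_Icc_right_eq_Icc_add_one (by omega),
      sum_insert (by simp), ih, sub_add_sub_cancel']

-- The slope of `D` is `1` at the start and `-1` at the end; it drops by `2` at each peak and rises
-- by `2` at each valley.
theorem IsDyckHeight.card_turns_neg_one (hD : IsDyckHeight l r D) :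
    #(turns l r (-1) D) = #(turns l r 1 D) + 1 := by
  have hturn : ∀ x, (D x - D (x - 1)) - (D (x + 1) - D (x + 1 - 1)) =
      2 * ((if D (x - 1) = D x + (-1 : ℤˣ) ∧ D (x + 1) = D x + (-1 : ℤˣ) then (1 : ℤ) else 0) -
        if D (x - 1) = D x + (1 : ℤˣ) ∧ D (x + 1) = D x + (1 : ℤˣ) then 1 else 0) := by
    intro x
    have h := hD.step_eq x
    have h' := hD.step_eq (x - 1)
    rw [sub_add_cancel] at h'
    rw [add_sub_cancel_right, Units.val_neg, Units.val_one]
    split_ifs <;> omega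
  have htel := sum_Icc_add_sub (fun x => D x - D (x - 1)) (-2 * l) (2 * (l + r))
  have hend : -2 * (l : ℤ) + (2 * (l + r) : ℕ) = 2 * r := by push_cast; ring
  rw [hend, add_sub_cancel_right, hD.1.left _ le_rfl, hD.1.left _ (by omega),
    hD.1.right _ le_rfl, hD.1.right _ (by omega), sum_congr rfl fun x _ => hturn x, ← mul_sum,
    sum_sub_distrib, ← natCast_card_filter, ← natCast_card_filter] at htel
  simp only [turns]
  omega

end Heights

/-! ### From step sequences to height functions -/

section StepSequences

variable {L l r : ℕ} {s : Fin L → Bool} {g : ℤ → ℤ} {x : ℤ}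

theorem pht_succ (s : Fin L → Bool) (i : ℕ) : pht s (i + 1) = pht s i + stepVal s i :=
  sum_range_succ _ _

theorem stepVal_eq_one_or_neg_one (s : Fin L → Bool) {j : ℕ} (hj : j < L) :
    stepVal s j = 1 ∨ stepVal s j = -1 := by
  rw [stepVal, dif_pos hj]
  exact ite_eq_or_eq _ _ _

/-- The height function of the path with steps `s` started at `(-2l, 0)`, extended by an ascent on
the left and a descent on the right as in `IsSchroderHeight`. -/
def pathHeight (l : ℕ) (s : Fin L → Bool) (x : ℤ) : ℤ :=
  if x < -2 * l then x + 2 * l else if x ≤ L - 2 * l then pht s (x + 2 * l).toNat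
  else L - 2 * l - x

/-- The steps of the path with height function `g` started at `(-2l, 0)`. -/
def heightSteps (l L : ℕ) (g : ℤ → ℤ) (j : Fin L) : Bool :=
  decide (g (-2 * l + j + 1) = g (-2 * l + j) + 1)

theorem pathHeight_natCast (l : ℕ) (s : Fin L → Bool) {i : ℕ} (hi : i ≤ L) :
    pathHeight l s (-2 * l + i) = pht s i := by
  rw [pathHeight, if_neg (by omega), if_pos (by omega)]
  congr 1
  omega

theorem stepVal_eq_sub (l : ℕ) (s : Fin L → Bool) {j : ℕ} (hj : j < L) :
    stepVal s j = pathHeight l s (-2 * l + j + 1) - pathHeight l s (-2 * l + j) := by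
  have h := pathHeight_natCast l s (i := j + 1) (by omega)
  rw [Nat.cast_succ, ← add_assoc] at h
  rw [h, pathHeight_natCast l s hj.le, pht_succ, add_sub_cancel_left]

theorem pathHeight_of_le (s : Fin L → Bool) (hx : x ≤ -2 * l) :
    pathHeight l s x = x + 2 * l := by
  rcases hx.lt_or_eq with h | rfl
  · exact if_pos h
  · simpa [pht] using pathHeight_natCast l s (Nat.zero_le L)

theorem IsDyck.pathHeight_of_ge (hs : IsDyck s) (hx : L - 2 * l ≤ x) :
    pathHeight l s x = L - 2 * l - x := by
  rcases hx.lt_or_eq with h | rfl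
  · rw [pathHeight, if_neg (by omega), if_neg (by omega)]
  · rw [sub_self, ← hs.2, ← pathHeight_natCast l s le_rfl]
    congr 1
    ring

theorem IsDyck.pathHeight_add_one (hs : IsDyck s) (x : ℤ) :
    pathHeight l s (x + 1) = pathHeight l s x + 1 ∨
      pathHeight l s (x + 1) = pathHeight l s x - 1 := by
  rcases lt_or_ge x (-2 * l) with h | h
  · rw [pathHeight_of_le s (by omega), pathHeight_of_le s h.le]
    omega
  rcases lt_or_ge x (L - 2 * l) with h' | h'
  · obtain ⟨j, rfl⟩ : ∃ j : ℕ, x = -2 * l + j := ⟨(x + 2 * l).toNat, by omega⟩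
    have := stepVal_eq_sub l s (j := j) (by omega)
    have := stepVal_eq_one_or_neg_one s (j := j) (by omega)
    omega
  · rw [hs.pathHeight_of_ge (by omega), hs.pathHeight_of_ge h']
    omega

theorem IsDyck.even_pathHeight_add (hs : IsDyck s) (x : ℤ) : (pathHeight l s x + x) % 2 = 0 := by
  induction x using Int.inductionOn' (b := -2 * l) with
  | zero =>
    rw [pathHeight_of_le s le_rfl]
    omega
  | succ x _ ih =>
    have := hs.pathHeight_add_one (l := l) x
    omega
  | pred x _ ih =>
    have := hs.pathHeight_add_one (l := l) (x - 1)
    rw [sub_add_cancel] at this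
    omega

theorem IsDyck.isDyckHeight_pathHeight (hs : IsDyck s) (hL : L = 2 * (l + r)) :
    IsDyckHeight l r (pathHeight l s) := by
  have hmid : ∀ x, ¬ IsMid (pathHeight l s) x := fun x => by
    have := hs.even_pathHeight_add (l := l) x
    rw [IsMid]
    omega
  refine ⟨⟨fun x hx => pathHeight_of_le s hx, fun x hx => ?_, fun x hx hx' => ?_, fun x => ?_,
    fun x hx => absurd hx (hmid x)⟩, hmid⟩
  · rw [hs.pathHeight_of_ge (by omega)]
    omega
  · rw [pathHeight, if_neg (by omega), if_pos (by omega)]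
    exact hs.1 _ (mem_range.2 (by omega))
  · have := hs.pathHeight_add_one (l := l) x
    omega

theorem IsDyckHeight.pht_heightSteps (hg : IsDyckHeight l r g) {i : ℕ} (hi : i ≤ L) :
    pht (heightSteps l L g) i = g (-2 * l + i) := by
  induction i with
  | zero =>
    rw [pht, range_zero, sum_empty, Nat.cast_zero, add_zero, hg.1.left _ le_rfl]
    ring
  | succ i ih =>
    have := hg.step_eq (-2 * l + i)
    rw [pht_succ, ih (by omega), stepVal, dif_pos (by omega), Nat.cast_succ, ← add_assoc]
    simp only [heightSteps, decide_eq_true_eq]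
    split_ifs <;> omega

theorem IsDyckHeight.isDyck_heightSteps (hg : IsDyckHeight l r g) (hL : L = 2 * (l + r)) :
    IsDyck (heightSteps l L g) := by
  refine ⟨fun i hi => ?_, ?_⟩
  · rw [mem_range] at hi
    rw [hg.pht_heightSteps (by omega)]
    exact hg.1.nonneg _ (by omega) (by omega)
  · rw [hg.pht_heightSteps le_rfl, hg.1.right _ (by omega)]
    omega

theorem IsDyckHeight.pathHeight_heightSteps (hg : IsDyckHeight l r g) (hL : L = 2 * (l + r)) :
    pathHeight l (heightSteps l L g) = g := by
  funext x
  unfold pathHeight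
  split_ifs with h h'
  · rw [hg.1.left x h.le]
  · rw [hg.pht_heightSteps (by omega)]
    congr 1
    omega
  · rw [hg.1.right x (by omega)]
    omega

theorem heightSteps_pathHeight (l : ℕ) (s : Fin L → Bool) :
    heightSteps l L (pathHeight l s) = s := by
  funext j
  have h := stepVal_eq_sub l s j.2
  rw [stepVal, dif_pos j.2] at h
  rw [heightSteps]
  cases hj : s j <;> simp only [Fin.eta, hj, if_true, Bool.false_eq_true, if_false] at h <;>
    simp only [decide_eq_true_eq, decide_eq_false_iff_not] <;> omega

theorem pathHeight_injective (l : ℕ) :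
    Function.Injective (pathHeight l : (Fin L → Bool) → ℤ → ℤ) :=
  Function.LeftInverse.injective (heightSteps_pathHeight l)

theorem IsDyckHeight.mem_Ioo_of_mem_turns_one (hg : IsDyckHeight l r g) (hx : x ∈ turns l r 1 g) :
    x ∈ Ioo (-2 * (l : ℤ)) (2 * r) := by
  rw [turns, mem_filter, Units.val_one] at hx
  rw [mem_Ioo]
  constructor <;> by_contra h
  · rw [hg.1.left x (by omega), hg.1.left (x - 1) (by omega)] at hx
    omega
  · rw [hg.1.right x (by omega), hg.1.right (x + 1) (by omega)] at hx
    omega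

theorem IsDyck.card_turns_one (hs : IsDyck s) (hL : L = 2 * (l + r)) :
    #(turns l r 1 (pathHeight l s)) = #(valleys s) := by
  have hmem : ∀ x ∈ turns l r 1 (pathHeight l s), x ∈ Ioo (-2 * (l : ℤ)) (2 * r) :=
    fun x => (hs.isDyckHeight_pathHeight hL).mem_Ioo_of_mem_turns_one
  refine card_bij' (fun x _ => (x + 2 * l).toNat) (fun i _ => -2 * l + i) ?_ ?_ ?_ ?_
  · intro x hx
    have hx' := mem_Ioo.1 (hmem x hx)
    obtain ⟨i, rfl⟩ : ∃ i : ℕ, x = -2 * l + (i + 1 : ℕ) := ⟨(x + 2 * l - 1).toNat, by omega⟩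
    have h := stepVal_eq_sub l s (j := i) (by omega)
    have h' := stepVal_eq_sub l s (j := i + 1) (by omega)
    rw [turns, mem_filter, Units.val_one] at hx
    grind [valleys]
  · intro i hi
    rw [valleys, mem_filter, mem_Icc] at hi
    obtain ⟨i, rfl⟩ : ∃ j, i = j + 1 := ⟨i - 1, by omega⟩
    have h := stepVal_eq_sub l s (j := i) (by omega)
    have h' := stepVal_eq_sub l s (j := i + 1) (by omega)
    rw [turns, mem_filter, Units.val_one]
    grind
  · intro x hx
    have hx' := mem_Ioo.1 (hmem x hx)
    omega
  · intro i _
    omega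

/-- The height functions of the Dyck paths from `(-2l, 0)` to `(2r, 0)`. -/
def dyckHeights (l r : ℕ) : Finset (ℤ → ℤ) := (dyckPaths (2 * (l + r))).image (pathHeight l)

theorem mem_dyckPaths : s ∈ dyckPaths L ↔ IsDyck s := by simp [dyckPaths]

theorem mem_dyckHeights : g ∈ dyckHeights l r ↔ IsDyckHeight l r g := by
  simp only [dyckHeights, mem_image, mem_dyckPaths]
  constructor
  · rintro ⟨s, hs, rfl⟩
    exact hs.isDyckHeight_pathHeight rfl
  · exact fun hg => ⟨_, hg.isDyck_heightSteps rfl, hg.pathHeight_heightSteps rfl⟩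

theorem dyckHeights_eq_image (hL : L = 2 * (l + r)) :
    dyckHeights l r = (dyckPaths L).image (pathHeight l) := by
  rw [hL]
  rfl

theorem sum_dyckHeights_eq_sum_dyckPaths {𝔸 : Type*} [CommSemiring 𝔸] (q : 𝔸)
    (hL : L = 2 * (l + r)) :
    ∑ D ∈ dyckHeights l r, q ^ #(turns l r 1 D) = ∑ s ∈ dyckPaths L, q ^ #(valleys s) := by
  rw [dyckHeights_eq_image hL, sum_image (pathHeight_injective l).injOn]
  exact sum_congr rfl fun s hs => by rw [(mem_dyckPaths.1 hs).card_turns_one hL]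

end StepSequences

/-! ### Resolving horizontal steps -/

section Resolution

variable {𝔸 : Type*} {l r : ℕ} {g : ℤ → ℤ}

/-- The height functions of the little Schröder paths from `(-2l, 0)` to `(2r, 0)`, each obtained
from a Dyck path by flattening some of its valleys. -/
def schroderHeights (l r : ℕ) : Finset (ℤ → ℤ) :=
  (dyckHeights l r).biUnion fun D => (turns l r 1 D).powerset.image fun A => bumpOn 1 A D

theorem mem_schroderHeights : g ∈ schroderHeights l r ↔ IsSchroderHeight l r g := by
  simp only [schroderHeights, mem_biUnion, mem_image, mem_powerset, mem_dyckHeights]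
  constructor
  · rintro ⟨D, hD, A, hA, rfl⟩
    exact hD.isSchroderHeight_bumpOn 1 (hD.filter_turns_one.symm ▸ hA)
  · exact fun hg => ⟨_, hg.isDyckHeight_bumpOn (-1), _,
      (hg.mids_subset_turns 1).trans (filter_subset _ _), bumpOn_bumpOn_neg _ _ _⟩

theorem sum_schroderHeights_eq_sum_dyckHeights [CommSemiring 𝔸] (ε : ℤˣ) (c : 𝔸)
    (φ : (ℤ → ℤ) → 𝔸) :
    ∑ g ∈ schroderHeights l r, c ^ #(mids l r g) * φ g =
      ∑ D ∈ dyckHeights l r, ∑ A ∈ powerset {x ∈ turns l r ε D | 0 < D x + ε},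
        c ^ #A * φ (bumpOn ε A D) := by
  have hmids : ∀ D ∈ dyckHeights l r, ∀ A ⊆ {x ∈ turns l r ε D | 0 < D x + ε},
      mids l r (bumpOn ε A D) = A := fun D hD A hA =>
    (mem_dyckHeights.1 hD).mids_bumpOn ε (hA.trans ((filter_subset _ _).trans (filter_subset _ _)))
  rw [sum_sigma']
  refine sum_bij' (fun g _ => ⟨bumpOn (-ε) (mids l r g) g, mids l r g⟩)
    (fun z _ => bumpOn ε z.2 z.1) ?_ ?_ ?_ ?_ ?_
  · intro g hg
    rw [mem_schroderHeights] at hg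
    exact mem_sigma.2 ⟨mem_dyckHeights.2 (hg.isDyckHeight_bumpOn _),
      mem_powerset.2 (hg.mids_subset_turns ε)⟩
  · rintro ⟨D, A⟩ h
    simp only [mem_sigma, mem_powerset, mem_dyckHeights] at h
    exact mem_schroderHeights.2 (h.1.isSchroderHeight_bumpOn ε h.2)
  · exact fun g _ => bumpOn_bumpOn_neg ε _ g
  · rintro ⟨D, A⟩ h
    rw [mem_sigma, mem_powerset] at h
    have := bumpOn_bumpOn_neg (-ε) A D
    rw [neg_neg] at this
    simp only [hmids D h.1 A h.2, this]
  · intro g _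
    rw [bumpOn_bumpOn_neg]

theorem sum_schroderHeights_eq_sum_powerset_turns_one [CommSemiring 𝔸] (c : 𝔸)
    (φ : (ℤ → ℤ) → 𝔸) :
    ∑ g ∈ schroderHeights l r, c ^ #(mids l r g) * φ g =
      ∑ D ∈ dyckHeights l r, ∑ A ∈ (turns l r 1 D).powerset, c ^ #A * φ (bumpOn 1 A D) := by
  rw [sum_schroderHeights_eq_sum_dyckHeights 1]
  exact sum_congr rfl fun D hD => by rw [(mem_dyckHeights.1 hD).filter_turns_one]

theorem sum_powerset_sub_one_pow_card {ι : Type*} [CommRing 𝔸] (q : 𝔸) (V : Finset ι) :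
    ∑ A ∈ V.powerset, (q - 1) ^ #A = q ^ #V := by
  simpa using sum_pow_mul_eq_add_pow (q - 1) 1 V

theorem sum_schroderHeights_sub_one_pow_card_mids [CommRing 𝔸] (q : 𝔸) {L : ℕ}
    (hL : L = 2 * (l + r)) :
    ∑ g ∈ schroderHeights l r, (q - 1) ^ #(mids l r g) = ∑ s ∈ dyckPaths L, q ^ #(valleys s) := by
  rw [← sum_dyckHeights_eq_sum_dyckPaths q hL]
  simpa [sum_powerset_sub_one_pow_card] using
    sum_schroderHeights_eq_sum_powerset_turns_one (l := l) (r := r) (q - 1) fun _ => 1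

end Resolution

/-! ### Nested pairs of paths -/

section Nested

variable {𝔸 : Type*} {l r : ℕ} {X D Y S : ℤ → ℤ} {A : Finset ℤ}

theorem IsDyckHeight.bumpOn_one_strongLT_iff (hD : IsDyckHeight l r D) {l' r' : ℕ}
    (hS : IsSchroderHeight l' r' S) (hA : A ⊆ turns l r 1 D) :
    StrongLT (bumpOn 1 A D) S ↔ StrongLT D S := by
  refine ⟨fun h x => ?_, fun h x => ?_⟩ <;> have h₀ := h x
  · rcases bumpOn_apply_cases 1 A D x with h' | h' <;> grind [Units.val_one, Units.val_neg]
  · have := h (x + 1)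
    have := hD.even x
    have := hS.mid x
    have hv : x ∈ A → D (x + 1) = D x + 1 := fun hx => (mem_filter.1 (hA hx)).2.2
    grind [bumpOn, IsMid, Units.val_one]

theorem IsDyckHeight.strongLT_bumpOn_neg_one_iff (hX : IsDyckHeight l r X) {l' r' : ℕ}
    (hD : IsDyckHeight l' r' D) (A : Finset ℤ) :
    StrongLT X (bumpOn (-1) A D) ↔ StrongLT X D := by
  refine forall_congr' fun x => ?_
  have := hX.even x
  have := hD.even x
  rcases bumpOn_apply_cases (-1) A D x with h | h <;> grind [Units.val_one, Units.val_neg]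

theorem IsSchroderHeight.lt_of_notMem_Icc {g h : ℤ → ℤ} (hg : IsSchroderHeight l r g)
    (hh : IsSchroderHeight (l + 1) (r + 1) h) {x : ℤ} (hx : x ∉ Icc (-2 * (l : ℤ)) (2 * r)) :
    g x < h x := by
  rw [mem_Icc] at hx
  have hgl := hg.left x
  have hgr := hg.right x
  have hhl := hh.left x
  have hhr := hh.right x
  have hh0 := hh.nonneg x
  push_cast at hhl hhr hh0
  omega

theorem IsDyckHeight.pos_of_mem_turns_neg_one (hX : IsDyckHeight l r X)
    (hD : IsDyckHeight (l + 1) (r + 1) D) (hXD : StrongLT X D) {x : ℤ}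
    (hx : x ∈ turns (l + 1) (r + 1) (-1) D) : 0 < D x + (-1 : ℤˣ) := by
  rw [turns, mem_filter, mem_Icc, Units.val_neg, Units.val_one] at hx
  rw [Units.val_neg, Units.val_one]
  have hXl := hX.1.left (x + 1)
  have hXr := hX.1.right (x - 1)
  have hX0 := hX.1.nonneg x
  have hDl := hD.1.left x
  have hDr := hD.1.right x
  have hDl' := hD.1.nonneg (x + 1)
  have hDr' := hD.1.nonneg (x - 1)
  have hlt : ∀ y, X y < D y := hXD
  have := hlt x
  have := hlt (x + 1)
  have := hlt (x - 1)
  have := hX.even x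
  have := hD.even x
  push_cast at hDl hDr hDl' hDr' hx
  omega

/-- The abscissas at which a path from `(-2l, 0)` to `(2r, 0)` meets another path. -/
def contacts (l r : ℕ) (D Y : ℤ → ℤ) : Finset ℤ := {x ∈ Icc (-2 * (l : ℤ)) (2 * r) | D x = Y x}

theorem IsDyckHeight.mem_contacts_iff (hD : IsDyckHeight l r D)
    (hY : IsDyckHeight (l + 1) (r + 1) Y) (x : ℤ) : x ∈ contacts l r D Y ↔ D x = Y x := by
  rw [contacts, mem_filter, and_iff_right_iff_imp]
  exact fun h => by_contra fun hx => (hD.1.lt_of_notMem_Icc hY.1 hx).ne h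

theorem IsDyckHeight.bumpOn_neg_one_strongLT_iff (hD : IsDyckHeight l r D)
    (hY : IsDyckHeight (l + 1) (r + 1) Y) (A : Finset ℤ) :
    StrongLT (bumpOn (-1) A D) Y ↔ D ≤ Y ∧ contacts l r D Y ⊆ A := by
  have hA : contacts l r D Y ⊆ A ↔ ∀ x, D x = Y x → x ∈ A :=
    forall_congr' fun x => imp_congr_left (hD.mem_contacts_iff hY x)
  rw [hA, Pi.le_def, ← forall_and]
  refine forall_congr' fun x => ?_
  have := hD.even x
  have := hY.even x
  rcases bumpOn_apply_cases (-1) A D x with h | h <;> grind [Units.val_one, Units.val_neg]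

theorem bumpOn_neg_one_strongLT_iff_strongLT_bumpOn_one :
    StrongLT (bumpOn (-1) A D) Y ↔ StrongLT D (bumpOn 1 A Y) := by
  refine forall_congr' fun x => ?_
  by_cases hx : x ∈ A <;> simp [bumpOn, hx, add_neg_lt_iff_lt_add]

-- If a contact is a peak of `D` (or a valley of `Y`), the other path can only avoid turning there
-- by following a step of the first one, but then the end of that step is a contact as well, and
-- adjacent points are never both peaks (or both valleys).
theorem IsDyckHeight.contacts_subset_turns_iff (hD : IsDyckHeight l r D)
    (hY : IsDyckHeight (l + 1) (r + 1) Y) :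
    contacts l r D Y ⊆ turns l r (-1) D ↔ contacts l r D Y ⊆ turns (l + 1) (r + 1) 1 Y := by
  have hmem := hD.mem_contacts_iff hY
  constructor <;> intro hs x hx
  · have hx' := hs hx
    have hr := @hs (x + 1)
    have hl := @hs (x - 1)
    have := hY.step_eq x
    have := hY.step_eq (x - 1)
    grind [turns, Units.val_one, Units.val_neg]
  · have hx' := hs hx
    have hr := @hs (x + 1)
    have hl := @hs (x - 1)
    have := hD.step_eq x
    have := hD.step_eq (x - 1)
    grind [turns, contacts, Units.val_one, Units.val_neg]

/-- The transition weight of a step from the path `X` to a path `Y` lying strictly above it, when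
`Y` itself has weight `w Y`. -/
def aboveWeight [Zero 𝔸] (w : (ℤ → ℤ) → 𝔸) (X Y : ℤ → ℤ) : 𝔸 := if StrongLT X Y then w Y else 0

theorem IsDyckHeight.aboveWeight_bumpOn_one [Zero 𝔸] (hD : IsDyckHeight l r D) {l' r' : ℕ}
    (hY : IsSchroderHeight l' r' Y) (hA : A ⊆ turns l r 1 D)
    (w : (ℤ → ℤ) → 𝔸) : aboveWeight w (bumpOn 1 A D) Y = aboveWeight w D Y :=
  if_congr (hD.bumpOn_one_strongLT_iff hY hA) rfl rfl

end Nested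

/-! ### The commutation relation -/

section Commutation

variable {𝔸 : Type*} [CommRing 𝔸] {l r : ℕ} {X D Y : ℤ → ℤ}

theorem sum_powerset_filter_superset_sub_one_pow_card {ι : Type*} [DecidableEq ι] (q : 𝔸)
    (T V : Finset ι) :
    ∑ A ∈ V.powerset with T ⊆ A, (q - 1) ^ #A =
      if T ⊆ V then (q - 1) ^ #T * q ^ #(V \ T) else 0 := by
  have hIcc : {A ∈ V.powerset | T ⊆ A} = Icc T V := by
    ext A
    rw [mem_filter, mem_powerset, mem_Icc, and_comm]
  rw [hIcc]
  split_ifs with h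
  · have hdisj : ∀ B ∈ (V \ T).powerset, Disjoint T B := fun B hB =>
      disjoint_of_subset_right (mem_powerset.1 hB) disjoint_sdiff
    have hinj : Set.InjOn (T ∪ ·) (V \ T).powerset := fun B hB C hC hBC => by
      have hBC : T ∪ B = T ∪ C := hBC
      rw [← union_sdiff_cancel_left (hdisj B hB), hBC, union_sdiff_cancel_left (hdisj C hC)]
    rw [Icc_eq_image_powerset h, sum_image hinj, ← sum_powerset_sub_one_pow_card q (V \ T),
      mul_sum]
    exact sum_congr rfl fun B hB => by rw [card_union_of_disjoint (hdisj B hB), pow_add]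
  · rw [Icc_eq_empty h, sum_empty]

/-- The generating function, by number of horizontal steps in the variable `q - 1`, of the
Schröder paths lying strictly above `X` that arise from the Dyck path `D` from `(-2l, 0)` to
`(2r, 0)` by flattening valleys. -/
def liftWeight (q : 𝔸) (l r : ℕ) (X D : ℤ → ℤ) : 𝔸 :=
  ∑ A ∈ (turns l r 1 D).powerset with StrongLT X (bumpOn 1 A D), (q - 1) ^ #A

theorem sum_dyckHeights_liftWeight_mul (q : 𝔸) (X : ℤ → ℤ) {φ : (ℤ → ℤ) → 𝔸}
    (hφ : ∀ D ∈ dyckHeights l r, ∀ A ⊆ turns l r 1 D, φ (bumpOn 1 A D) = φ D) :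
    ∑ D ∈ dyckHeights l r, liftWeight q l r X D * φ D =
      ∑ g ∈ schroderHeights l r with StrongLT X g, (q - 1) ^ #(mids l r g) * φ g := by
  rw [sum_filter]
  simp only [← mul_ite_zero]
  rw [sum_schroderHeights_eq_sum_powerset_turns_one]
  refine sum_congr rfl fun D hD => ?_
  rw [liftWeight, sum_mul, sum_filter]
  refine sum_congr rfl fun A hA => ?_
  rw [hφ D hD A (mem_powerset.1 hA), mul_ite_zero]

theorem IsDyckHeight.sum_dyckHeights_liftWeight_mul_eq (hX : IsDyckHeight l r X) (q : 𝔸)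
    {φ : (ℤ → ℤ) → 𝔸} (hφ : ∀ D ∈ dyckHeights (l + 1) (r + 1), ∀ A ⊆ turns (l + 1) (r + 1) 1 D,
      φ (bumpOn 1 A D) = φ D) :
    ∑ D ∈ dyckHeights (l + 1) (r + 1), liftWeight q (l + 1) (r + 1) X D * φ D =
      ∑ D ∈ dyckHeights (l + 1) (r + 1) with StrongLT X D,
        ∑ A ∈ (turns (l + 1) (r + 1) (-1) D).powerset, (q - 1) ^ #A * φ (bumpOn (-1) A D) := by
  rw [sum_dyckHeights_liftWeight_mul q X hφ, sum_filter, sum_filter]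
  simp only [← mul_ite_zero]
  rw [sum_schroderHeights_eq_sum_dyckHeights (-1)]
  refine sum_congr rfl fun D hD => ?_
  have hD := mem_dyckHeights.1 hD
  simp only [hX.strongLT_bumpOn_neg_one_iff hD]
  split_ifs with hXD
  · rw [filter_true_of_mem fun x => hX.pos_of_mem_turns_neg_one hD hXD]
  · simp only [mul_zero, sum_const_zero]

theorem IsDyckHeight.sum_liftWeight (hX : IsDyckHeight l r X) (q : 𝔸) :
    ∑ D ∈ dyckHeights (l + 1) (r + 1), liftWeight q (l + 1) (r + 1) X D =
      q * ∑ D ∈ dyckHeights (l + 1) (r + 1),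
        aboveWeight (fun D => q ^ #(turns (l + 1) (r + 1) 1 D)) X D := by
  have h := hX.sum_dyckHeights_liftWeight_mul_eq q (φ := fun _ => 1) fun _ _ _ _ => rfl
  simp only [mul_one, sum_powerset_sub_one_pow_card] at h
  simp only [h, aboveWeight, ← sum_filter, mul_sum]
  refine sum_congr rfl fun D hD => ?_
  rw [(mem_dyckHeights.1 (mem_filter.1 hD).1).card_turns_neg_one, pow_succ']

-- Both sides vanish unless `D ≤ Y` and every contact is a peak of `D` and a valley of `Y`; the
-- peaks of `D` to be flattened on the left, and the valleys of `Y` on the right, are then exactly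
-- the sets containing all the contacts.
theorem IsDyckHeight.sum_powerset_aboveWeight_bumpOn_neg_one (hD : IsDyckHeight l r D)
    (hY : IsDyckHeight (l + 1) (r + 1) Y) (q : 𝔸) :
    ∑ A ∈ (turns l r (-1) D).powerset, (q - 1) ^ #A *
        aboveWeight (fun D => q ^ #(turns (l + 1) (r + 1) 1 D)) (bumpOn (-1) A D) Y =
      q * (q ^ #(turns l r 1 D) * liftWeight q (l + 1) (r + 1) D Y) := by
  simp only [aboveWeight, liftWeight, ← bumpOn_neg_one_strongLT_iff_strongLT_bumpOn_one,
    hD.bumpOn_neg_one_strongLT_iff hY, mul_ite_zero]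
  rw [← sum_filter, ← sum_mul]
  by_cases hDY : D ≤ Y
  · simp only [hDY, true_and, sum_powerset_filter_superset_sub_one_pow_card,
      hD.contacts_subset_turns_iff hY]
    split_ifs with hT
    · have hpeaks := card_sdiff_add_card_eq_card ((hD.contacts_subset_turns_iff hY).2 hT)
      have hvalleys := card_sdiff_add_card_eq_card hT
      rw [hD.card_turns_neg_one] at hpeaks
      rw [mul_assoc, ← pow_add, mul_left_comm (q ^ _), ← pow_add, mul_left_comm q, ← pow_succ']
      congr 2
      omega
    · simp only [zero_mul, mul_zero]
  · simp only [hDY, false_and, filter_false, sum_empty, zero_mul, mul_zero]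

theorem IsDyckHeight.sum_liftWeight_mul_aboveWeight (hX : IsDyckHeight l r X)
    (hY : IsDyckHeight (l + 2) (r + 2) Y) (q : 𝔸) :
    ∑ D ∈ dyckHeights (l + 1) (r + 1), liftWeight q (l + 1) (r + 1) X D *
        aboveWeight (fun D => q ^ #(turns (l + 2) (r + 2) 1 D)) D Y =
      q * ∑ D ∈ dyckHeights (l + 1) (r + 1),
        aboveWeight (fun D => q ^ #(turns (l + 1) (r + 1) 1 D)) X D *
          liftWeight q (l + 2) (r + 2) D Y := by
  rw [hX.sum_dyckHeights_liftWeight_mul_eq q fun D hD A hA =>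
    (mem_dyckHeights.1 hD).aboveWeight_bumpOn_one hY.1 hA _]
  rw [sum_filter, mul_sum]
  refine sum_congr rfl fun D hD => ?_
  rw [(mem_dyckHeights.1 hD).sum_powerset_aboveWeight_bumpOn_neg_one hY]
  by_cases hXD : StrongLT X D
  · rw [if_pos hXD, aboveWeight, if_pos hXD]
  · rw [if_neg hXD, aboveWeight, if_neg hXD, zero_mul, mul_zero]

end Commutation

/-! ### Nested families of paths -/

section Families

variable {𝔸 : Type*}

theorem forall_strictMono_iff_strongLT_succ {ι α : Type*} [Preorder α] {m : ℕ}
    {p : Fin (m + 1) → ι → α} :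
    (∀ x, StrictMono fun j => p j x) ↔ ∀ j : Fin m, StrongLT (p j.castSucc) (p j.succ) := by
  simp only [Fin.strictMono_iff_lt_succ]
  exact forall_comm

theorem sum_strictMono_prod_eq_sum_mul_transferSum [CommSemiring 𝔸] (s : ℕ → Finset (ℤ → ℤ))
    (w : ℕ → (ℤ → ℤ) → 𝔸) (m : ℕ) :
    ∑ p ∈ Fintype.piFinset (fun j : Fin (m + 1) => s j) with ∀ x, StrictMono fun j => p j x,
        ∏ j : Fin (m + 1), w j (p j) =
      ∑ X ∈ s 0, w 0 X * transferSum s (fun i => aboveWeight (w (i + 1))) m 0 X := by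
  rw [← sum_piFinset_mul_prod_eq_sum_mul_transferSum, sum_filter]
  simp only [zero_add, aboveWeight, Fintype.prod_ite_zero, forall_strictMono_iff_strongLT_succ,
    Fin.prod_univ_succ, mul_ite_zero, Fin.val_zero, Fin.val_succ]
  congr!

theorem transferSum_schroderHeights_bumpOn_one [CommSemiring 𝔸] (w : ℕ → (ℤ → ℤ) → 𝔸) (n m i : ℕ)
    {D : ℤ → ℤ} (hD : IsDyckHeight i (n + i) D) {A : Finset ℤ} (hA : A ⊆ turns i (n + i) 1 D) :
    transferSum (fun i => schroderHeights i (n + i)) (fun i => aboveWeight (w i)) m i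
        (bumpOn 1 A D) =
      transferSum (fun i => schroderHeights i (n + i)) (fun i => aboveWeight (w i)) m i D := by
  cases m with
  | zero => rfl
  | succ m =>
    exact sum_congr rfl fun Y hY => by
      beta_reduce
      rw [hD.aboveWeight_bumpOn_one (mem_schroderHeights.1 hY) hA]

theorem transferSum_schroderHeights_eq_transferSum_liftWeight [CommRing 𝔸] (q : 𝔸) (n m i : ℕ)
    (X : ℤ → ℤ) :
    transferSum (fun i => schroderHeights i (n + i))
        (fun i => aboveWeight fun g => (q - 1) ^ #(mids (i + 1) (n + (i + 1)) g)) m i X =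
      transferSum (fun i => dyckHeights i (n + i))
        (fun i => liftWeight q (i + 1) (n + (i + 1))) m i X := by
  induction m generalizing i X with
  | zero => rfl
  | succ m ih =>
    simp only [transferSum, ← ih]
    rw [sum_dyckHeights_liftWeight_mul q X fun D hD A hA =>
      transferSum_schroderHeights_bumpOn_one _ n m (i + 1) (mem_dyckHeights.1 hD) hA, sum_filter]
    simp only [aboveWeight, ite_mul, zero_mul]

theorem transferSum_liftWeight_eq_pow_choose_mul [CommRing 𝔸] (q : 𝔸) (n m i : ℕ) {X : ℤ → ℤ}
    (hX : X ∈ dyckHeights i (n + i)) :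
    transferSum (fun i => dyckHeights i (n + i))
        (fun i => liftWeight q (i + 1) (n + (i + 1))) m i X =
      q ^ (m + 1).choose 2 * transferSum (fun i => dyckHeights i (n + i))
        (fun i => aboveWeight fun D => q ^ #(turns (i + 1) (n + (i + 1)) 1 D)) m i X :=
  transferSum_eq_pow_choose_mul_transferSum (s := fun i => dyckHeights i (n + i))
    (fun _ _ hX => (mem_dyckHeights.1 hX).sum_liftWeight q)
    (fun _ _ hX _ hY =>
      (mem_dyckHeights.1 hX).sum_liftWeight_mul_aboveWeight (mem_dyckHeights.1 hY) q) m i hX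

theorem sum_schroderHeights_eq_pow_choose_mul_sum_dyckHeights [CommRing 𝔸] (q : 𝔸) (n k : ℕ) :
    ∑ p ∈ Fintype.piFinset (fun j : Fin k => schroderHeights j (n + j))
        with ∀ x, StrictMono fun j => p j x, ∏ j : Fin k, (q - 1) ^ #(mids j (n + j) (p j)) =
      q ^ k.choose 2 * ∑ p ∈ Fintype.piFinset (fun j : Fin k => dyckHeights j (n + j))
        with ∀ x, StrictMono fun j => p j x, ∏ j : Fin k, q ^ #(turns j (n + j) 1 (p j)) := by
  cases k with
  | zero => simp [StrictMono]
  | succ m =>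
    rw [sum_strictMono_prod_eq_sum_mul_transferSum (fun j => schroderHeights j (n + j))
        (fun j g => (q - 1) ^ #(mids j (n + j) g)),
      sum_strictMono_prod_eq_sum_mul_transferSum (fun j => dyckHeights j (n + j))
        (fun j D => q ^ #(turns j (n + j) 1 D)),
      sum_schroderHeights_eq_sum_powerset_turns_one, mul_sum]
    refine sum_congr rfl fun D hD => ?_
    rw [mul_left_comm, ← transferSum_liftWeight_eq_pow_choose_mul q n m 0 hD,
      ← transferSum_schroderHeights_eq_transferSum_liftWeight, ← sum_powerset_sub_one_pow_card,
      sum_mul]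
    exact sum_congr rfl fun A hA => by
      rw [transferSum_schroderHeights_bumpOn_one _ n m 0 (mem_dyckHeights.1 hD)
        (mem_powerset.1 hA)]

end Families

/-! ### From nested families to tuples of step sequences -/

section Tuples

theorem IsDyck.pathLT_iff_strongLT {l r m L₁ L₂ : ℕ} (hm : m = l + r) (hL₁ : L₁ = 2 * (l + r))
    (hL₂ : L₂ = 2 * (l + 1 + (r + 1))) {s₁ : Fin L₁ → Bool} {s₂ : Fin L₂ → Bool}
    (h₁ : IsDyck s₁) (h₂ : IsDyck s₂) :
    PathLT m (m + 2) s₁ s₂ ↔ StrongLT (pathHeight l s₁) (pathHeight (l + 1) s₂) := by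
  have haht : ∀ x ∈ Icc (-(m : ℤ)) m,
      aht m s₁ x = pathHeight l s₁ (x + r - l) ∧
        aht (m + 2) s₂ x = pathHeight (l + 1) s₂ (x + r - l) := by
    intro x hx
    rw [mem_Icc] at hx
    constructor <;> rw [pathHeight, if_neg (by omega), if_pos (by omega), aht] <;> congr 1 <;>
      omega
  refine ⟨fun h x => ?_, fun h x hx => ?_⟩
  · by_cases hx : x ∈ Icc (-2 * (l : ℤ)) (2 * r)
    · rw [mem_Icc] at hx
      have hx' : x - r + l ∈ Icc (-(m : ℤ)) m := mem_Icc.2 (by omega)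
      have := h _ hx'
      rwa [(haht _ hx').1, (haht _ hx').2, show x - r + l + r - l = x by ring] at this
    · exact (h₁.isDyckHeight_pathHeight hL₁).1.lt_of_notMem_Icc
        (h₂.isDyckHeight_pathHeight hL₂).1 hx
  · rw [(haht x hx).1, (haht x hx).2]
    exact h _

theorem mem_strictTuples_iff {n k : ℕ} {D : DyckTuple n k} :
    D ∈ strictTuples n k ↔
      (∀ i, IsDyck (D i)) ∧ ∀ x, StrictMono fun i : Fin k => pathHeight i (D i) x := by
  rw [strictTuples, mem_filter, and_iff_right (mem_univ D)]
  refine and_congr_right fun hD => ?_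
  have hlt : ∀ (i : ℕ) (h : i + 1 < k),
      PathLT (n + 2 * i) (n + 2 * (i + 1)) (D ⟨i, by omega⟩) (D ⟨i + 1, h⟩) ↔
        StrongLT (pathHeight i (D ⟨i, by omega⟩)) (pathHeight (i + 1) (D ⟨i + 1, h⟩)) :=
    fun i h => IsDyck.pathLT_iff_strongLT (r := n + i) (by ring) (by ring) (by ring) (hD _) (hD _)
  cases k with
  | zero => simp [StrictMono]
  | succ m =>
    rw [forall_strictMono_iff_strongLT_succ (p := fun i => pathHeight i (D i)), Fin.forall_iff]
    exact forall_congr' fun i =>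
      ⟨fun h hi => (hlt i _).1 (h _), fun h hi => (hlt i hi).2 (h (by omega))⟩

theorem sum_dyckHeights_eq_sum_strictTuples {𝔸 : Type*} [CommSemiring 𝔸] (q : 𝔸) (n k : ℕ) :
    ∑ p ∈ Fintype.piFinset (fun j : Fin k => dyckHeights j (n + j))
        with ∀ x, StrictMono fun j => p j x, ∏ j : Fin k, q ^ #(turns j (n + j) 1 (p j)) =
      ∑ D ∈ strictTuples n k, q ^ ∑ i : Fin k, #(valleys (D i)) := by
  have hL : ∀ j : Fin k, 2 * (n + 2 * (j : ℕ)) = 2 * (j + (n + j)) := fun j => by ring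
  have himage : Fintype.piFinset (fun j : Fin k => dyckHeights j (n + j)) =
      (Fintype.piFinset fun j : Fin k => dyckPaths (2 * (n + 2 * (j : ℕ)))).image
        fun (D : DyckTuple n k) (j : Fin k) => pathHeight j (D j) := by
    simp only [fun j => dyckHeights_eq_image (hL j), Fintype.piFinset_image]
  have hinj : Function.Injective fun (D : DyckTuple n k) (j : Fin k) => pathHeight j (D j) :=
    fun D D' h => funext fun j => pathHeight_injective j (congrFun h j)
  have hfilter : strictTuples n k = (Fintype.piFinset fun j : Fin k =>
      dyckPaths (2 * (n + 2 * (j : ℕ)))).filter fun D : DyckTuple n k =>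
        ∀ x, StrictMono fun i : Fin k => pathHeight i (D i) x := by
    ext D
    simp only [mem_strictTuples_iff, mem_filter, Fintype.mem_piFinset, mem_dyckPaths]
  rw [himage, filter_image, sum_image hinj.injOn, hfilter]
  refine sum_congr rfl fun D hD => ?_
  rw [mem_filter, Fintype.mem_piFinset] at hD
  rw [← prod_pow_eq_pow_sum]
  exact prod_congr rfl fun j _ => by rw [(mem_dyckPaths.1 (hD.1 j)).card_turns_one (hL j)]

end Tuples

/-! ### Non-intersecting Schröder paths -/

section SchroderDeterminant

variable {l r l' r' : ℕ} {g h : ℤ → ℤ}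

theorem IsSchroderHeight.flat_piecewise (hg : IsSchroderHeight l r g)
    (hh : IsSchroderHeight l' r' h) {a x : ℤ} (ha : g a = h a)
    (hx : IsMid ((Set.Iic a).piecewise g h) x) :
    (Set.Iic a).piecewise g h (x - 1) = (Set.Iic a).piecewise g h x ∧
      (Set.Iic a).piecewise g h (x + 1) = (Set.Iic a).piecewise g h x ∧
        0 < (Set.Iic a).piecewise g h x := by
  have hp : ∀ x, (Set.Iic a).piecewise g h x = if x ≤ a then g x else h x := fun _ => rfl
  have hgx := hg.mid x
  have hhx := hh.mid x
  simp only [IsMid, hp] at hgx hhx hx ⊢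
  rcases lt_trichotomy x a with hxa | rfl | hxa
  · rw [if_pos hxa.le] at hx
    rw [if_pos hxa.le, if_pos (by omega), if_pos (by omega)]
    exact hgx hx
  · rw [if_pos le_rfl] at hx
    rw [if_pos le_rfl, if_pos (by omega), if_neg (by omega)]
    omega
  · rw [if_neg hxa.not_ge] at hx
    rw [if_neg hxa.not_ge, if_neg (by omega : ¬ x + 1 ≤ a)]
    split_ifs with hxa'
    · obtain rfl : a = x - 1 := by omega
      rw [ha]
      exact hhx hx
    · exact hhx hx

theorem IsSchroderHeight.piecewise (hg : IsSchroderHeight l r g) (hh : IsSchroderHeight l' r' h)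
    {a : ℤ} (ha : g a = h a) : IsSchroderHeight l r' ((Set.Iic a).piecewise g h) := by
  have hp : ∀ x, (Set.Iic a).piecewise g h x = if x ≤ a then g x else h x := fun _ => rfl
  have hgl := hg.left a
  have hgr := hg.right a
  have hg0 := hg.nonneg a
  have hhl := hh.left a
  have hhr := hh.right a
  have hh0 := hh.nonneg a
  refine ⟨fun x hx => ?_, fun x hx => ?_, fun x hx hx' => ?_, fun x => ?_,
    fun x => hg.flat_piecewise hh ha⟩
  · have := hg.left x
    have := hh.left x
    rw [hp]
    split_ifs <;> omega
  · have := hg.right x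
    have := hh.right x
    rw [hp]
    split_ifs with hxa
    · rcases hxa.lt_or_eq with hxa | rfl <;> omega
    · omega
  · have := hg.nonneg x
    have := hh.nonneg x
    have := hg.right x
    have := hh.left x
    rw [hp]
    split_ifs <;> omega
  · have := hg.step x
    have := hh.step x
    rw [hp, hp]
    rcases eq_or_ne x a with rfl | hxa
    · rw [if_pos le_rfl, if_neg (by omega)]
      omega
    · split_ifs <;> omega

theorem IsSchroderHeight.strongLT_of_ne (hg : IsSchroderHeight l r g)
    (hh : IsSchroderHeight l' r' h) (hl : l < l') (hne : ∀ x, g x ≠ h x) : StrongLT g h := by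
  intro x
  change g x < h x
  rcases le_total x (-2 * l') with hx | hx
  · rw [hg.left x (by omega), hh.left x hx]
    omega
  · induction x, hx using Int.leInduction with
    | base =>
      rw [hg.left _ (by omega), hh.left _ le_rfl]
      omega
    | succ x _ ih =>
      have := hg.step x
      have := hh.step x
      have := hg.mid x
      have := hh.mid x
      have := hne (x + 1)
      simp only [IsMid] at *
      omega

theorem IsSchroderHeight.prod_ite_eq_pow_card_mids {𝔸 : Type*} [CommMonoid 𝔸]
    (hg : IsSchroderHeight l r g) {I : Finset ℤ} (hI : mids l r g ⊆ I) (c : 𝔸) :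
    ∏ x ∈ I, (if (g x + x) % 2 = 1 then c else 1) = c ^ #(mids l r g) := by
  rw [prod_ite, prod_const_one, mul_one, prod_const]
  congr 2
  ext x
  rw [mem_filter, hg.mem_mids_iff, IsMid, and_iff_right_iff_imp]
  exact fun hx => hI ((hg.mem_mids_iff x).2 hx)

variable {n k : ℕ}

theorem strictMono_of_forall_injective {σ : Fin k → Fin k} {p : Fin k → ℤ → ℤ}
    (hp : ∀ i : Fin k, IsSchroderHeight i (n + σ i) (p i))
    (hinj : ∀ x, Function.Injective fun i => p i x) (x : ℤ) : StrictMono fun i => p i x :=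
  fun i j hij => (hp i).strongLT_of_ne (hp j) hij (fun y e => hij.ne (hinj y e)) x

theorem perm_eq_one_of_forall_injective {σ : Equiv.Perm (Fin k)} {p : Fin k → ℤ → ℤ}
    (hp : ∀ i : Fin k, IsSchroderHeight i (n + σ i) (p i))
    (hinj : ∀ x, Function.Injective fun i => p i x) : σ = 1 := by
  refine σ.monotone_iff.1 (StrictMono.monotone fun i j hij => ?_)
  have h : p i (2 * (n + k)) < p j (2 * (n + k)) :=
    strictMono_of_forall_injective hp hinj _ hij
  have hi := (hp i).right (2 * (n + k)) (by omega)
  have hj := (hp j).right (2 * (n + k)) (by omega)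
  rw [Fin.lt_def]
  omega

theorem det_sum_schroderHeights_sub_one_pow_card_mids {𝔸 : Type*} [CommRing 𝔸] (q : 𝔸)
    (n k : ℕ) :
    (Matrix.of fun i j : Fin k =>
        ∑ g ∈ schroderHeights i (n + j), (q - 1) ^ #(mids i (n + j) g)).det =
      ∑ p ∈ Fintype.piFinset (fun j : Fin k => schroderHeights j (n + j))
        with ∀ x, StrictMono fun j => p j x, ∏ j : Fin k, (q - 1) ^ #(mids j (n + j) (p j)) := by
  let I : Finset ℤ := Icc (-2 * (k : ℤ)) (2 * (n + k))
  let w : ℤ → ℤ → 𝔸 := fun x y => if (y + x) % 2 = 1 then q - 1 else 1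
  have hw : ∀ i j : Fin k, ∀ g ∈ schroderHeights i (n + j),
      ∏ x ∈ I, w x (g x) = (q - 1) ^ #(mids i (n + j) g) := fun i j g hg =>
    (mem_schroderHeights.1 hg).prod_ite_eq_pow_card_mids
      ((filter_subset _ _).trans (Icc_subset_Icc (by omega) (by push_cast; omega))) _
  have hstart : ∀ i i' j j' : Fin k, i ≠ i' → ∀ g ∈ schroderHeights i (n + j),
      ∀ h ∈ schroderHeights i' (n + j'), ∀ x ≤ -2 * (k : ℤ), g x ≠ h x := by
    intro i i' j j' hi g hg h hh x hx
    rw [(mem_schroderHeights.1 hg).left x (by omega), (mem_schroderHeights.1 hh).left x (by omega)]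
    omega
  have hLGV := det_sum_prod_eq_sum_injective hstart
    (fun i i' j j' g hg h hh x hx => mem_schroderHeights.2
      ((mem_schroderHeights.1 hg).piecewise (mem_schroderHeights.1 hh) hx))
    (fun σ p hp => perm_eq_one_of_forall_injective fun i => mem_schroderHeights.1 (hp i)) I w
  simp only [fun i j => sum_congr rfl (hw i j)] at hLGV
  rw [hLGV]
  refine sum_congr (filter_congr fun p hp => ?_) fun p hp => prod_congr rfl fun j _ => ?_
  · rw [Fintype.mem_piFinset] at hp
    exact ⟨strictMono_of_forall_injective (σ := id) fun i => mem_schroderHeights.1 (hp i),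
      fun h x => (h x).injective⟩
  · exact hw j j _ (Fintype.mem_piFinset.1 (mem_filter.1 hp).1 j)

end SchroderDeterminant

theorem statement_14_general {𝔸 : Type*} [CommRing 𝔸] (q : 𝔸) (n k : ℕ) :
    (Matrix.of fun i j : Fin k =>
        ∑ s ∈ dyckPaths (2 * (n + (i : ℕ) + (j : ℕ))), q ^ (valleys s).card).det =
      q ^ (k * (k - 1) / 2) * ∑ D ∈ strictTuples n k, q ^ (∑ i : Fin k, (valleys (D i)).card) := by
  have hentry : ∀ i j : Fin k, ∑ s ∈ dyckPaths (2 * (n + (i : ℕ) + (j : ℕ))), q ^ #(valleys s) =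
      ∑ g ∈ schroderHeights i (n + j), (q - 1) ^ #(mids i (n + j) g) := fun i j =>
    (sum_schroderHeights_sub_one_pow_card_mids q (by ring)).symm
  simp only [hentry]
  rw [det_sum_schroderHeights_sub_one_pow_card_mids,
    sum_schroderHeights_eq_pow_choose_mul_sum_dyckHeights, sum_dyckHeights_eq_sum_strictTuples,
    Nat.choose_two_right]

theorem statement_14 (n k : ℕ) (hn : 0 < n) (hk : 0 < k) :
    (Matrix.of fun i j : Fin k =>
        ∑ s ∈ dyckPaths (2 * (n + (i : ℕ) + (j : ℕ))),
          (Polynomial.X : Polynomial ℤ) ^ (valleys s).card).det =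
      Polynomial.X ^ (k * (k - 1) / 2) *
        ∑ D ∈ strictTuples n k,
          (Polynomial.X : Polynomial ℤ) ^ (∑ i : Fin k, (valleys (D i)).card) :=
  statement_14_general Polynomial.X n k

end Paper
end
end

section
/- For all positive integers n and k, the number of pleasant diagrams of the skew staircase shape δ_{n+2k}/δ_n satisfies p(δ_{n+2k}/δ_n) = 2^{k(k−1)/2} · det(𝔰_{n−2+i+j})_{i,j=1}^k, where 𝔰_m = p(δ_{m+2}/δ_m) is the number of pleasant diagrams of δ_{m+2}/δ_m. -/
open Finset

attribute [local instance 10] Classical.propDecidable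

noncomputable section

namespace Paper

/-!
An excited diagram of `δ_{n+2k}/δ_n` moves every cell of `δ_n` at most `k` steps along its
diagonal, and the numbers of steps, extended by `k`, form an array `π` that increases along rows and
columns. The pleasant diagrams split into intervals `[J π, λ ∖ D π]` of finite sets, where `J π`
consists of the positions other than its final one at which a single cell can stop while all other
cells stay where `π` puts them. Their number is therefore a power of `2` times the generating
function of the arrays at `q = 1/2` by the statistic
`∑ c, (π c - max (π left of c) (π above c))`.

Reflecting the entries of one antidiagonal between their neighbours shows that this statistic is
equidistributed with the alternating sum `∑ c, ± π c` along the antidiagonals. The level sets of `π`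
are bounded by `k` nonintersecting Dyck paths, and the alternating sum counts the down-steps at even
times. The lemma of Lindström, Gessel and Viennot and the three-term recurrence for weighted
paths turn the sum over these families into a Hankel determinant of sums over single paths, which by
the case `k = 1` are the numbers `𝔰_m` up to a power of `2`.
-/

/-! ### Adjacent minima and maxima -/

/-- The minima of adjacent entries: the pointwise largest sequence that fits below `a` in an
array whose next antidiagonal is `a`. -/
def minAdj {m : ℕ} (a : Fin (m + 1) → ℕ) : Fin m → ℕ :=
  fun j => min (a j.castSucc) (a j.succ)

/-- The maxima of adjacent entries, after padding with a zero on both sides: the pointwise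
smallest sequence that fits above `b` in an array. -/
def maxAdj {m : ℕ} (b : Fin m → ℕ) : Fin (m + 1) → ℕ :=
  fun j => max ((Fin.snoc b 0 : Fin (m + 1) → ℕ) j) ((Fin.cons 0 b : Fin (m + 1) → ℕ) j)

lemma le_minAdj_iff {m : ℕ} {a : Fin (m + 1) → ℕ} {b : Fin m → ℕ} :
    b ≤ minAdj a ↔ maxAdj b ≤ a := by
  simp only [Pi.le_def, minAdj, maxAdj, le_min_iff, max_le_iff, forall_and]
  refine and_congr ?_ ?_
  · rw [Fin.forall_fin_succ' (P := fun j => (Fin.snoc b 0 : Fin (m + 1) → ℕ) j ≤ a j)]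
    simp
  · rw [Fin.forall_fin_succ (P := fun j => (Fin.cons 0 b : Fin (m + 1) → ℕ) j ≤ a j)]
    simp

lemma sum_maxAdj_add_sum_minAdj {m : ℕ} (b : Fin (m + 1) → ℕ) :
    ∑ j, maxAdj b j + ∑ j, minAdj b j = 2 * ∑ j, b j := by
  have hmax : ∑ j, maxAdj b j =
      b 0 + (∑ j : Fin m, max (b j.succ) (b j.castSucc) + b (Fin.last m)) := by
    rw [Fin.sum_univ_succ, Fin.sum_univ_castSucc]
    congr 1
    · simp [maxAdj, Fin.snoc]
    congr 1
    · refine sum_congr rfl fun j _ => ?_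
      rw [maxAdj, Fin.cons_succ, ← Fin.castSucc_succ, Fin.snoc_castSucc]
    · simp only [maxAdj, Fin.succ_last, Fin.snoc_last]
      simp [← Fin.succ_last]
  have hadd : ∑ j : Fin m, max (b j.succ) (b j.castSucc) + ∑ j, minAdj b j =
      ∑ j : Fin m, b j.succ + ∑ j : Fin m, b j.castSucc := by
    rw [← sum_add_distrib, ← sum_add_distrib]
    exact sum_congr rfl fun j _ => by rw [minAdj, min_comm, max_add_min]
  have hfirst := Fin.sum_univ_succ b
  have hlast := Fin.sum_univ_castSucc b
  omega

/-! ### Toggling -/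

lemma sum_Icc_reflect {ι M : Type*} [Fintype ι] [DecidableEq ι] [AddCommMonoid M] (v u : ι → ℕ)
    (f : (ι → ℕ) → M) : ∑ a ∈ Icc v u, f a = ∑ a ∈ Icc v u, f (u + v - a) := by
  have hmem : ∀ a ∈ Icc v u, u + v - a ∈ Icc v u := by
    intro a ha
    rw [mem_Icc] at ha ⊢
    refine ⟨fun j => ?_, fun j => ?_⟩ <;>
      · have hv : v j ≤ a j := ha.1 j
        have hu : a j ≤ u j := ha.2 j
        simp only [Pi.sub_apply, Pi.add_apply]
        omega
  have hinv : ∀ a ∈ Icc v u, u + v - (u + v - a) = a := by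
    intro a ha
    ext j
    have hu : a j ≤ u j := (mem_Icc.1 ha).2 j
    simp only [Pi.sub_apply, Pi.add_apply]
    omega
  exact sum_nbij' (u + v - ·) (u + v - ·) hmem hmem hinv hinv fun a ha => by
    simp only [hinv a ha]

section Toggling

variable {K : Type*} [Field K] {q : K}

lemma sum_Icc_pow_sum {ι : Type*} [Fintype ι] [DecidableEq ι] (hq : q ≠ 0) (v u : ι → ℕ) :
    ∑ a ∈ Icc v u, q ^ ∑ j, a j =
      q ^ (∑ j, u j + ∑ j, v j) * ∑ a ∈ Icc v u, q⁻¹ ^ ∑ j, a j := by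
  rw [sum_Icc_reflect, mul_sum]
  refine sum_congr rfl fun a ha => ?_
  have hsum : ∑ j, (u + v - a) j + ∑ j, a j = ∑ j, u j + ∑ j, v j := by
    rw [← sum_add_distrib, ← sum_add_distrib]
    refine sum_congr rfl fun j _ => Nat.sub_add_cancel ?_
    exact ((mem_Icc.1 ha).2 j).trans (Nat.le_add_right _ _)
  rw [← hsum, pow_add, mul_assoc, ← mul_pow, mul_inv_cancel₀ hq, one_pow, mul_one]

/-- The generating function of the arrays of `N` antidiagonals whose next antidiagonal is `b`,
where the antidiagonals carry the weights `q, q⁻¹, q, …` from the last one on. -/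
def altGF : (N : ℕ) → K → (Fin (N + 1) → ℕ) → K
  | 0, _, _ => 1
  | N + 1, q, b => ∑ a ∈ Iic (minAdj b), q ^ (∑ j, a j) * altGF N q⁻¹ a

lemma altGF_succ_succ (N : ℕ) (q : K) (b : Fin (N + 3) → ℕ) :
    altGF (N + 2) q b = ∑ c ∈ Iic (minAdj (minAdj b)),
      (∑ a ∈ Icc (maxAdj c) (minAdj b), q ^ ∑ j, a j) * (q⁻¹ ^ (∑ j, c j) * altGF N q c) := by
  simp only [altGF, inv_inv, mul_sum, sum_mul]
  refine sum_comm' fun a c => ?_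
  have hmono : Monotone (minAdj : (Fin (N + 2) → ℕ) → _) := fun _ _ h j =>
    min_le_min (h _) (h _)
  simp only [mem_Iic, mem_Icc, ← le_minAdj_iff]
  exact ⟨fun h => ⟨⟨h.2, h.1⟩, h.2.trans (hmono h.1)⟩, fun h => ⟨h.1.2, h.1.1⟩⟩

/- Reflecting every second antidiagonal, the last one included, between its neighbours inverts
the weight. -/
lemma altGF_eq_pow_mul_altGF_inv (hq : q ≠ 0) (N : ℕ) (b : Fin (N + 1) → ℕ) :
    altGF N q b = q ^ (∑ j, minAdj b j) * altGF N q⁻¹ b := by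
  induction N using Nat.twoStepInduction with
  | zero => simp [altGF]
  | one =>
    have hIcc : Icc ⊥ (minAdj b) = Iic (minAdj b) := Finset.Icc_bot
    simpa [altGF, hIcc] using sum_Icc_pow_sum hq ⊥ (minAdj b)
  | more N ih _ =>
    rw [altGF_succ_succ, altGF_succ_succ, mul_sum]
    refine sum_congr rfl fun c _ => ?_
    have hpow : q ^ (∑ j, maxAdj c j) * q ^ (∑ j, minAdj c j) * q⁻¹ ^ (∑ j, c j) =
        q ^ (∑ j, c j) := by
      rw [← pow_add, sum_maxAdj_add_sum_minAdj, two_mul, pow_add, mul_assoc, ← mul_pow,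
        mul_inv_cancel₀ hq, one_pow, mul_one]
    rw [sum_Icc_pow_sum hq, ih c, inv_inv, ← hpow, pow_add]
    ring

end Toggling

/-! ### Staircase arrays -/

/-- The cells `(i, j)` with `i + j < N`, in coordinates starting from `0`. -/
def triCells (N : ℕ) : Finset (ℕ × ℕ) := {c ∈ range N ×ˢ range N | c.1 + c.2 < N}

@[simp]
lemma mem_triCells {N : ℕ} {c : ℕ × ℕ} : c ∈ triCells N ↔ c.1 + c.2 < N := by
  simp only [triCells, mem_filter, mem_product, mem_range]
  omega

@[simp]
lemma triCells_zero : triCells 0 = ∅ := rfl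

lemma triCells_succ (N : ℕ) : triCells (N + 1) = triCells N ∪ antidiagonal N := by
  ext c
  simp only [mem_triCells, mem_union, HasAntidiagonal.mem_antidiagonal]
  omega

/-- The entries of an array on the antidiagonal `i + j = m`, indexed by `i`. -/
def diag {α : Type*} (m : ℕ) (π : ℕ × ℕ → α) (i : Fin (m + 1)) : α := π (i, m - i)

lemma diag_eq_iff {α : Type*} {m : ℕ} {π : ℕ × ℕ → α} {a : Fin (m + 1) → α} :
    diag m π = a ↔ ∀ c (h : c.1 + c.2 = m), π c = a ⟨c.1, by omega⟩ := by
  constructor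
  · rintro rfl ⟨i, j⟩ h
    exact congrArg π (Prod.ext rfl (by dsimp only at h ⊢; omega))
  · exact fun h => funext fun i => h _ (by dsimp only; omega)

lemma sum_triCells_succ {M : Type*} [AddCommMonoid M] (N : ℕ) (g : ℕ × ℕ → M) :
    ∑ c ∈ triCells (N + 1), g c = ∑ c ∈ triCells N, g c + ∑ i, diag N g i := by
  rw [triCells_succ, sum_union, Finset.Nat.sum_antidiagonal_eq_sum_range_succ_mk,
    ← Fin.sum_univ_eq_sum_range (fun i => g (i, N - i))]
  · rfl
  · simp only [disjoint_left, mem_triCells, HasAntidiagonal.mem_antidiagonal]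
    omega

lemma diag_le_minAdj_diag_iff {N : ℕ} {π f : ℕ × ℕ → ℕ} :
    diag N π ≤ minAdj (diag (N + 1) f) ↔
      ∀ i j, i + j = N → π (i, j) ≤ f (i, j + 1) ∧ π (i, j) ≤ f (i + 1, j) := by
  simp only [Pi.le_def, minAdj, le_min_iff, diag, Fin.val_castSucc, Fin.val_succ,
    Nat.add_sub_add_right]
  constructor
  · rintro h i j rfl
    simpa [Nat.add_assoc] using h ⟨i, by omega⟩
  · intro h i
    have hi : (i : ℕ) ≤ N := Nat.lt_succ_iff.1 i.2
    simpa [Nat.succ_sub hi] using h i (N - i) (by omega)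

/-- Replaces the antidiagonal `i + j = m` of an array by `a`. -/
def setDiag {α : Type*} (m : ℕ) (a : Fin (m + 1) → α) (f : ℕ × ℕ → α) (c : ℕ × ℕ) : α :=
  if h : c.1 + c.2 = m then a ⟨c.1, by omega⟩ else f c

lemma diag_setDiag {α : Type*} {m : ℕ} (a : Fin (m + 1) → α) (f : ℕ × ℕ → α) :
    diag m (setDiag m a f) = a :=
  diag_eq_iff.2 fun _ h => dif_pos h

/-- The arrays that increase weakly in both directions up to the antidiagonal `i + j = N`, and
agree with the boundary values `f` from there on. -/
structure IsStair (N : ℕ) (f π : ℕ × ℕ → ℕ) : Prop where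
  le_right : ∀ i j, i + j < N → π (i, j) ≤ π (i, j + 1)
  le_down : ∀ i j, i + j < N → π (i, j) ≤ π (i + 1, j)
  eq_boundary : ∀ c, N ≤ c.1 + c.2 → π c = f c

namespace IsStair

variable {N : ℕ} {f π : ℕ × ℕ → ℕ}

lemma diag_eq (h : IsStair N f π) : diag N π = diag N f :=
  funext fun i => h.eq_boundary _ (by dsimp only; omega)

lemma le_of_le (h : IsStair N f π) {c d : ℕ × ℕ} (hcd : c ≤ d) (hd : d.1 + d.2 ≤ N) :
    π c ≤ π d := by
  obtain ⟨⟨i, j⟩, ⟨i', j'⟩⟩ := c, d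
  obtain ⟨⟨a, rfl⟩, ⟨b, rfl⟩⟩ := And.imp Nat.exists_eq_add_of_le Nat.exists_eq_add_of_le hcd
  have hrow : ∀ a, i + a + j ≤ N → π (i, j) ≤ π (i + a, j) := by
    intro a ha
    induction a with
    | zero => rfl
    | succ a ih => exact (ih (by omega)).trans (h.le_down (i + a) j (by omega))
  have hcol : ∀ b, i + a + (j + b) ≤ N → π (i + a, j) ≤ π (i + a, j + b) := by
    intro b hb
    induction b with
    | zero => rfl
    | succ b ih => exact (ih (by omega)).trans (h.le_right (i + a) (j + b) (by omega))
  exact (hrow a (by dsimp only at hd; omega)).trans (hcol b hd)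

end IsStair

/-- The finite set of the arrays `π` with `IsStair N f π`. -/
def stair : ℕ → (ℕ × ℕ → ℕ) → Finset (ℕ × ℕ → ℕ)
  | 0, f => {f}
  | N + 1, f => (Iic (minAdj (diag (N + 1) f))).biUnion fun a => stair N (setDiag N a f)

lemma isStair_succ_iff {N : ℕ} {f π : ℕ × ℕ → ℕ} :
    IsStair (N + 1) f π ↔
      diag N π ≤ minAdj (diag (N + 1) f) ∧ IsStair N (setDiag N (diag N π) f) π := by
  rw [diag_le_minAdj_diag_iff]
  constructor
  · intro h
    refine ⟨fun i j hij => ?_, fun i j hij => h.le_right i j (by omega),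
      fun i j hij => h.le_down i j (by omega), fun c hc => ?_⟩
    · rw [← h.eq_boundary (i, j + 1) (by dsimp only; omega),
        ← h.eq_boundary (i + 1, j) (by dsimp only; omega)]
      exact ⟨h.le_right i j (by omega), h.le_down i j (by omega)⟩
    · rw [setDiag]
      split_ifs with hcN
      exacts [diag_eq_iff.1 rfl c hcN, h.eq_boundary c (by omega)]
  · rintro ⟨hle, h⟩
    have hnext : ∀ c : ℕ × ℕ, N < c.1 + c.2 → π c = f c := fun c hc => by
      rw [h.eq_boundary c hc.le, setDiag, dif_neg hc.ne']
    refine ⟨fun i j hij => ?_, fun i j hij => ?_, hnext⟩ <;>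
      rcases (Nat.lt_succ_iff.1 hij).lt_or_eq with hlt | heq
    · exact h.le_right i j hlt
    · exact (hle i j heq).1.trans_eq (hnext _ (by dsimp only; omega)).symm
    · exact h.le_down i j hlt
    · exact (hle i j heq).2.trans_eq (hnext _ (by dsimp only; omega)).symm

lemma diag_eq_of_isStair_setDiag {N : ℕ} {a : Fin (N + 1) → ℕ} {f π : ℕ × ℕ → ℕ}
    (h : IsStair N (setDiag N a f) π) : diag N π = a :=
  h.diag_eq.trans (diag_setDiag a f)

lemma mem_stair {N : ℕ} {f π : ℕ × ℕ → ℕ} : π ∈ stair N f ↔ IsStair N f π := by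
  induction N generalizing f with
  | zero =>
    rw [stair, mem_singleton]
    constructor
    · rintro rfl
      exact ⟨fun i j h => by omega, fun i j h => by omega, fun c _ => rfl⟩
    · exact fun h => funext fun c => h.eq_boundary c (Nat.zero_le _)
  | succ N ih =>
    simp only [stair, mem_biUnion, mem_Iic, ih, isStair_succ_iff]
    constructor
    · rintro ⟨a, ha, h⟩
      rw [diag_eq_of_isStair_setDiag h]
      exact ⟨ha, h⟩
    · exact fun h => ⟨_, h⟩

lemma sum_stair_succ {M : Type*} [AddCommMonoid M] (N : ℕ) (f : ℕ × ℕ → ℕ)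
    (F : (ℕ × ℕ → ℕ) → M) :
    ∑ π ∈ stair (N + 1) f, F π =
      ∑ a ∈ Iic (minAdj (diag (N + 1) f)), ∑ π ∈ stair N (setDiag N a f), F π := by
  refine sum_biUnion fun a _ b _ hab => disjoint_left.2 fun π ha hb => hab ?_
  rw [← diag_eq_of_isStair_setDiag (mem_stair.1 ha), diag_eq_of_isStair_setDiag (mem_stair.1 hb)]

lemma isStair_const_iff {N k : ℕ} {π : ℕ × ℕ → ℕ} :
    IsStair N (fun _ => k) π ↔ Monotone π ∧ ∀ c, N ≤ c.1 + c.2 → π c = k := by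
  constructor
  · intro h
    refine ⟨monotone_prod_iff.2 ⟨fun i => monotone_nat_of_le_succ fun j => ?_,
      fun j => monotone_nat_of_le_succ fun i => ?_⟩, h.eq_boundary⟩
    · rcases lt_or_ge (i + j) N with hij | hij
      · exact h.le_right i j hij
      · rw [h.eq_boundary _ hij, h.eq_boundary _ (hij.trans (by dsimp only; omega))]
    · rcases lt_or_ge (i + j) N with hij | hij
      · exact h.le_down i j hij
      · rw [h.eq_boundary _ hij, h.eq_boundary _ (hij.trans (by dsimp only; omega))]
  · rintro ⟨hmono, hbdry⟩
    exact ⟨fun i j _ => hmono (Prod.mk_le_mk.2 ⟨le_rfl, j.le_succ⟩),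
      fun i j _ => hmono (Prod.mk_le_mk.2 ⟨i.le_succ, le_rfl⟩), hbdry⟩

/-! ### Jumps and alternating weights -/

/-- The largest entry of an array at the cells strictly below `c`. -/
def supBelow (π : ℕ × ℕ → ℕ) (c : ℕ × ℕ) : ℕ := (Iio c).sup π

/-- The sum over the cells with `i + j < N` of the amounts by which an array exceeds all its
entries at smaller cells. -/
def jumpSum (N : ℕ) (π : ℕ × ℕ → ℕ) : ℕ := ∑ c ∈ triCells N, (π c - supBelow π c)

/-- The alternating sum of the antidiagonal sums of an array, the last one `i + j = N - 1` having
a positive sign. -/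
def altWeight (N : ℕ) (π : ℕ × ℕ → ℕ) : ℤ :=
  ∑ c ∈ triCells N, (-1) ^ (N + 1 + c.1 + c.2) * (π c : ℤ)

lemma IsStair.diag_supBelow {N : ℕ} {f π : ℕ × ℕ → ℕ} (h : IsStair N f π) :
    diag (N + 1) (supBelow π) = maxAdj (diag N π) := by
  refine le_antisymm ?_ (le_minAdj_iff.1 (diag_le_minAdj_diag_iff.2 fun i j _ =>
    ⟨le_sup (mem_Iio.2 ?_), le_sup (mem_Iio.2 ?_)⟩))
  · set g := setDiag (N + 1) (maxAdj (diag N π)) 0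
    have hg : diag (N + 1) g = maxAdj (diag N π) := diag_setDiag _ _
    have hle := diag_le_minAdj_diag_iff.1 (le_minAdj_iff.2 hg.ge)
    have key : ∀ c d : ℕ × ℕ, c.1 + c.2 = N + 1 → d < c → π d ≤ g c := by
      rintro ⟨i, j⟩ ⟨i', j'⟩ hc hd
      rcases Prod.lt_iff.1 hd with ⟨hi, hj⟩ | ⟨hi, hj⟩
      · obtain ⟨i, rfl⟩ := Nat.exists_eq_succ_of_ne_zero (Nat.ne_zero_of_lt hi)
        have hij : i + j = N := by dsimp only at hc; omega
        exact (h.le_of_le (Prod.mk_le_mk.2 ⟨Nat.lt_succ_iff.1 hi, hj⟩) hij.le).trans (hle i j hij).2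
      · obtain ⟨j, rfl⟩ := Nat.exists_eq_succ_of_ne_zero (Nat.ne_zero_of_lt hj)
        have hij : i + j = N := by dsimp only at hc; omega
        exact (h.le_of_le (Prod.mk_le_mk.2 ⟨hi, Nat.lt_succ_iff.1 hj⟩) hij.le).trans (hle i j hij).1
    rw [← hg]
    exact fun i => Finset.sup_le fun d hd => key _ d (by dsimp only; omega) (mem_Iio.1 hd)
  · simp [Prod.lt_iff]
  · simp [Prod.lt_iff]

lemma altWeight_succ (N : ℕ) (π : ℕ × ℕ → ℕ) :
    altWeight (N + 1) π = ∑ i, ((diag N π i : ℕ) : ℤ) - altWeight N π := by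
  rw [altWeight, sum_triCells_succ, altWeight, add_comm, sub_eq_add_neg, ← sum_neg_distrib]
  congr 1
  · refine sum_congr rfl fun i _ => ?_
    have hi : (i : ℕ) ≤ N := Nat.lt_succ_iff.1 i.2
    rw [diag, diag, Even.neg_one_pow ⟨N + 1, by dsimp only; omega⟩, one_mul]
  · exact sum_congr rfl fun c _ => by ring

section GeneratingFunctions

variable {K : Type*} [Field K] {q : K}

lemma sum_stair_zpow_altWeight (hq : q ≠ 0) (N : ℕ) (f : ℕ × ℕ → ℕ) :
    ∑ π ∈ stair N f, q ^ altWeight N π = altGF N q (diag N f) := by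
  induction N generalizing q f with
  | zero => simp [stair, altWeight, altGF]
  | succ N ih =>
    rw [sum_stair_succ, altGF]
    refine sum_congr rfl fun a _ => ?_
    rw [← diag_setDiag a f, ← ih (inv_ne_zero hq), diag_setDiag, mul_sum]
    refine sum_congr rfl fun π hπ => ?_
    rw [altWeight_succ, diag_eq_of_isStair_setDiag (mem_stair.1 hπ), sub_eq_add_neg,
      zpow_add₀ hq, inv_zpow', ← Nat.cast_sum, zpow_natCast]

lemma sum_stair_pow_jumpSum_succ (hq : q ≠ 0) (N : ℕ) (f : ℕ × ℕ → ℕ) :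
    ∑ π ∈ stair N f, q ^ jumpSum (N + 1) π =
      q ^ (∑ i, diag N f i) * altGF N q⁻¹ (diag N f) := by
  induction N generalizing f with
  | zero =>
    have hIio : Iio ((0, 0) : ℕ × ℕ) = ∅ := Finset.Iio_bot
    simp [stair, jumpSum, sum_triCells_succ, altGF, diag, supBelow, hIio]
  | succ N ih =>
    rw [sum_stair_succ, altGF, mul_sum]
    refine sum_congr rfl fun a ha => ?_
    set b := diag (N + 1) f
    have hjump : ∀ π ∈ stair N (setDiag N a f),
        q ^ jumpSum (N + 2) π = q ^ (∑ i, (b i - maxAdj a i)) * q ^ jumpSum (N + 1) π := by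
      intro π hπ
      have hπ := mem_stair.1 hπ
      have hdiag := diag_eq_of_isStair_setDiag hπ
      have hnext : diag (N + 1) π = b :=
        (isStair_succ_iff.2 ⟨hdiag.symm ▸ mem_Iic.1 ha, hdiag.symm ▸ hπ⟩).diag_eq
      rw [jumpSum, sum_triCells_succ, ← jumpSum, add_comm, pow_add, ← hnext, ← hdiag,
        ← hπ.diag_supBelow]
      rfl
    have hsum : ∑ i, (b i - maxAdj a i) + ∑ i, maxAdj a i = ∑ i, b i := by
      rw [← sum_add_distrib]
      exact sum_congr rfl fun i _ => Nat.sub_add_cancel (le_minAdj_iff.1 (mem_Iic.1 ha) i)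
    have hpow : q ^ (∑ i, a i) * q ^ (∑ i, a i) =
        q ^ (∑ i, maxAdj a i) * q ^ (∑ i, minAdj a i) := by
      rw [← pow_add, ← pow_add, sum_maxAdj_add_sum_minAdj, two_mul]
    rw [sum_congr rfl hjump, ← mul_sum, ih, diag_setDiag, inv_inv,
      altGF_eq_pow_mul_altGF_inv hq N a, ← hsum, pow_add, inv_pow]
    field_simp
    linear_combination altGF N (1 / q) a * hpow

lemma sum_stair_pow_jumpSum (hq : q ≠ 0) (N : ℕ) (f : ℕ × ℕ → ℕ) :
    ∑ π ∈ stair N f, q ^ jumpSum N π = ∑ π ∈ stair N f, q ^ altWeight N π := by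
  rw [sum_stair_zpow_altWeight hq]
  cases N with
  | zero => simp [stair, jumpSum, altGF]
  | succ N =>
    rw [sum_stair_succ, altGF]
    exact sum_congr rfl fun a _ => by rw [sum_stair_pow_jumpSum_succ hq, diag_setDiag]

end GeneratingFunctions

/-! ### Excited diagrams of staircases -/

lemma mem_deltaCells {m : ℕ} {c : ℕ × ℕ} :
    c ∈ deltaCells m ↔ 1 ≤ c.1 ∧ 1 ≤ c.2 ∧ c.1 + c.2 ≤ m := by
  simp only [deltaCells, mem_filter, mem_product, mem_Icc]
  omega

lemma deltaCells_succ_eq_image (m : ℕ) :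
    deltaCells (m + 1) = (triCells m).image fun c => (c.1 + 1, c.2 + 1) := by
  ext c
  simp only [mem_deltaCells, mem_image, mem_triCells]
  constructor
  · exact fun h => ⟨(c.1 - 1, c.2 - 1), by dsimp only; omega, by ext <;> dsimp only <;> omega⟩
  · rintro ⟨d, hd, rfl⟩
    dsimp only
    omega

lemma two_mul_card_deltaCells_succ (m : ℕ) : 2 * #(deltaCells (m + 1)) = (m + 1) * m := by
  rw [deltaCells_succ_eq_image, card_image_of_injective _ fun c d h => by grind]
  induction m with
  | zero => rfl
  | succ m ih =>
    rw [card_eq_sum_ones, sum_triCells_succ, ← card_eq_sum_ones, mul_add, ih]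
    simp only [diag, sum_const, card_univ, Fintype.card_fin, smul_eq_mul]
    ring

lemma monotone_update {α β : Type*} [PartialOrder α] [Preorder β] [DecidableEq α] {f : α → β}
    (hf : Monotone f) {a : α} {b : β} (hlt : ∀ x < a, f x ≤ b) (hgt : ∀ x, a < x → b ≤ f x) :
    Monotone (Function.update f a b) := by
  intro x y hxy
  by_cases hx : x = a <;> by_cases hy : y = a
  · rw [hx, hy]
  · simpa [hx, hy] using hgt y (hx ▸ hxy.lt_of_ne fun h => hy (h ▸ hx))
  · simpa [hx, hy] using hlt x (hy ▸ hxy.lt_of_ne fun h => hx (h.trans hy))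
  · simpa [hx, hy] using hf hxy

/-- The final position of the `c`-th cell of a staircase after `π c` diagonal moves; diagrams use
coordinates starting from `1`. -/
def movedCell (π : ℕ × ℕ → ℕ) (c : ℕ × ℕ) : ℕ × ℕ := (c.1 + π c + 1, c.2 + π c + 1)

lemma movedCell_injective {π : ℕ × ℕ → ℕ} (hπ : Monotone π) : (movedCell π).Injective := by
  intro c d h
  simp only [movedCell, Prod.mk.injEq] at h
  rcases le_total (π c) (π d) with hle | hle
  · have := hπ (show d ≤ c from ⟨by omega, by omega⟩)
    ext <;> omega
  · have := hπ (show c ≤ d from ⟨by omega, by omega⟩)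
    ext <;> omega

lemma movedCell_update (π : ℕ × ℕ → ℕ) (c : ℕ × ℕ) (v : ℕ) :
    movedCell (Function.update π c v) =
      Function.update (movedCell π) c (c.1 + v + 1, c.2 + v + 1) := by
  ext d : 1
  rcases eq_or_ne d c with rfl | hd <;> simp [movedCell, *]

/-- The cells of `lam` among the final positions of all cells moved as prescribed by `π`. When `π`
has large entries outside a staircase, those are the positions of the cells of the staircase. -/
def movedDiagram (lam : Finset (ℕ × ℕ)) (π : ℕ × ℕ → ℕ) : Finset (ℕ × ℕ) :=
  {x ∈ lam | x ∈ Set.range (movedCell π)}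

lemma mem_movedDiagram {lam : Finset (ℕ × ℕ)} {π : ℕ × ℕ → ℕ} {x : ℕ × ℕ} :
    x ∈ movedDiagram lam π ↔ x ∈ lam ∧ ∃ c, movedCell π c = x :=
  mem_filter

lemma movedDiagram_update {lam : Finset (ℕ × ℕ)} {π : ℕ × ℕ → ℕ} (hπ : Monotone π) {c : ℕ × ℕ}
    {v : ℕ} (hv : (c.1 + v + 1, c.2 + v + 1) ∈ lam) :
    movedDiagram lam (Function.update π c v) =
      insert (c.1 + v + 1, c.2 + v + 1) ((movedDiagram lam π).erase (movedCell π c)) := by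
  ext x
  simp only [mem_insert, mem_erase, mem_movedDiagram, movedCell_update]
  constructor
  · rintro ⟨hx, d, rfl⟩
    rcases eq_or_ne d c with rfl | hd
    · simp
    · rw [Function.update_of_ne hd] at hx ⊢
      exact Or.inr ⟨(movedCell_injective hπ).ne hd, hx, d, rfl⟩
  · rintro (rfl | ⟨hne, hx, d, rfl⟩)
    · exact ⟨hv, c, by simp⟩
    · exact ⟨hx, d, Function.update_of_ne (by rintro rfl; exact hne rfl) _ _⟩

lemma excitedStep_movedDiagram_update {lam : Finset (ℕ × ℕ)} {π : ℕ × ℕ → ℕ} {c : ℕ × ℕ}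
    (hπ : Monotone π) (hraise : Monotone (Function.update π c (π c + 1)))
    (hc : movedCell π c ∈ lam) (hc' : (c.1 + π c + 2, c.2 + π c + 2) ∈ lam) :
    ExcitedStep lam (movedDiagram lam π)
      (movedDiagram lam (Function.update π c (π c + 1))) := by
  have hgt : ∀ d, c < d → π c < π d := fun d hd => by
    simpa [Function.update_of_ne hd.ne'] using hraise hd.le
  have hfree : ∀ i j, i ≤ 1 → j ≤ 1 → i + j ≠ 0 →
      (c.1 + π c + 1 + i, c.2 + π c + 1 + j) ∉ movedDiagram lam π := by
    intro i j hi hj hij hmem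
    obtain ⟨-, d, hd⟩ := mem_movedDiagram.1 hmem
    simp only [movedCell, Prod.mk.injEq] at hd
    rcases Nat.lt_or_ge (π c) (π d) with hlt | hle
    · exact (hπ (show d ≤ c from ⟨by omega, by omega⟩)).not_gt hlt
    · exact (hgt d (Prod.lt_iff.2 (by omega))).not_ge hle
  exact ⟨c.1 + π c + 1, c.2 + π c + 1, mem_movedDiagram.2 ⟨hc, c, rfl⟩,
    hfree 1 0 le_rfl zero_le_one one_ne_zero, hfree 0 1 zero_le_one le_rfl one_ne_zero,
    hfree 1 1 le_rfl le_rfl two_ne_zero, hc', movedDiagram_update hπ hc'⟩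

lemma ExcitedStep.card_eq {lam D D' : Finset (ℕ × ℕ)} (h : ExcitedStep lam D D') : #D' = #D := by
  obtain ⟨i, j, hmem, -, -, hfree, -, rfl⟩ := h
  rw [card_insert_of_notMem fun hin => hfree (mem_of_mem_erase hin), card_erase_add_one hmem]

lemma IsExcited.card_eq {lam mu D : Finset (ℕ × ℕ)} (h : IsExcited lam mu D) : #D = #mu := by
  induction h with
  | refl => rfl
  | tail _ hstep ih => exact hstep.card_eq.trans ih

section ConstantBoundary

variable {N k : ℕ} {π : ℕ × ℕ → ℕ}

lemma IsStair.monotone (h : IsStair N (fun _ => k) π) : Monotone π :=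
  (isStair_const_iff.1 h).1

lemma IsStair.le_const (h : IsStair N (fun _ => k) π) (c : ℕ × ℕ) : π c ≤ k := by
  have hle : c ≤ (c.1 + N, c.2) := ⟨Nat.le_add_right _ _, le_rfl⟩
  exact (h.monotone hle).trans_eq (h.eq_boundary _ (by dsimp only; omega))

lemma IsStair.update (h : IsStair N (fun _ => k) π) {c : ℕ × ℕ} {v : ℕ} (hc : c.1 + c.2 < N)
    (hlt : ∀ d < c, π d ≤ v) (hgt : ∀ d, c < d → v ≤ π d) :
    IsStair N (fun _ => k) (Function.update π c v) :=
  isStair_const_iff.2 ⟨monotone_update h.monotone hlt hgt, fun d hd => by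
    rw [Function.update_of_ne (by rintro rfl; omega), h.eq_boundary d hd]⟩

lemma IsStair.movedCell_mem_deltaCells_iff (h : IsStair N (fun _ => k) π) {c : ℕ × ℕ} :
    movedCell π c ∈ deltaCells (N + 1 + 2 * k) ↔ c.1 + c.2 < N := by
  have hle := h.le_const c
  rw [mem_deltaCells, movedCell]
  by_cases hc : N ≤ c.1 + c.2
  · rw [h.eq_boundary c hc]
    dsimp only
    omega
  · dsimp only
    omega

lemma IsStair.exists_of_excitedStep (h : IsStair N (fun _ => k) π) {D : Finset (ℕ × ℕ)}
    (hD : ExcitedStep (deltaCells (N + 1 + 2 * k)) (movedDiagram (deltaCells (N + 1 + 2 * k)) π)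
      D) : ∃ ρ, IsStair N (fun _ => k) ρ ∧ D = movedDiagram (deltaCells (N + 1 + 2 * k)) ρ := by
  obtain ⟨a, b, hab, hdown, hright, -, hmem, rfl⟩ := hD
  obtain ⟨hlam, c, hc⟩ := mem_movedDiagram.1 hab
  obtain ⟨rfl, rfl⟩ := Prod.mk.inj hc
  rw [mem_deltaCells] at hmem
  have hbelow : π c < π (c.1 + 1, c.2) := by
    by_contra hle
    have heq : π (c.1 + 1, c.2) = π c :=
      (not_lt.1 hle).antisymm (h.monotone (Prod.mk_le_mk.2 ⟨c.1.le_succ, le_rfl⟩))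
    refine hdown (mem_movedDiagram.2 ⟨mem_deltaCells.2 ?_, (c.1 + 1, c.2), ?_⟩)
    · dsimp only at hmem ⊢
      omega
    · rw [movedCell, heq, Nat.add_right_comm c.1]
  have hbeside : π c < π (c.1, c.2 + 1) := by
    by_contra hle
    have heq : π (c.1, c.2 + 1) = π c :=
      (not_lt.1 hle).antisymm (h.monotone (Prod.mk_le_mk.2 ⟨le_rfl, c.2.le_succ⟩))
    refine hright (mem_movedDiagram.2 ⟨mem_deltaCells.2 ?_, (c.1, c.2 + 1), ?_⟩)
    · dsimp only at hmem ⊢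
      omega
    · rw [movedCell, heq, Nat.add_right_comm c.2]
  have hraise : IsStair N (fun _ => k) (Function.update π c (π c + 1)) := by
    refine h.update (h.movedCell_mem_deltaCells_iff.1 hlam)
      (fun d hd => (h.monotone hd.le).trans (Nat.le_succ _)) fun d hd => ?_
    rcases Prod.lt_iff.1 hd with hd | hd
    · exact hbelow.trans_le (h.monotone hd)
    · exact hbeside.trans_le (h.monotone hd)
  exact ⟨_, hraise, (movedDiagram_update (v := π c + 1) h.monotone (mem_deltaCells.2 hmem)).symm⟩

lemma IsStair.movedDiagram_eq_deltaCells (h : IsStair N (fun _ => k) π)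
    (hzero : ∀ c ∈ triCells N, π c = 0) :
    movedDiagram (deltaCells (N + 1 + 2 * k)) π = deltaCells (N + 1) := by
  ext x
  rw [mem_movedDiagram]
  constructor
  · rintro ⟨hx, c, rfl⟩
    have hc := h.movedCell_mem_deltaCells_iff.1 hx
    rw [mem_deltaCells, movedCell, hzero c (mem_triCells.2 hc)]
    dsimp only
    omega
  · intro hx
    rw [mem_deltaCells] at hx ⊢
    refine ⟨by omega, (x.1 - 1, x.2 - 1), ?_⟩
    rw [movedCell, hzero _ (mem_triCells.2 (by dsimp only; omega))]
    ext <;> dsimp only <;> omega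

lemma sum_update_add {c : ℕ × ℕ} (hc : c ∈ triCells N) (v : ℕ) :
    ∑ d ∈ triCells N, Function.update π c v d + π c = ∑ d ∈ triCells N, π d + v := by
  rw [sum_update_of_mem hc, ← sum_sdiff (singleton_subset_iff.2 hc), sum_singleton]
  ring

/- Decreasing a minimal nonzero entry undoes an excited move. -/
lemma IsStair.isExcited_movedDiagram (h : IsStair N (fun _ => k) π) :
    IsExcited (deltaCells (N + 1 + 2 * k)) (deltaCells (N + 1))
      (movedDiagram (deltaCells (N + 1 + 2 * k)) π) := by
  induction hsum : ∑ c ∈ triCells N, π c generalizing π with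
  | zero =>
    rw [h.movedDiagram_eq_deltaCells (sum_eq_zero_iff.1 hsum)]
    exact Relation.ReflTransGen.refl
  | succ s ih =>
    obtain ⟨c₀, hc₀, hpos₀⟩ := exists_ne_zero_of_sum_ne_zero (hsum.trans_ne s.succ_ne_zero)
    obtain ⟨c, hmin⟩ := exists_minimal (s := {c ∈ triCells N | π c ≠ 0})
      ⟨c₀, mem_filter.2 ⟨hc₀, hpos₀⟩⟩
    obtain ⟨hc, hpos⟩ := mem_filter.1 hmin.prop
    have hzero : ∀ d < c, π d = 0 := by
      intro d hd
      by_contra hne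
      refine hmin.not_lt (mem_filter.2 ⟨?_, hne⟩) hd
      have := Prod.le_def.1 hd.le
      rw [mem_triCells] at hc ⊢
      omega
    obtain ⟨v, hv⟩ := Nat.exists_eq_succ_of_ne_zero hpos
    have hlower : IsStair N (fun _ => k) (Function.update π c v) :=
      h.update (mem_triCells.1 hc) (fun d hd => (hzero d hd).trans_le v.zero_le)
        fun d hd => (hv ▸ v.le_succ).trans (h.monotone hd.le)
    have hsum' := sum_update_add (π := π) hc v
    have hback : Function.update (Function.update π c v) c (Function.update π c v c + 1) = π := by
      rw [Function.update_self, Function.update_idem, ← Nat.succ_eq_add_one, ← hv,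
        Function.update_eq_self]
    have hstep := excitedStep_movedDiagram_update (lam := deltaCells (N + 1 + 2 * k))
      hlower.monotone (c := c) (hback.symm ▸ h.monotone)
      (hlower.movedCell_mem_deltaCells_iff.2 (mem_triCells.1 hc)) (by
        rw [Function.update_self]
        have := h.movedCell_mem_deltaCells_iff.2 (mem_triCells.1 hc)
        rwa [movedCell, hv] at this)
    rw [hback] at hstep
    exact (ih hlower (by omega)).tail hstep

lemma isExcited_iff {D : Finset (ℕ × ℕ)} :
    IsExcited (deltaCells (N + 1 + 2 * k)) (deltaCells (N + 1)) D ↔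
      ∃ π, IsStair N (fun _ => k) π ∧ D = movedDiagram (deltaCells (N + 1 + 2 * k)) π := by
  constructor
  · intro h
    induction h with
    | refl =>
      have hstair : IsStair N (fun _ => k) fun c => if c.1 + c.2 < N then 0 else k := by
        refine ⟨fun i j hij => ?_, fun i j hij => ?_, fun c hc => if_neg hc.not_gt⟩ <;>
          exact (if_pos hij).trans_le (Nat.zero_le _)
      exact ⟨_, hstair, (hstair.movedDiagram_eq_deltaCells fun c hc =>
        if_pos (mem_triCells.1 hc)).symm⟩
    | tail _ hstep ih =>
      obtain ⟨π, hπ, rfl⟩ := ih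
      exact hπ.exists_of_excitedStep hstep
  · rintro ⟨π, hπ, rfl⟩
    exact hπ.isExcited_movedDiagram

end ConstantBoundary

/-! ### Pleasant diagrams of staircases -/

lemma supBelow_le_iff {π : ℕ × ℕ → ℕ} {c : ℕ × ℕ} {v : ℕ} :
    supBelow π c ≤ v ↔ ∀ d < c, π d ≤ v := by
  simp only [supBelow, Finset.sup_le_iff, mem_Iio]

/-- The positions, short of its final one in `movedDiagram`, at which some cell of the staircase
could have stopped with all cells before it moved as prescribed by `π`. -/
def jumpCells (N : ℕ) (π : ℕ × ℕ → ℕ) : Finset (ℕ × ℕ) :=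
  ((triCells N).sigma fun c => Ico (supBelow π c) (π c)).image
    fun p => (p.1.1 + p.2 + 1, p.1.2 + p.2 + 1)

lemma mem_jumpCells {N : ℕ} {π : ℕ × ℕ → ℕ} {x : ℕ × ℕ} :
    x ∈ jumpCells N π ↔ ∃ c v, c.1 + c.2 < N ∧ supBelow π c ≤ v ∧ v < π c ∧
      (c.1 + v + 1, c.2 + v + 1) = x := by
  simp only [jumpCells, mem_image, mem_sigma, mem_triCells, mem_Ico, Sigma.exists, and_assoc]

lemma card_jumpCells (N : ℕ) (π : ℕ × ℕ → ℕ) : #(jumpCells N π) = jumpSum N π := by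
  rw [jumpCells, card_image_of_injOn, card_sigma]
  · simp only [Nat.card_Ico, jumpSum]
  have hle : ∀ {c d : ℕ × ℕ} {v w}, v < π c → supBelow π d ≤ w → c.1 + v = d.1 + w →
      c.2 + v = d.2 + w → v ≤ w := by
    intro c d v w hv hw hfst hsnd
    by_contra hlt
    have := supBelow_le_iff.1 hw c (Prod.lt_iff.2 (by omega))
    omega
  rintro ⟨c, v⟩ hc ⟨d, w⟩ hd heq
  simp only [coe_sigma, Set.mem_sigma_iff, mem_coe, mem_Ico] at hc hd
  simp only [Prod.mk.injEq, Nat.add_right_cancel_iff] at heq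
  obtain rfl : v = w :=
    (hle hc.2.2 hd.2.1 heq.1 heq.2).antisymm (hle hd.2.2 hc.2.1 heq.1.symm heq.2.symm)
  rw [Prod.ext (Nat.add_right_cancel heq.1) (Nat.add_right_cancel heq.2)]

section ConstantBoundary

variable {N k : ℕ} {π ρ : ℕ × ℕ → ℕ}

lemma IsStair.jumpCells_subset (h : IsStair N (fun _ => k) π) :
    jumpCells N π ⊆ deltaCells (N + 1 + 2 * k) \ movedDiagram (deltaCells (N + 1 + 2 * k)) π := by
  intro x hx
  obtain ⟨c, v, hc, hle, hlt, rfl⟩ := mem_jumpCells.1 hx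
  have hk := h.le_const c
  refine mem_sdiff.2 ⟨mem_deltaCells.2 (by dsimp only; omega), fun hmem => ?_⟩
  obtain ⟨-, d, hd⟩ := mem_movedDiagram.1 hmem
  simp only [movedCell, Prod.mk.injEq] at hd
  rcases Nat.lt_or_ge v (π d) with hvd | hdv
  · exact (supBelow_le_iff.1 hle d (Prod.lt_iff.2 (by omega))).not_gt hvd
  · exact ((h.monotone (show c ≤ d from ⟨by omega, by omega⟩)).trans hdv).not_gt hlt

lemma IsStair.card_sdiff_movedDiagram (h : IsStair N (fun _ => k) π) :
    #(deltaCells (N + 1 + 2 * k) \ movedDiagram (deltaCells (N + 1 + 2 * k)) π) =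
      k * (2 * N + 2 * k + 1) := by
  have hsub := card_sdiff_add_card_eq_card
    (filter_subset (· ∈ Set.range (movedCell π)) (deltaCells (N + 1 + 2 * k)))
  have hmoved := h.isExcited_movedDiagram.card_eq
  have hlam := two_mul_card_deltaCells_succ (N + 2 * k)
  have hmu := two_mul_card_deltaCells_succ N
  rw [Nat.add_right_comm] at hlam
  rw [movedDiagram] at hmoved ⊢
  nlinarith

/-- The pleasant diagrams that belong to the array `π`. -/
def pleasantInterval (N k : ℕ) (π : ℕ × ℕ → ℕ) : Finset (Finset (ℕ × ℕ)) :=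
  Icc (jumpCells N π) (deltaCells (N + 1 + 2 * k) \ movedDiagram (deltaCells (N + 1 + 2 * k)) π)

lemma IsStair.le_of_mem_pleasantInterval (hπ : IsStair N (fun _ => k) π)
    {P : Finset (ℕ × ℕ)} (hP : P ∈ pleasantInterval N k π) (hP' : P ∈ pleasantInterval N k ρ)
    {c : ℕ × ℕ} (hc : c.1 + c.2 < N) (heq : ∀ d < c, π d = ρ d) : ρ c ≤ π c := by
  by_contra! hlt
  have hle : supBelow ρ c ≤ π c := supBelow_le_iff.2 fun d hd => heq d hd ▸ hπ.monotone hd.le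
  have hmem := (mem_Icc.1 hP').1 (mem_jumpCells.2 ⟨c, π c, hc, hle, hlt, rfl⟩)
  obtain ⟨hlam, hfree⟩ := mem_sdiff.1 ((mem_Icc.1 hP).2 hmem)
  exact hfree (mem_movedDiagram.2 ⟨hlam, c, rfl⟩)

lemma IsStair.eq_of_mem_pleasantInterval (hπ : IsStair N (fun _ => k) π)
    (hρ : IsStair N (fun _ => k) ρ) {P : Finset (ℕ × ℕ)} (hP : P ∈ pleasantInterval N k π)
    (hP' : P ∈ pleasantInterval N k ρ) : π = ρ := by
  ext c
  induction c using WellFoundedLT.induction with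
  | ind c ih =>
    rcases Nat.lt_or_ge (c.1 + c.2) N with hc | hc
    · exact (hρ.le_of_mem_pleasantInterval hP' hP hc fun d hd => (ih d hd).symm).antisymm
        (hπ.le_of_mem_pleasantInterval hP hP' hc ih)
    · rw [hπ.eq_boundary c hc, hρ.eq_boundary c hc]

/- Among the arrays whose diagram avoids `P`, one with the smallest entry sum works: if `P` missed
one of its jump cells, the corresponding cell of the diagram could be moved back there. -/
lemma IsStair.exists_mem_pleasantInterval (hπ : IsStair N (fun _ => k) π) {P : Finset (ℕ × ℕ)}
    (hP : P ⊆ deltaCells (N + 1 + 2 * k) \ movedDiagram (deltaCells (N + 1 + 2 * k)) π) :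
    ∃ ρ, IsStair N (fun _ => k) ρ ∧ P ∈ pleasantInterval N k ρ := by
  induction hsum : ∑ c ∈ triCells N, π c using Nat.strong_induction_on generalizing π with
  | _ s ih =>
    by_cases hjump : jumpCells N π ⊆ P
    · exact ⟨π, hπ, mem_Icc.2 ⟨hjump, hP⟩⟩
    obtain ⟨x, hx, hxP⟩ := not_subset.1 hjump
    have hxlam := (mem_sdiff.1 (hπ.jumpCells_subset hx)).1
    obtain ⟨c, v, hc, hle, hlt, rfl⟩ := mem_jumpCells.1 hx
    have hback : IsStair N (fun _ => k) (Function.update π c v) :=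
      hπ.update hc (supBelow_le_iff.1 hle) fun d hd => hlt.le.trans (hπ.monotone hd.le)
    have hsum' := sum_update_add (π := π) (mem_triCells.2 hc) v
    refine ih _ (by omega) hback (fun y hy => ?_) rfl
    obtain ⟨hlam, hfree⟩ := mem_sdiff.1 (hP hy)
    rw [mem_sdiff, movedDiagram_update hπ.monotone hxlam, mem_insert, not_or]
    exact ⟨hlam, fun h => hxP (h ▸ hy), fun h => hfree (mem_of_mem_erase h)⟩

lemma isPleasant_iff {P : Finset (ℕ × ℕ)} :
    IsPleasant (deltaCells (N + 1 + 2 * k)) (deltaCells (N + 1)) P ↔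
      ∃ π, IsStair N (fun _ => k) π ∧ P ∈ pleasantInterval N k π := by
  constructor
  · rintro ⟨D, hD, hP⟩
    obtain ⟨π, hπ, rfl⟩ := isExcited_iff.1 hD
    exact hπ.exists_mem_pleasantInterval hP
  · rintro ⟨π, hπ, hP⟩
    exact ⟨_, hπ.isExcited_movedDiagram, (mem_Icc.1 hP).2⟩

end ConstantBoundary

lemma pleasantCount_eq_sum_stair (N k : ℕ) :
    (pleasantCount (deltaCells (N + 1 + 2 * k)) (deltaCells (N + 1)) : ℚ) =
      2 ^ (k * (2 * N + 2 * k + 1)) * ∑ π ∈ stair N (fun _ => k), (1 / 2) ^ jumpSum N π := by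
  have hset : {P | IsPleasant (deltaCells (N + 1 + 2 * k)) (deltaCells (N + 1)) P} =
      ↑((stair N fun _ => k).biUnion (pleasantInterval N k)) := by
    ext P
    simp only [Set.mem_ofPred_eq, isPleasant_iff, coe_biUnion, mem_coe, Set.mem_iUnion, mem_stair,
      exists_prop]
  rw [pleasantCount, hset, Set.ncard_coe_finset, card_biUnion, Nat.cast_sum, mul_sum]
  · refine sum_congr rfl fun π hπ => ?_
    have hπ := mem_stair.1 hπ
    have hle := card_le_card hπ.jumpCells_subset
    rw [pleasantInterval, card_Icc_finset hπ.jumpCells_subset]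
    rw [hπ.card_sdiff_movedDiagram, card_jumpCells] at hle ⊢
    rw [Nat.cast_pow, Nat.cast_two, pow_sub₀ _ two_ne_zero hle, one_div, inv_pow]
  · intro π hπ ρ hρ hne
    exact disjoint_left.2 fun P hP hP' =>
      hne ((mem_stair.1 hπ).eq_of_mem_pleasantInterval (mem_stair.1 hρ) hP hP')

/-! ### Hankel determinants -/

section Hankel

open Polynomial

variable {R : Type*} [CommRing R]

lemma aeval_funLeft_succ_apply {p : R[X]} {k : ℕ} (hp : p.natDegree < k) (f : ℕ → R) (a : ℕ) :
    aeval (LinearMap.funLeft R R Nat.succ) p f a = ∑ e ∈ range k, p.coeff e * f (a + e) := by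
  have hpow : ∀ e, (LinearMap.funLeft R R Nat.succ ^ e) f = fun a => f (a + e) := by
    intro e
    induction e with
    | zero => rfl
    | succ e ih =>
      rw [pow_succ', Module.End.mul_apply, ih]
      exact funext fun a => congrArg f (Nat.succ_add_eq_add_succ a e)
  simp [aeval_eq_sum_range' hp, hpow]

lemma det_hankel_eq_of_isMonicOfDegree [Nontrivial R] {k : ℕ} (f : ℕ → R) (n : ℕ) (p : ℕ → R[X])
    (hp : ∀ j, IsMonicOfDegree (p j) j) :
    (Matrix.of fun i j : Fin k => f (n + i + j)).det =
      (Matrix.of fun i j : Fin k =>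
        aeval (LinearMap.funLeft R R Nat.succ) (p j) f (n + i)).det := by
  have hmul : (Matrix.of fun i j : Fin k =>
      aeval (LinearMap.funLeft R R Nat.succ) (p j) f (n + i)) =
        (Matrix.of fun i j : Fin k => f (n + i + j)) *
          Matrix.of fun i j : Fin k => (p j).coeff i := by
    ext i j
    rw [Matrix.of_apply, aeval_funLeft_succ_apply (k := k) (by simp [(hp j).natDegree_eq]),
      Matrix.mul_apply, ← Fin.sum_univ_eq_sum_range (fun e => (p j).coeff e * f (n + i + e))]
    exact sum_congr rfl fun e _ => mul_comm _ _
  rw [hmul, Matrix.det_mul, Matrix.det_matrixOfPolynomials (fun j : Fin k => p j)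
    (fun j => (hp j).natDegree_eq) (fun j => (hp j).monic), mul_one]

/-- The monic polynomials with three-term recurrence coefficients `b` and `c`. -/
def threeTermPoly (b c : ℕ → R) : ℕ → R[X]
  | 0 => 1
  | 1 => X - C (b 0)
  | m + 2 => (X - C (b (m + 1))) * threeTermPoly b c (m + 1) - C (c m) * threeTermPoly b c m

lemma isMonicOfDegree_threeTermPoly [Nontrivial R] (b c : ℕ → R) (m : ℕ) :
    IsMonicOfDegree (threeTermPoly b c m) m := by
  induction m using Nat.twoStepInduction with
  | zero => exact isMonicOfDegree_zero_iff.2 rfl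
  | one => exact isMonicOfDegree_X_sub_one _
  | more m ih₀ ih₁ =>
    have hlead := (isMonicOfDegree_X_sub_one (b (m + 1))).mul ih₁
    rw [show 1 + (m + 1) = m + 2 by ring] at hlead
    refine hlead.sub ((natDegree_C_mul_le _ _).trans_lt ?_)
    rw [ih₀.natDegree_eq]
    omega

lemma aeval_funLeft_succ_threeTermPoly {b c : ℕ → R} {v : ℕ → ℕ → R}
    (hzero : ∀ a, v (a + 1) 0 = v a 1 + b 0 * v a 0)
    (hsucc : ∀ a m, v (a + 1) (m + 1) = v a (m + 2) + b (m + 1) * v a (m + 1) + c m * v a m)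
    (m : ℕ) :
    aeval (LinearMap.funLeft R R Nat.succ) (threeTermPoly b c m) (v · 0) = (v · m) := by
  induction m using Nat.twoStepInduction with
  | zero => simp [threeTermPoly]
  | one =>
    ext a
    simp [threeTermPoly, hzero]
  | more m ih₀ ih₁ =>
    ext a
    simp only [threeTermPoly, map_sub, map_mul, aeval_X, aeval_C, LinearMap.sub_apply,
      Module.End.mul_apply, ih₀, ih₁, Module.algebraMap_end_apply, Pi.sub_apply, Pi.smul_apply,
      LinearMap.funLeft_apply, smul_eq_mul, Nat.succ_eq_add_one, hsucc]
    ring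

lemma det_hankel_eq_of_threeTerm {b c : ℕ → R} {v : ℕ → ℕ → R}
    (hzero : ∀ a, v (a + 1) 0 = v a 1 + b 0 * v a 0)
    (hsucc : ∀ a m, v (a + 1) (m + 1) = v a (m + 2) + b (m + 1) * v a (m + 1) + c m * v a m)
    (n k : ℕ) :
    (Matrix.of fun i j : Fin k => v (n + i + j) 0).det =
      (Matrix.of fun i j : Fin k => v (n + i) j).det := by
  nontriviality R
  rw [det_hankel_eq_of_isMonicOfDegree (v · 0) n _ (isMonicOfDegree_threeTermPoly b c)]
  simp only [aeval_funLeft_succ_threeTermPoly hzero hsucc]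

end Hankel

/-! ### Nonintersecting paths -/

/-- The heights that a path on `ℕ` with steps `±1` can reach from height `y` in one step. -/
def nextHeights (y : ℕ) : Finset ℕ := {y' ∈ range (y + 2) | y' + 1 = y ∨ y' = y + 1}

@[simp]
lemma mem_nextHeights {y y' : ℕ} : y' ∈ nextHeights y ↔ y' + 1 = y ∨ y' = y + 1 := by
  simp only [nextHeights, mem_filter, mem_range]
  omega

lemma nextHeights_zero : nextHeights 0 = {1} := by
  ext
  simp

lemma nextHeights_succ (y : ℕ) : nextHeights (y + 1) = {y + 2, y} := by
  ext
  simp only [mem_nextHeights, mem_insert, mem_singleton]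
  omega

/-- The families of `k` nonintersecting paths with `s` steps that start at the heights `h` and
stay at their final heights from time `s` on. -/
def pathFamilies {k : ℕ} : ℕ → (Fin k → ℕ) → Finset (ℕ → Fin k → ℕ)
  | 0, h => {fun _ => h}
  | s + 1, h => {h' ∈ Fintype.piFinset fun j => nextHeights (h j) | StrictMono h'}.biUnion
      fun h' => (pathFamilies s h').image fun Y t => Nat.casesOn t h Y

lemma mem_pathFamilies {k s : ℕ} {h : Fin k → ℕ} {Y : ℕ → Fin k → ℕ} :
    Y ∈ pathFamilies s h ↔ Y 0 = h ∧
      (∀ t < s, (∀ j, Y (t + 1) j ∈ nextHeights (Y t j)) ∧ StrictMono (Y (t + 1))) ∧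
      ∀ t, s ≤ t → Y t = Y s := by
  induction s generalizing h Y with
  | zero =>
    rw [pathFamilies, mem_singleton]
    constructor
    · rintro rfl
      simp
    · rintro ⟨rfl, -, hstay⟩
      exact funext fun t => hstay t t.zero_le
  | succ s ih =>
    simp only [pathFamilies, mem_biUnion, mem_filter, Fintype.mem_piFinset, mem_image, ih]
    constructor
    · rintro ⟨h', hfirst, Y, ⟨rfl, hstep, hstay⟩, rfl⟩
      refine ⟨rfl, fun t ht => ?_, fun t ht => ?_⟩
      · cases t with
        | zero => exact hfirst
        | succ t => exact hstep t (Nat.lt_of_succ_lt_succ ht)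
      · obtain ⟨t, rfl⟩ := Nat.exists_eq_succ_of_ne_zero (Nat.ne_zero_of_lt ht)
        exact hstay t (Nat.le_of_succ_le_succ ht)
    · rintro ⟨rfl, hstep, hstay⟩
      refine ⟨Y 1, hstep 0 s.succ_pos, fun t => Y (t + 1),
        ⟨rfl, fun t ht => hstep (t + 1) (Nat.succ_lt_succ ht),
          fun t ht => hstay (t + 1) (Nat.succ_le_succ ht)⟩, ?_⟩
      ext1 t
      cases t <;> rfl

lemma sum_pathFamilies_succ {M : Type*} [AddCommMonoid M] {k : ℕ} (s : ℕ) (h : Fin k → ℕ)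
    (F : (ℕ → Fin k → ℕ) → M) :
    ∑ Y ∈ pathFamilies (s + 1) h, F Y =
      ∑ h' ∈ Fintype.piFinset fun j => nextHeights (h j),
        if StrictMono h' then ∑ Y ∈ pathFamilies s h', F fun t => Nat.casesOn t h Y else 0 := by
  rw [pathFamilies, sum_biUnion, sum_filter]
  · refine sum_congr rfl fun h' _ => if_congr Iff.rfl (sum_image ?_) rfl
    exact fun Y _ Z _ hYZ => funext fun t => congrFun hYZ (t + 1)
  · intro a _ b _ hab
    rw [Function.onFun, disjoint_left]
    simp only [mem_image]
    rintro _ ⟨Y, hY, rfl⟩ ⟨Z, hZ, hYZ⟩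
    apply hab
    rw [← (mem_pathFamilies.1 hY).1, ← (mem_pathFamilies.1 hZ).1]
    exact (congrFun hYZ 1).symm

section LindstromGesselViennot

variable {R : Type*} [CommRing R]

/-- The weighted sum over the paths with `s` steps from height `y`. A step from `y` to `y'` with
`r` steps remaining, itself included, has weight `w r y y'`, and ending at `y` has weight `g y`. -/
def pathSum (w : ℕ → ℕ → ℕ → R) (g : ℕ → R) : ℕ → ℕ → R
  | 0, y => g y
  | s + 1, y => ∑ y' ∈ nextHeights y, w (s + 1) y y' * pathSum w g s y'

lemma pathSum_add {w : ℕ → ℕ → ℕ → R} {r : ℕ} (hw : ∀ s, w (r + s) = w s) (g : ℕ → R)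
    (s y : ℕ) : pathSum w g (r + s) y = pathSum w (pathSum w g r) s y := by
  induction s generalizing y with
  | zero => rfl
  | succ s ih =>
    rw [← Nat.add_assoc]
    simp only [pathSum, ih, Nat.add_assoc, hw (s + 1)]

/-- The weight of a family of paths with `s` steps. -/
def familyWt {k : ℕ} (w : ℕ → ℕ → ℕ → R) (s : ℕ) (Y : ℕ → Fin k → ℕ) : R :=
  ∏ t ∈ range s, ∏ j, w (s - t) (Y t j) (Y (t + 1) j)

lemma familyWt_succ {k : ℕ} (w : ℕ → ℕ → ℕ → R) (s : ℕ) (h : Fin k → ℕ) (Y : ℕ → Fin k → ℕ) :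
    familyWt w (s + 1) (fun t => Nat.casesOn t h Y) =
      (∏ j, w (s + 1) (h j) (Y 0 j)) * familyWt w s Y := by
  simp only [familyWt, prod_range_succ', Nat.add_sub_add_right]
  exact mul_comm _ _

/- Expanding every row by its first step, the terms in which two paths meet have two equal rows;
paths of the same parity cannot cross without meeting. -/
lemma det_pathSum {k : ℕ} (w : ℕ → ℕ → ℕ → R) (g : Fin k → ℕ → R) (s : ℕ) {h : Fin k → ℕ}
    (hmono : StrictMono h) (hpar : ∀ i j, Even (h i + h j)) :
    (Matrix.of fun j i : Fin k => pathSum w (g i) s (h j)).det =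
      ∑ Y ∈ pathFamilies s h, familyWt w s Y * (Matrix.of fun j i : Fin k => g i (Y s j)).det := by
  induction s generalizing h with
  | zero => simp [pathFamilies, familyWt, pathSum]
  | succ s ih =>
    have hrow : (Matrix.of fun j i : Fin k => pathSum w (g i) (s + 1) (h j)) =
        fun j => ∑ y ∈ nextHeights (h j),
          w (s + 1) (h j) y • fun i : Fin k => pathSum w (g i) s y := by
      ext j i
      simp [pathSum]
    rw [hrow]
    change Matrix.detRowAlternating.toMultilinearMap _ = _
    rw [MultilinearMap.map_sum_finset, sum_pathFamilies_succ]
    refine sum_congr rfl fun h' hh' => ?_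
    simp only [Fintype.mem_piFinset, mem_nextHeights] at hh'
    rw [MultilinearMap.map_smul_univ]
    change _ • (Matrix.of fun j i : Fin k => pathSum w (g i) s (h' j)).det = _
    have hpar' : ∀ i j, Even (h' i + h' j) := fun i j => by
      have := hpar i j
      have := hh' i
      have := hh' j
      grind
    split_ifs with hmono'
    · rw [ih hmono' hpar', smul_sum]
      refine sum_congr rfl fun Y hY => ?_
      rw [familyWt_succ, (mem_pathFamilies.1 hY).1, smul_eq_mul, mul_assoc]
    · rw [StrictMono] at hmono'
      push Not at hmono'
      obtain ⟨a, b, hab, hle⟩ := hmono'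
      have hmeet : h' a = h' b := by
        have hlt := hmono hab
        have hpar := hpar' a b
        have ha := hh' a
        have hb := hh' b
        grind
      rw [Matrix.det_zero_of_row_eq hab.ne (funext fun i => by simp [hmeet]), smul_zero]

end LindstromGesselViennot

lemma strictMono_of_mem_pathFamilies {k s : ℕ} {h : Fin k → ℕ} (hmono : StrictMono h)
    {Y : ℕ → Fin k → ℕ} (hY : Y ∈ pathFamilies s h) {t : ℕ} (ht : t ≤ s) : StrictMono (Y t) := by
  obtain ⟨rfl, hstep, -⟩ := mem_pathFamilies.1 hY
  cases t with
  | zero => exact hmono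
  | succ t => exact (hstep t ht).2

lemma even_add_of_mem_pathFamilies {k s : ℕ} {h : Fin k → ℕ} (hpar : ∀ i j, Even (h i + h j))
    {Y : ℕ → Fin k → ℕ} (hY : Y ∈ pathFamilies s h) {t : ℕ} (ht : t ≤ s) (i j : Fin k) :
    Even (Y t i + Y t j) := by
  obtain ⟨rfl, hstep, -⟩ := mem_pathFamilies.1 hY
  induction t with
  | zero => exact hpar i j
  | succ t ih =>
    have := ih (by omega)
    have := mem_nextHeights.1 ((hstep t ht).1 i)
    have := mem_nextHeights.1 ((hstep t ht).1 j)
    grind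

/-! ### Excursions -/

/-- The heights `0, 2, 4, …` at which the paths of a family start and end. -/
def baseHeights (k : ℕ) (j : Fin k) : ℕ := 2 * j

lemma strictMono_baseHeights (k : ℕ) : StrictMono (baseHeights k) := fun _ _ h =>
  Nat.mul_lt_mul_of_pos_left h two_pos

lemma even_baseHeights_add {k : ℕ} (i j : Fin k) : Even (baseHeights k i + baseHeights k j) :=
  (even_two_mul _).add (even_two_mul _)

lemma add_baseHeights_le {k : ℕ} {h : Fin k → ℕ} (hmono : StrictMono h)
    (hpar : ∀ i j, Even (h i + h j)) {i j : Fin k} (hij : i ≤ j) :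
    h i + baseHeights k j ≤ h j + baseHeights k i := by
  obtain ⟨j, hj⟩ := j
  induction j with
  | zero => rw [show i = ⟨0, hj⟩ from Fin.le_antisymm hij (Nat.zero_le _)]
  | succ j ih =>
    rcases hij.eq_or_lt with rfl | hlt
    · rfl
    · have hle : h i + 2 * j ≤ h ⟨j, by omega⟩ + baseHeights k i :=
        ih (by omega) (Nat.lt_succ_iff.1 hlt)
      have hstep : h ⟨j, by omega⟩ < h ⟨j + 1, hj⟩ := hmono (by simp)
      obtain ⟨a, ha⟩ := hpar ⟨j, by omega⟩ ⟨j + 1, hj⟩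
      change h i + 2 * (j + 1) ≤ h ⟨j + 1, hj⟩ + baseHeights k i
      omega

lemma baseHeights_le {k : ℕ} {h : Fin k → ℕ} (hmono : StrictMono h)
    (hpar : ∀ i j, Even (h i + h j)) : baseHeights k ≤ h := by
  intro j
  have hle := add_baseHeights_le hmono hpar (i := ⟨0, j.pos⟩) (j := j) (Nat.zero_le _)
  exact (Nat.le_add_left _ _).trans hle

section Excursions

variable {R : Type*} [CommRing R]

/-- The weight of a step from `y` to `y'` when `s` steps remain, itself included: every down-step
with an even number of remaining steps has weight `q`. -/
def stepWt (q : R) (s y y' : ℕ) : R := if y' < y ∧ Even s then q else 1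

lemma stepWt_two_mul_add (q : R) (i s : ℕ) : stepWt q (2 * i + s) = stepWt q s := by
  funext y y'
  simp [stepWt, Nat.even_add]

/-- The weighted number of the paths with `s` steps from height `y` to height `0`. -/
def excursionSum (q : R) : ℕ → ℕ → R := pathSum (stepWt q) (Pi.single 0 1)

lemma excursionSum_succ_zero (q : R) (s : ℕ) : excursionSum q (s + 1) 0 = excursionSum q s 1 := by
  simp [excursionSum, pathSum, nextHeights_zero, stepWt]

lemma excursionSum_succ_succ (q : R) (s y : ℕ) :
    excursionSum q (s + 1) (y + 1) =
      excursionSum q s (y + 2) + (if Even (s + 1) then q else 1) * excursionSum q s y := by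
  simp [excursionSum, pathSum, nextHeights_succ, stepWt]

lemma excursionSum_of_lt (q : R) {s y : ℕ} (h : s < y) : excursionSum q s y = 0 := by
  induction s generalizing y with
  | zero => exact Pi.single_eq_of_ne h.ne' 1
  | succ s ih =>
    obtain ⟨y, rfl⟩ := Nat.exists_eq_succ_of_ne_zero (Nat.ne_zero_of_lt h)
    rw [excursionSum_succ_succ, ih (by omega), ih (by omega), mul_zero, add_zero]

lemma excursionSum_add_two_zero (q : R) (a : ℕ) :
    excursionSum q (2 * (a + 1)) 0 = excursionSum q (2 * a) 2 + excursionSum q (2 * a) 0 := by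
  rw [Nat.mul_succ, excursionSum_succ_zero, excursionSum_succ_succ, if_neg (by simp), one_mul]

lemma excursionSum_add_two_succ (q : R) (a m : ℕ) :
    excursionSum q (2 * (a + 1)) (2 * (m + 1)) =
      excursionSum q (2 * a) (2 * (m + 2)) + (1 + q) * excursionSum q (2 * a) (2 * (m + 1)) +
        q * excursionSum q (2 * a) (2 * m) := by
  simp only [Nat.mul_succ, excursionSum_succ_succ, if_neg (show ¬Even (2 * a + 1) by simp),
    if_pos (show Even (2 * a + 1 + 1) by simp [Nat.even_add_one]), Nat.add_assoc, Nat.reduceAdd]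
  ring

lemma excursionSum_two_mul_self (q : R) (i : ℕ) : excursionSum q (2 * i) (2 * i) = q ^ i := by
  induction i with
  | zero => simp [excursionSum, pathSum]
  | succ i ih =>
    rw [excursionSum_add_two_succ, excursionSum_of_lt q (by omega),
      excursionSum_of_lt q (by omega), ih]
    ring

lemma det_excursionSum {k : ℕ} (q : R) {h : Fin k → ℕ} (hmono : StrictMono h)
    (hpar : ∀ i j, Even (h i + h j)) :
    (Matrix.of fun j i : Fin k => excursionSum q (2 * i) (h j)).det =
      if h = baseHeights k then q ^ (k * (k - 1) / 2) else 0 := by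
  have hle := baseHeights_le hmono hpar
  rw [Matrix.det_of_isUpperTriangular]
  · split_ifs with heq
    · simp only [heq, baseHeights, Matrix.of_apply, excursionSum_two_mul_self]
      rw [Fin.prod_univ_eq_prod_range (fun i => q ^ i), prod_pow_eq_pow_sum, sum_range_id]
    · obtain ⟨j, hj⟩ := Function.ne_iff.1 heq
      exact prod_eq_zero (mem_univ j) (excursionSum_of_lt q ((hle j).lt_of_ne' hj))
  · intro j i hij
    refine excursionSum_of_lt q (lt_of_lt_of_le ?_ (hle j))
    exact Nat.mul_lt_mul_of_pos_left hij two_pos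

lemma sum_familyWt_mul_pow (q : R) (n k : ℕ) :
    (∑ Y ∈ pathFamilies (2 * n) (baseHeights k) with Y (2 * n) = baseHeights k,
        familyWt (stepWt q) (2 * n) Y) * q ^ (k * (k - 1) / 2) =
      (Matrix.of fun i j : Fin k => excursionSum q (2 * (n + i + j)) 0).det := by
  have hmono := strictMono_baseHeights k
  have hhankel := det_hankel_eq_of_threeTerm (v := fun a m => excursionSum q (2 * a) (2 * m))
    (b := fun m => if m = 0 then 1 else 1 + q) (c := fun _ => q)
    (fun a => by simpa using excursionSum_add_two_zero q a)
    (fun a m => by simpa using excursionSum_add_two_succ q a m) n k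
  have htranspose : (Matrix.of fun i j : Fin k =>
      excursionSum q (2 * (n + i)) (2 * (j : ℕ))).transpose = Matrix.of fun j i : Fin k =>
        pathSum (stepWt q) (excursionSum q (2 * i)) (2 * n) (baseHeights k j) := by
    ext j i
    rw [Matrix.transpose_apply, Matrix.of_apply, Matrix.of_apply, excursionSum,
      ← pathSum_add (stepWt_two_mul_add q i), Nat.mul_add, Nat.add_comm, baseHeights]
  rw [mul_zero] at hhankel
  rw [hhankel, ← Matrix.det_transpose, htranspose, det_pathSum _ _ _ hmono
    even_baseHeights_add, sum_mul, sum_filter]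
  refine sum_congr rfl fun Y hY => ?_
  rw [det_excursionSum q (strictMono_of_mem_pathFamilies hmono hY le_rfl)
    (even_add_of_mem_pathFamilies even_baseHeights_add hY le_rfl)]
  split_ifs <;> simp

end Excursions

/-! ### Arrays and families of paths -/

/-- The heights of a path with `2 * (N + 1)` steps from height `0` to height `0`, extended by
zeros. -/
structure IsExcursion (N : ℕ) (h : ℕ → ℕ) : Prop where
  zero : h 0 = 0
  mem_nextHeights : ∀ t < 2 * (N + 1), h (t + 1) ∈ nextHeights (h t)
  eq_zero : ∀ t, 2 * (N + 1) ≤ t → h t = 0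

/-- The time at which the paths of an array pass the diagonal of the cell `c`. -/
def diagIndex (N : ℕ) (c : ℕ × ℕ) : ℕ := N + 1 + c.2 - c.1

/-- The cells on or above the antidiagonal `i + j = N` that lie under the path `h` drawn on it,
together with the cells beyond that antidiagonal. -/
def cellsUnder (N : ℕ) (h : ℕ → ℕ) : Set (ℕ × ℕ) := {c | N + 1 ≤ h (diagIndex N c) + (c.1 + c.2)}

lemma mem_cellsUnder {N : ℕ} {h : ℕ → ℕ} {c : ℕ × ℕ} :
    c ∈ cellsUnder N h ↔ N + 1 ≤ h (diagIndex N c) + (c.1 + c.2) :=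
  Iff.rfl

/-- The path that bounds an upper set of cells, with its height measured from the antidiagonal
`i + j = N + 1` and its time by `diagIndex`. -/
def boundaryHeight (N : ℕ) (S : Set (ℕ × ℕ)) (t : ℕ) : ℕ :=
  {c ∈ triCells (N + 1) | c ∈ S ∧ diagIndex N c = t}.sup fun c => N + 1 - (c.1 + c.2)

namespace IsExcursion

variable {N : ℕ} {f h : ℕ → ℕ}

lemma even_add (hh : IsExcursion N h) {t : ℕ} (ht : t ≤ 2 * (N + 1)) : Even (h t + t) := by
  induction t with
  | zero => simp [hh.zero]
  | succ t ih =>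
    have hstep := Paper.mem_nextHeights.1 (hh.mem_nextHeights t ht)
    have := ih (by omega)
    grind

lemma le_self (hh : IsExcursion N h) {t : ℕ} (ht : t ≤ 2 * (N + 1)) : h t ≤ t := by
  induction t with
  | zero => exact hh.zero.le
  | succ t ih =>
    have hstep := Paper.mem_nextHeights.1 (hh.mem_nextHeights t ht)
    have := ih (by omega)
    omega

lemma add_le (hh : IsExcursion N h) {t : ℕ} (ht : t ≤ 2 * (N + 1)) : h t + t ≤ 2 * (N + 1) := by
  induction ht using Nat.decreasingInduction with
  | self => rw [hh.eq_zero _ le_rfl, zero_add]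
  | of_succ t ht ih =>
    have hstep := Paper.mem_nextHeights.1 (hh.mem_nextHeights t ht)
    omega

lemma exists_cell (hh : IsExcursion N h) {t : ℕ} (hpos : 0 < h t) :
    ∃ c : ℕ × ℕ, diagIndex N c = t ∧ c.1 + c.2 + h t = N + 1 := by
  have ht : t ≤ 2 * (N + 1) := by
    by_contra hlt
    exact hpos.ne' (hh.eq_zero t (by omega))
  obtain ⟨a, ha⟩ := hh.even_add ht
  have hle := hh.le_self ht
  have hadd := hh.add_le ht
  exact ⟨(N + 1 - a, a - h t), by rw [diagIndex]; dsimp only; omega, by dsimp only; omega⟩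

lemma le_of_cellsUnder_subset (hf : IsExcursion N f) (hsub : cellsUnder N f ⊆ cellsUnder N h) :
    f ≤ h := by
  intro t
  rcases (f t).eq_zero_or_pos with hzero | hpos
  · exact hzero.trans_le (Nat.zero_le _)
  · obtain ⟨c, rfl, hc⟩ := hf.exists_cell hpos
    have hcf : c ∈ cellsUnder N f := mem_cellsUnder.2 (by omega)
    have hch := mem_cellsUnder.1 (hsub hcf)
    change f (diagIndex N c) ≤ h (diagIndex N c)
    omega

lemma mem_cellsUnder_of_le (hh : IsExcursion N h) {c : ℕ × ℕ} (hc : N ≤ c.1 + c.2) :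
    c ∈ cellsUnder N h := by
  rw [mem_cellsUnder]
  rcases hc.eq_or_lt with heq | hlt
  · have hodd : ¬Even (diagIndex N c) := by
      rw [diagIndex, Nat.not_even_iff]
      omega
    have heven := hh.even_add (t := diagIndex N c) (by rw [diagIndex]; omega)
    rw [Nat.even_add, iff_false_right hodd] at heven
    have hpos : 0 < h (diagIndex N c) :=
      Nat.pos_of_ne_zero fun hzero => heven (by simp [hzero])
    omega
  · omega

lemma isUpperSet_cellsUnder (hh : IsExcursion N h) : IsUpperSet (cellsUnder N h) := by
  have hdown : ∀ i j, (i, j) ∈ cellsUnder N h → (i + 1, j) ∈ cellsUnder N h := by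
    intro i j hij
    rcases Nat.lt_or_ge N (i + 1 + j) with hlt | hle
    · exact hh.mem_cellsUnder_of_le hlt.le
    · have hstep := Paper.mem_nextHeights.1
        (hh.mem_nextHeights (diagIndex N (i + 1, j)) (by rw [diagIndex]; dsimp only; omega))
      have hdiag : diagIndex N (i, j) = diagIndex N (i + 1, j) + 1 := by
        simp only [diagIndex]
        omega
      rw [mem_cellsUnder] at hij ⊢
      rw [hdiag] at hij
      dsimp only at hij ⊢
      omega
  have hright : ∀ i j, (i, j) ∈ cellsUnder N h → (i, j + 1) ∈ cellsUnder N h := by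
    intro i j hij
    rcases Nat.lt_or_ge N (i + (j + 1)) with hlt | hle
    · exact hh.mem_cellsUnder_of_le hlt.le
    · have hstep := Paper.mem_nextHeights.1
        (hh.mem_nextHeights (diagIndex N (i, j)) (by rw [diagIndex]; dsimp only; omega))
      have hdiag : diagIndex N (i, j + 1) = diagIndex N (i, j) + 1 := by
        simp only [diagIndex]
        omega
      rw [mem_cellsUnder] at hij ⊢
      rw [hdiag]
      dsimp only at hij ⊢
      omega
  have hmono : Monotone fun c => c ∈ cellsUnder N h := monotone_prod_iff.2
    ⟨fun i => monotone_nat_of_le_succ (hright i), fun j => monotone_nat_of_le_succ (hdown · j)⟩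
  exact fun c d hcd hc => hmono hcd hc

end IsExcursion

lemma boundaryHeight_mono (N : ℕ) : Monotone (boundaryHeight N) := fun _ _ hST _ =>
  sup_mono (monotone_filter_right _ fun _ _ hc => ⟨hST hc.1, hc.2⟩)

lemma exists_mem_of_boundaryHeight_pos {N : ℕ} {S : Set (ℕ × ℕ)} {t : ℕ}
    (hpos : 0 < boundaryHeight N S t) :
    ∃ c ∈ S, diagIndex N c = t ∧ c.1 + c.2 + boundaryHeight N S t = N + 1 := by
  obtain ⟨c, hc, hle⟩ := (Finset.le_sup_iff hpos).1 (le_refl (boundaryHeight N S t))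
  obtain ⟨htri, hcS, hct⟩ := mem_filter.1 hc
  rw [mem_triCells] at htri
  have hge : N + 1 - (c.1 + c.2) ≤ boundaryHeight N S t :=
    le_sup (f := fun c : ℕ × ℕ => N + 1 - (c.1 + c.2)) hc
  exact ⟨c, hcS, hct, by omega⟩

section UpperSets

variable {N : ℕ} {S : Set (ℕ × ℕ)}

lemma le_boundaryHeight_add {c : ℕ × ℕ} (hc : c ∈ S) :
    N + 1 ≤ boundaryHeight N S (diagIndex N c) + (c.1 + c.2) := by
  rcases Nat.lt_or_ge N (c.1 + c.2) with hlt | hle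
  · omega
  · refine tsub_le_iff_right.1 (le_sup (f := fun c : ℕ × ℕ => N + 1 - (c.1 + c.2)) ?_)
    exact mem_filter.2 ⟨mem_triCells.2 (Nat.lt_succ_of_le hle), hc, rfl⟩

lemma cellsUnder_boundaryHeight (hS : IsUpperSet S) (hN : ∀ c : ℕ × ℕ, N ≤ c.1 + c.2 → c ∈ S) :
    cellsUnder N (boundaryHeight N S) = S := by
  ext c
  refine ⟨fun hc => ?_, le_boundaryHeight_add⟩
  rw [mem_cellsUnder] at hc
  rcases Nat.lt_or_ge (c.1 + c.2) N with hlt | hle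
  · obtain ⟨d, hd, hdiag, hsum⟩ := exists_mem_of_boundaryHeight_pos
      (show 0 < boundaryHeight N S (diagIndex N c) by omega)
    rw [diagIndex, diagIndex] at hdiag
    exact hS (show d ≤ c from ⟨by omega, by omega⟩) hd
  · exact hN c hle

lemma even_boundaryHeight_add (hN : ∀ c : ℕ × ℕ, N ≤ c.1 + c.2 → c ∈ S) {t : ℕ}
    (ht : t ≤ 2 * (N + 1)) : Even (boundaryHeight N S t + t) := by
  rcases (boundaryHeight N S t).eq_zero_or_pos with hzero | hpos
  · rw [hzero, zero_add]
    by_contra hodd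
    obtain ⟨j, rfl⟩ := Nat.not_even_iff_odd.1 hodd
    have hle := le_boundaryHeight_add (N := N) (hN (N - j, j) (by dsimp only; omega))
    rw [show diagIndex N (N - j, j) = 2 * j + 1 by rw [diagIndex]; dsimp only; omega, hzero] at hle
    dsimp only at hle
    omega
  · obtain ⟨c, -, hc, hsum⟩ := exists_mem_of_boundaryHeight_pos hpos
    rw [diagIndex] at hc
    rw [Nat.even_iff]
    omega

lemma isExcursion_boundaryHeight (hS : IsUpperSet S)
    (hN : ∀ c : ℕ × ℕ, N ≤ c.1 + c.2 → c ∈ S) : IsExcursion N (boundaryHeight N S) := by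
  have hzero : ∀ t, t = 0 ∨ 2 * (N + 1) ≤ t → boundaryHeight N S t = 0 := by
    intro t ht
    by_contra hne
    obtain ⟨c, -, hc, hsum⟩ := exists_mem_of_boundaryHeight_pos (Nat.pos_of_ne_zero hne)
    rw [diagIndex] at hc
    omega
  refine ⟨hzero 0 (Or.inl rfl), fun t ht => ?_, fun t ht => hzero t (Or.inr ht)⟩
  have hup : boundaryHeight N S (t + 1) ≤ boundaryHeight N S t + 1 := by
    by_contra! hlt
    obtain ⟨c, hcS, hc, hsum⟩ := exists_mem_of_boundaryHeight_pos (Nat.zero_lt_of_lt hlt)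
    have hle := le_boundaryHeight_add (N := N)
      (hS (show c ≤ (c.1 + 1, c.2) from ⟨Nat.le_succ _, le_rfl⟩) hcS)
    rw [show diagIndex N (c.1 + 1, c.2) = t by rw [diagIndex] at hc ⊢; dsimp only; omega] at hle
    dsimp only at hle
    omega
  have hdown : boundaryHeight N S t ≤ boundaryHeight N S (t + 1) + 1 := by
    by_contra! hlt
    obtain ⟨c, hcS, hc, hsum⟩ := exists_mem_of_boundaryHeight_pos (Nat.zero_lt_of_lt hlt)
    have hle := le_boundaryHeight_add (N := N)
      (hS (show c ≤ (c.1, c.2 + 1) from ⟨le_rfl, Nat.le_succ _⟩) hcS)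
    rw [show diagIndex N (c.1, c.2 + 1) = t + 1 by
      rw [diagIndex] at hc ⊢; dsimp only; omega] at hle
    dsimp only at hle
    omega
  obtain ⟨a, ha⟩ := even_boundaryHeight_add hN (show t + 1 ≤ 2 * (N + 1) from ht)
  obtain ⟨b, hb⟩ := even_boundaryHeight_add hN ht.le
  exact Paper.mem_nextHeights.2 (by omega)

end UpperSets

lemma IsExcursion.boundaryHeight_cellsUnder {N : ℕ} {h : ℕ → ℕ} (hh : IsExcursion N h) :
    boundaryHeight N (cellsUnder N h) = h := by
  have hcells := cellsUnder_boundaryHeight hh.isUpperSet_cellsUnder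
    fun _ => hh.mem_cellsUnder_of_le
  refine le_antisymm ?_ (hh.le_of_cellsUnder_subset hcells.ge)
  exact (isExcursion_boundaryHeight hh.isUpperSet_cellsUnder
    fun _ => hh.mem_cellsUnder_of_le).le_of_cellsUnder_subset hcells.le

lemma le_card_filter_add_iff {k : ℕ} {p : Fin k → Prop} [DecidablePred p] (hp : Monotone p)
    (l : Fin k) :
    k ≤ #{j | p j} + l ↔ p l := by
  have hl := l.2
  constructor
  · intro hle
    by_contra hpl
    have hsub : ({j | p j} : Finset (Fin k)) ⊆ Ioi l := fun j hj => mem_Ioi.2 <|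
      lt_of_not_ge fun hjl => hpl (hp hjl (mem_filter.1 hj).2)
    have hcard := card_le_card hsub
    rw [Fin.card_Ioi] at hcard
    omega
  · intro hpl
    have hsub : Ici l ⊆ ({j | p j} : Finset (Fin k)) := fun j hj =>
      mem_filter.2 ⟨mem_univ j, hp (mem_Ici.1 hj) hpl⟩
    have hcard := card_le_card hsub
    rw [Fin.card_Ici] at hcard
    omega

lemma le_of_forall_le_add {k a b : ℕ} (ha : a ≤ k) (h : ∀ l : Fin k, k ≤ a + l → k ≤ b + l) :
    a ≤ b := by
  by_contra! hba
  have hkb : k ≤ b + (k - a) := h ⟨k - a, by omega⟩ (by dsimp only; omega)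
  omega

lemma card_filter_le_add {k a : ℕ} (ha : a ≤ k) : #{l : Fin k | k ≤ a + l} = a := by
  have hmono : Monotone fun l : Fin k => k ≤ a + l := fun i j hij hi =>
    le_trans hi (Nat.add_le_add_left hij a)
  refine le_antisymm (le_of_forall_le_add ?_ fun l => (le_card_filter_add_iff hmono l).1)
    (le_of_forall_le_add ha fun l => (le_card_filter_add_iff hmono l).2)
  simpa using card_filter_le (univ : Finset (Fin k)) fun l => k ≤ a + l

lemma exists_isExcursion_of_mem_pathFamilies {N k : ℕ} {Y : ℕ → Fin k → ℕ}
    (hY : Y ∈ pathFamilies (2 * (N + 1)) (baseHeights k))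
    (hlast : Y (2 * (N + 1)) = baseHeights k) :
    ∃ H : Fin k → ℕ → ℕ, Monotone H ∧ (∀ l, IsExcursion N (H l)) ∧
      Y = fun t l => H l t + baseHeights k l := by
  obtain ⟨hfirst, hstep, hstay⟩ := mem_pathFamilies.1 hY
  have hfamily : ∀ t, StrictMono (Y t) ∧ ∀ i j, Even (Y t i + Y t j) := fun t => by
    obtain ⟨s, hs, hts⟩ : ∃ s ≤ 2 * (N + 1), Y t = Y s :=
      (le_total t (2 * (N + 1))).elim (⟨t, ·, rfl⟩) (⟨_, le_rfl, hstay t ·⟩)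
    rw [hts]
    exact ⟨strictMono_of_mem_pathFamilies (strictMono_baseHeights k) hY hs,
      even_add_of_mem_pathFamilies even_baseHeights_add hY hs⟩
  have hle := fun t => baseHeights_le (hfamily t).1 (hfamily t).2
  refine ⟨fun l t => Y t l - baseHeights k l, fun i j hij t => ?_,
    fun l => ⟨?_, fun t ht => ?_, fun t ht => ?_⟩,
    funext₂ fun t l => (Nat.sub_add_cancel (hle t l)).symm⟩
  · have := add_baseHeights_le (hfamily t).1 (hfamily t).2 hij
    dsimp only
    omega
  · dsimp only
    rw [hfirst, Nat.sub_self]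
  · have := mem_nextHeights.1 ((hstep t ht).1 l)
    have : baseHeights k l ≤ Y t l := hle t l
    have : baseHeights k l ≤ Y (t + 1) l := hle (t + 1) l
    exact mem_nextHeights.2 (by dsimp only; omega)
  · dsimp only
    rw [hstay t ht, hlast, Nat.sub_self]

lemma add_baseHeights_mem_pathFamilies {N k : ℕ} {H : Fin k → ℕ → ℕ} (hmono : Monotone H)
    (hH : ∀ l, IsExcursion N (H l)) :
    (fun t l => H l t + baseHeights k l) ∈
      {Y ∈ pathFamilies (2 * (N + 1)) (baseHeights k) | Y (2 * (N + 1)) = baseHeights k} := by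
  have hbase : ∀ t, (∀ l, H l t = 0) → (fun l => H l t + baseHeights k l) = baseHeights k :=
    fun t ht => funext fun l => by rw [ht, zero_add]
  have hlast := hbase _ fun l => (hH l).eq_zero _ le_rfl
  refine mem_filter.2 ⟨mem_pathFamilies.2 ⟨hbase _ fun l => (hH l).zero,
    fun t ht => ⟨fun l => ?_, fun i j hij => ?_⟩, fun t ht => ?_⟩, hlast⟩
  · have := mem_nextHeights.1 ((hH l).mem_nextHeights t ht)
    exact mem_nextHeights.2 (by omega)
  · exact add_lt_add_of_le_of_lt (hmono hij.le _) (strictMono_baseHeights k hij)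
  · exact (hbase _ fun l => (hH l).eq_zero _ ht).trans hlast.symm

namespace IsExcursion

variable {N : ℕ} {h : ℕ → ℕ}

lemma card_cellsUnder_diagIndex (hh : IsExcursion N h) {t : ℕ} (ht : t ≤ 2 * (N + 1)) :
    #{c ∈ triCells N | c ∈ cellsUnder N h ∧ diagIndex N c = t} = h t / 2 := by
  obtain ⟨a, ha⟩ := hh.even_add ht
  have hle := hh.le_self ht
  have hadd := hh.add_le ht
  have himage : {c ∈ triCells N | c ∈ cellsUnder N h ∧ diagIndex N c = t} =
      (range (h t / 2)).image fun s => (N + 1 - a + s, a - h t + s) := by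
    ext ⟨i, j⟩
    simp only [mem_filter, mem_triCells, mem_cellsUnder, mem_image, mem_range, Prod.mk.injEq]
    constructor
    · rintro ⟨htri, hunder, hdiag⟩
      rw [hdiag] at hunder
      rw [diagIndex] at hdiag
      dsimp only at hdiag
      exact ⟨j - (a - h t), by omega⟩
    · rintro ⟨s, hs, rfl, rfl⟩
      have hdiag : diagIndex N (N + 1 - a + s, a - h t + s) = t := by
        rw [diagIndex]
        dsimp only
        omega
      rw [hdiag]
      omega
  rw [himage, card_image_of_injective _ fun s s' hss => ?_, card_range]
  have := (Prod.mk.injEq ..).mp hss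
  omega

lemma sum_cellsUnder (hh : IsExcursion N h) :
    ∑ c ∈ triCells N with c ∈ cellsUnder N h, (-1 : ℤ) ^ (N + 1 + c.1 + c.2) =
      ∑ t ∈ range (2 * (N + 1)), (-1) ^ t * ((h t / 2 : ℕ) : ℤ) := by
  rw [← sum_fiberwise_of_maps_to (t := range (2 * (N + 1))) (g := diagIndex N)]
  · refine sum_congr rfl fun t ht => ?_
    rw [← hh.card_cellsUnder_diagIndex (mem_range.1 ht).le, filter_filter, mul_comm,
      ← nsmul_eq_mul]
    refine sum_eq_card_nsmul fun c hc => ?_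
    obtain ⟨htri, -, hct⟩ := mem_filter.1 hc
    rw [mem_triCells] at htri
    rw [← hct, diagIndex]
    refine neg_one_pow_congr ?_
    grind
  · intro c hc
    have := mem_triCells.1 (mem_filter.1 hc).1
    rw [mem_range, diagIndex]
    omega

lemma prod_stepWt {K : Type*} [Field K] {q : K} (hq : q ≠ 0) (hh : IsExcursion N h) {m : ℕ}
    (hm : m ≤ N + 1) :
    ∏ t ∈ range (2 * m), stepWt q (2 * (N + 1) - t) (h t) (h (t + 1)) =
      q ^ ∑ t ∈ range (2 * m), (-1) ^ t * ((h t / 2 : ℕ) : ℤ) := by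
  induction m with
  | zero => simp
  | succ m ih =>
    have hstep := Paper.mem_nextHeights.1 (hh.mem_nextHeights (2 * m) (by omega))
    obtain ⟨a, ha⟩ := hh.even_add (t := 2 * m) (by omega)
    have heven : Even (2 * (N + 1) - 2 * m) := ⟨N + 1 - m, by omega⟩
    have hodd : ¬Even (2 * (N + 1) - (2 * m + 1)) := by
      rw [Nat.not_even_iff_odd]
      exact ⟨N - m, by omega⟩
    have hnext : stepWt q (2 * (N + 1) - (2 * m + 1)) (h (2 * m + 1)) (h (2 * m + 1 + 1)) = 1 :=
      if_neg fun hdown => hodd hdown.2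
    rw [Nat.mul_succ, prod_range_succ, prod_range_succ, ih (by omega), hnext, mul_one,
      sum_range_succ, sum_range_succ, pow_succ, Even.neg_one_pow (even_two_mul m), one_mul, one_mul,
      add_assoc (∑ _ ∈ _, _), zpow_add₀ hq]
    congr 1
    rcases hstep with hdown | hup
    · rw [stepWt, if_pos ⟨by omega, heven⟩, show h (2 * m) / 2 = h (2 * m + 1) / 2 + 1 by omega]
      simp
    · rw [stepWt, if_neg (by omega), show h (2 * m) / 2 = h (2 * m + 1) / 2 by omega]
      simp

end IsExcursion

lemma prod_zpow_eq_zpow_sum {ι K : Type*} [Field K] {q : K} (hq : q ≠ 0) (s : Finset ι)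
    (e : ι → ℤ) : ∏ i ∈ s, q ^ e i = q ^ ∑ i ∈ s, e i := by
  induction s using Finset.cons_induction with
  | empty => simp
  | cons i s hi ih => rw [prod_cons, sum_cons, zpow_add₀ hq, ih]

/-- The level sets of an array with entries at most `k`, in increasing order. -/
def levelSet (k : ℕ) (π : ℕ × ℕ → ℕ) (l : Fin k) : Set (ℕ × ℕ) := {c | k ≤ π c + l}

lemma mem_levelSet {k : ℕ} {π : ℕ × ℕ → ℕ} {l : Fin k} {c : ℕ × ℕ} :
    c ∈ levelSet k π l ↔ k ≤ π c + l :=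
  Iff.rfl

lemma monotone_levelSet (k : ℕ) (π : ℕ × ℕ → ℕ) : Monotone (levelSet k π) :=
  fun _ _ hij _ hc => le_trans hc (Nat.add_le_add_left hij _)

/-- The nonintersecting paths that bound the level sets of an array. -/
def boundaryPaths (N k : ℕ) (π : ℕ × ℕ → ℕ) (t : ℕ) (l : Fin k) : ℕ :=
  boundaryHeight N (levelSet k π l) t + baseHeights k l

namespace IsStair

variable {N k : ℕ} {π : ℕ × ℕ → ℕ}

lemma isUpperSet_levelSet (h : IsStair N (fun _ => k) π) (l : Fin k) :
    IsUpperSet (levelSet k π l) :=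
  fun _ _ hcd hc => le_trans hc (Nat.add_le_add_right (h.monotone hcd) _)

lemma mem_levelSet_of_le (h : IsStair N (fun _ => k) π) (l : Fin k) {c : ℕ × ℕ}
    (hc : N ≤ c.1 + c.2) : c ∈ levelSet k π l := by
  rw [mem_levelSet, h.eq_boundary c hc]
  exact Nat.le_add_right _ _

lemma cellsUnder_boundaryHeight (h : IsStair N (fun _ => k) π) (l : Fin k) :
    cellsUnder N (boundaryHeight N (levelSet k π l)) = levelSet k π l :=
  Paper.cellsUnder_boundaryHeight (h.isUpperSet_levelSet l) fun _ => h.mem_levelSet_of_le l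

lemma isExcursion_boundaryHeight (h : IsStair N (fun _ => k) π) (l : Fin k) :
    IsExcursion N (boundaryHeight N (levelSet k π l)) :=
  Paper.isExcursion_boundaryHeight (h.isUpperSet_levelSet l) fun _ => h.mem_levelSet_of_le l

lemma altWeight_eq_sum (h : IsStair N (fun _ => k) π) :
    altWeight N π =
      ∑ l, ∑ c ∈ triCells N with c ∈ levelSet k π l, (-1 : ℤ) ^ (N + 1 + c.1 + c.2) := by
  simp only [sum_filter]
  rw [sum_comm, altWeight]
  refine sum_congr rfl fun c _ => ?_
  simp only [mem_levelSet]
  rw [← sum_filter, sum_const, card_filter_le_add (h.le_const c), nsmul_eq_mul, mul_comm]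

lemma familyWt_boundaryPaths {K : Type*} [Field K] {q : K} (hq : q ≠ 0)
    (h : IsStair N (fun _ => k) π) :
    familyWt (stepWt q) (2 * (N + 1)) (boundaryPaths N k π) = q ^ altWeight N π := by
  have hshift : ∀ r x y b, stepWt q r (x + b) (y + b) = stepWt q r x y := fun r x y b => by
    simp only [stepWt, add_lt_add_iff_right]
  rw [familyWt, prod_comm, h.altWeight_eq_sum, ← prod_zpow_eq_zpow_sum hq]
  refine prod_congr rfl fun l _ => ?_
  have hexc := h.isExcursion_boundaryHeight l
  simp only [boundaryPaths, hshift]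
  rw [hexc.prod_stepWt hq le_rfl, ← hexc.sum_cellsUnder, h.cellsUnder_boundaryHeight]

end IsStair

lemma injOn_boundaryPaths (N k : ℕ) :
    Set.InjOn (boundaryPaths N k) {π | IsStair N (fun _ => k) π} := by
  intro π hπ ρ hρ heq
  have hlevel : ∀ l, levelSet k π l = levelSet k ρ l := fun l => by
    rw [← hπ.cellsUnder_boundaryHeight, ← hρ.cellsUnder_boundaryHeight]
    exact congrArg (cellsUnder N) (funext fun t =>
      Nat.add_right_cancel (congrFun (congrFun heq t) l))
  funext c
  exact le_antisymm
    (le_of_forall_le_add (hπ.le_const c) fun l hl => (hlevel l).le (mem_levelSet.2 hl))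
    (le_of_forall_le_add (hρ.le_const c) fun l hl => (hlevel l).ge (mem_levelSet.2 hl))

lemma exists_boundaryPaths_eq {N k : ℕ} {H : Fin k → ℕ → ℕ} (hmono : Monotone H)
    (hH : ∀ l, IsExcursion N (H l)) :
    ∃ π, IsStair N (fun _ => k) π ∧
      boundaryPaths N k π = fun t l => H l t + baseHeights k l := by
  let π : ℕ × ℕ → ℕ := fun c => #{l | c ∈ cellsUnder N (H l)}
  have hlevel : ∀ l, levelSet k π l = cellsUnder N (H l) := fun l => by
    ext c
    exact le_card_filter_add_iff (p := fun l => c ∈ cellsUnder N (H l)) (fun i j hij hc =>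
      le_trans hc (Nat.add_le_add_right (hmono hij _) _)) l
  refine ⟨π, isStair_const_iff.2 ⟨fun c d hcd => ?_, fun c hc => ?_⟩, ?_⟩
  · exact card_le_card (monotone_filter_right _ fun l _ hl => (hH l).isUpperSet_cellsUnder hcd hl)
  · change #{l | c ∈ cellsUnder N (H l)} = k
    rw [filter_true_of_mem fun l _ => (hH l).mem_cellsUnder_of_le hc, card_univ, Fintype.card_fin]
  · funext t l
    rw [boundaryPaths, hlevel, (hH l).boundaryHeight_cellsUnder]

lemma sum_stair_zpow_altWeight_eq_sum_familyWt {K : Type*} [Field K] {q : K} (hq : q ≠ 0)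
    (N k : ℕ) :
    ∑ π ∈ stair N (fun _ => k), q ^ altWeight N π =
      ∑ Y ∈ pathFamilies (2 * (N + 1)) (baseHeights k) with Y (2 * (N + 1)) = baseHeights k,
        familyWt (stepWt q) (2 * (N + 1)) Y := by
  refine sum_nbij (boundaryPaths N k) (fun π hπ => ?_) (fun π hπ ρ hρ => ?_) (fun Y hY => ?_)
    fun π hπ => ((mem_stair.1 hπ).familyWt_boundaryPaths hq).symm
  · have hstair := mem_stair.1 hπ
    exact add_baseHeights_mem_pathFamilies
      (fun _ _ hij => boundaryHeight_mono N (monotone_levelSet k π hij))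
      hstair.isExcursion_boundaryHeight
  · exact injOn_boundaryPaths N k (mem_stair.1 hπ) (mem_stair.1 hρ)
  · obtain ⟨hmem, hlast⟩ := mem_filter.1 hY
    obtain ⟨H, hmono, hH, rfl⟩ := exists_isExcursion_of_mem_pathFamilies hmem hlast
    obtain ⟨π, hπ, heq⟩ := exists_boundaryPaths_eq hmono hH
    exact ⟨π, mem_stair.2 hπ, heq⟩

/-! ### The determinant formula -/

lemma det_pow_mul {R : Type*} [CommRing R] {k : ℕ} (q : R) (m d : ℕ)
    (A : Matrix (Fin k) (Fin k) R) :
    (Matrix.of fun i j : Fin k => q ^ (m + d * (i + j)) * A i j).det =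
      q ^ (k * m + d * (k * (k - 1))) * A.det := by
  have hprod : (∏ i : Fin k, q ^ (m + d * i)) * ∏ j : Fin k, q ^ (d * (j : ℕ)) =
      q ^ (k * m + d * (k * (k - 1))) := by
    rw [prod_pow_eq_pow_sum, prod_pow_eq_pow_sum, ← pow_add, sum_add_distrib, add_assoc,
      ← mul_sum, ← mul_add, ← mul_two, Fin.sum_univ_eq_sum_range fun i => i, sum_range_id_mul_two]
    simp
  rw [← hprod, mul_assoc, ← Matrix.det_mul_row, ← Matrix.det_mul_column]
  congr 1
  ext i j
  simp only [Matrix.of_apply]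
  ring

lemma pleasantCount_eq_det_excursionSum {n : ℕ} (hn : 0 < n) (k : ℕ) :
    (pleasantCount (deltaCells (n + 2 * k)) (deltaCells n) : ℚ) =
      2 ^ (k * (k - 1) / 2) * (2 ^ (k * (2 * n + 1) + 2 * (k * (k - 1))) *
        (Matrix.of fun i j : Fin k => excursionSum (1 / 2 : ℚ) (2 * (n + i + j)) 0).det) := by
  obtain ⟨N, rfl⟩ := Nat.exists_eq_succ_of_ne_zero hn.ne'
  have hq : (1 / 2 : ℚ) ≠ 0 := by norm_num
  have hexp : k * (2 * N + 2 * k + 1) = k * (2 * (N + 1) + 1) + 2 * (k * (k - 1)) := by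
    cases k with
    | zero => simp
    | succ k =>
      rw [Nat.add_sub_cancel]
      ring
  rw [Nat.succ_eq_add_one, pleasantCount_eq_sum_stair, sum_stair_pow_jumpSum hq,
    sum_stair_zpow_altWeight_eq_sum_familyWt hq, ← sum_familyWt_mul_pow, hexp, one_div, inv_pow]
  field_simp

lemma pleasantCount_add_two {n : ℕ} (hn : 0 < n) :
    (pleasantCount (deltaCells (n + 2)) (deltaCells n) : ℚ) =
      2 ^ (2 * n + 1) * excursionSum (1 / 2 : ℚ) (2 * n) 0 := by
  simpa using pleasantCount_eq_det_excursionSum hn 1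

theorem statement_15 (n k : ℕ) (hn : 0 < n) (hk : 0 < k) :
    (pleasantCount (deltaCells (n + 2 * k)) (deltaCells n) : ℤ) =
      2 ^ (k * (k - 1) / 2) *
        (Matrix.of fun i j : Fin k =>
          (pleasantCount (deltaCells (n + (i : ℕ) + (j : ℕ) + 2))
            (deltaCells (n + (i : ℕ) + (j : ℕ))) : ℤ)).det := by
  have hdet : ((Matrix.of fun i j : Fin k =>
      (pleasantCount (deltaCells (n + (i : ℕ) + (j : ℕ) + 2))
        (deltaCells (n + (i : ℕ) + (j : ℕ))) : ℤ)).det : ℚ) =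
      2 ^ (k * (2 * n + 1) + 2 * (k * (k - 1))) *
        (Matrix.of fun i j : Fin k => excursionSum (1 / 2 : ℚ) (2 * (n + i + j)) 0).det := by
    rw [← det_pow_mul]
    refine ((Int.castRingHom ℚ).map_det _).trans (congrArg Matrix.det ?_)
    ext i j
    simp only [RingHom.mapMatrix_apply, Matrix.map_apply, Matrix.of_apply, eq_intCast,
      Int.cast_natCast, pleasantCount_add_two (show 0 < n + (i : ℕ) + j by omega)]
    ring
  rw [← Int.cast_inj (α := ℚ), Int.cast_mul, hdet, Int.cast_natCast,
    pleasantCount_eq_det_excursionSum hn]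
  push_cast
  rfl

end Paper
end
end
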